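/- Let X ⊆ P^r_K be a variety of almost minimal degree, let c = codim X and q = codepth A_X. Then the dimension of the degree-2 homogeneous component of the defining ideal is dim_K (I_X)_2 = binom(c+1, 2) − q − 1. -/

import Mathlib

noncomputable section

open MvPolynomial

/-- The polynomial ring `S = K[x_0, …, x_r]`, the homogeneous coordinate ring of `ℙ^r_K`. -/
abbrev PS (K : Type) [Field K] (r : ℕ) : Type := MvPolynomial (Fin (r + 1)) K

namespace AMD

variable (K : Type) [Field K] (r : ℕ)

/-- `I` is a homogeneous ideal of `S = K[x_0, …, x_r]`. -/
def IsHomIdeal (I : Ideal (PS K r)) : Prop :=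
  ∀ p ∈ I, ∀ n : ℕ, homogeneousComponent n p ∈ I

/-- `X = V_+(I)` is non-degenerate: `I` contains no nonzero linear form. -/
def Nondeg (I : Ideal (PS K r)) : Prop :=
  ∀ p ∈ I, p.IsHomogeneous 1 → p = 0

/-- The irrelevant maximal ideal of the homogeneous coordinate ring `A_X = S/I`. -/
def maxIdl (I : Ideal (PS K r)) : Ideal (PS K r ⧸ I) :=
  (Ideal.span (Set.range (X : Fin (r + 1) → PS K r))).map (Ideal.Quotient.mk I)

/-- `dim X = d`, i.e. the Krull dimension of `A_X = S/I` equals `d + 1`. -/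
def DimEq (I : Ideal (PS K r)) (d : ℕ) : Prop :=
  ringKrullDim (PS K r ⧸ I) = (((d : ℕ∞) + 1 : ℕ∞) : WithBot ℕ∞)

/-- The degree-`n` homogeneous component of `A_X = S/I`, as a `K`-subspace. -/
def quotComponent (I : Ideal (PS K r)) (n : ℕ) : Submodule K (PS K r ⧸ I) :=
  (homogeneousSubmodule (Fin (r + 1)) K n).map (Ideal.Quotient.mkₐ K I).toLinearMap

/-- The Hilbert series of the graded algebra `A_X = S/I`. -/
def hilbSeries (I : Ideal (PS K r)) : PowerSeries ℤ :=
  PowerSeries.mk fun n => (Module.finrank K (quotComponent K r I n) : ℤ)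

/-- `deg X = e`, where `d = dim X`:  the numerator polynomial of the Hilbert series of
`A_X` with respect to the denominator `(1 - λ)^(d+1)` takes the value `e` at `λ = 1`. -/
def DegreeEq (I : Ideal (PS K r)) (d e : ℕ) : Prop :=
  ∃ h : Polynomial ℤ,
    hilbSeries K r I * (1 - PowerSeries.X) ^ (d + 1) = PowerSeries.mk (fun n => h.coeff n) ∧
    h.eval 1 = (e : ℤ)

/-- A graded automorphism of `S`, i.e. a linear change of coordinates of `ℙ^r_K`. -/
def IsGrAut (φ : PS K r ≃ₐ[K] PS K r) : Prop :=
  ∀ i, (φ (X i)).IsHomogeneous 1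

/-- `X = V_+(I) ⊆ ℙ^r_K` is a cone (over a variety lying in some hyperplane): after a
linear change of coordinates, `I` is generated by polynomials not involving the last
variable. -/
def IsConeIdeal (I : Ideal (PS K r)) : Prop :=
  ∃ φ : PS K r ≃ₐ[K] PS K r, IsGrAut K r φ ∧
    ∃ J : Ideal (MvPolynomial (Fin r) K),
      Ideal.map φ I = Ideal.map (rename (Fin.castSucc : Fin r → Fin (r + 1))) J

/-- A (weakly) regular sequence on the ring `A`. -/
def IsRegSeq {A : Type} [CommRing A] (rs : List A) : Prop :=
  ∀ (i : Fin rs.length) (y : A),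
    rs.get i * y ∈ Ideal.span {x | x ∈ rs.take i.1} → y ∈ Ideal.span {x | x ∈ rs.take i.1}

/-- `depth A_X = t`: the maximal length of a regular sequence on `A_X = S/I` consisting
of elements of the irrelevant maximal ideal is `t`. -/
def DepthEq (I : Ideal (PS K r)) (t : ℕ) : Prop :=
  (∃ rs : List (PS K r ⧸ I), rs.length = t ∧ (∀ x ∈ rs, x ∈ maxIdl K r I) ∧ IsRegSeq rs) ∧
  ∀ rs : List (PS K r ⧸ I), (∀ x ∈ rs, x ∈ maxIdl K r I) → IsRegSeq rs → rs.length ≤ t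

/-- `X` is arithmetically Cohen-Macaulay: `depth A_X = dim A_X`. -/
def IsACM (I : Ideal (PS K r)) : Prop :=
  ∃ t : ℕ, ringKrullDim (PS K r ⧸ I) = ((t : ℕ∞) : WithBot ℕ∞) ∧ DepthEq K r I t

/-- The socle `{y | m·y = 0}` of `B`, as a `K`-subspace of `B`. -/
def socle (B : Type) [CommRing B] [Algebra K B] (m : Ideal B) : Submodule K B where
  carrier := {y | ∀ z ∈ m, z * y = 0}
  add_mem' := by
    intro a b ha hb z hz
    rw [mul_add, ha z hz, hb z hz, add_zero]
  zero_mem' := by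
    intro z hz
    rw [mul_zero]
  smul_mem' := by
    intro c y hy z hz
    rw [mul_smul_comm, hy z hz, smul_zero]

/-- `X` is arithmetically Gorenstein: `A_X = S/I` is Cohen-Macaulay and its Artinian
reduction by a maximal regular sequence has a one-dimensional socle. -/
def IsArithGorenstein (I : Ideal (PS K r)) : Prop :=
  ∃ (t : ℕ) (rs : List (PS K r ⧸ I)),
    ringKrullDim (PS K r ⧸ I) = ((t : ℕ∞) : WithBot ℕ∞) ∧ rs.length = t ∧
    (∀ x ∈ rs, x ∈ maxIdl K r I) ∧ IsRegSeq rs ∧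
    Module.finrank K
      (socle K ((PS K r ⧸ I) ⧸ Ideal.span {x | x ∈ rs})
        (Ideal.map (Ideal.Quotient.mk (Ideal.span {x | x ∈ rs})) (maxIdl K r I))) = 1

/-- The graded free `S`-module with `β j` generators in "row `j`" for each `j : ℕ`. -/
abbrev FreeGr (β : ℕ → ℕ) : Type := ((j : ℕ) × Fin (β j)) →₀ PS K r

/-- `φ` is a minimal graded homomorphism of graded free modules, where the generator
`(j, t)` of the source has degree `m₁ + j` and the generator `(j', t')` of the target
has degree `m₂ + j'`: every matrix entry of `φ` is either zero or homogeneous of the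
appropriate positive degree. -/
def IsMinGrMap (b₁ b₂ : ℕ → ℕ) (m₁ m₂ : ℕ)
    (φ : FreeGr K r b₁ →ₗ[PS K r] FreeGr K r b₂) : Prop :=
  ∀ (j : ℕ) (t : Fin (b₁ j)) (j' : ℕ) (t' : Fin (b₂ j')),
    (φ (Finsupp.single ⟨j, t⟩ 1)) ⟨j', t'⟩ = 0 ∨
      ∃ dd : ℕ, 1 ≤ dd ∧ dd + (m₂ + j') = m₁ + j ∧
        ((φ (Finsupp.single ⟨j, t⟩ 1)) ⟨j', t'⟩).IsHomogeneous dd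

/-- `b` is the Betti diagram of the ideal `I ⊆ S`, i.e.
`b i j = dim_K Tor_i^S(K, S/I)_{i+j}` for all `i ≥ 1`.  This is expressed by the
existence of a minimal graded free resolution `⋯ → F₂ → F₁ → S → S/I → 0` of `S/I`
in which, for `i ≥ 1`, the free module `F_i` has exactly `b i j` generators of degree
`i + j`. -/
def HasBettiDiagram (I : Ideal (PS K r)) (b : ℕ → ℕ → ℕ) : Prop :=
  ∃ (φ : (i : ℕ) → (FreeGr K r (b (i + 2)) →ₗ[PS K r] FreeGr K r (b (i + 1))))
    (ε : FreeGr K r (b 1) →ₗ[PS K r] PS K r),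
    (∀ (j : ℕ) (t : Fin (b 1 j)), (ε (Finsupp.single ⟨j, t⟩ 1)).IsHomogeneous (1 + j)) ∧
    (∀ i, IsMinGrMap K r (b (i + 2)) (b (i + 1)) (i + 2) (i + 1) (φ i)) ∧
    LinearMap.range ε = I ∧
    LinearMap.ker ε = LinearMap.range (φ 0) ∧
    ∀ i, LinearMap.ker (φ i) = LinearMap.range (φ (i + 1))

/-- The Pfaffian of a (skew-symmetric) `4 × 4` matrix. -/
def pfaff4 {R : Type} [CommRing R] (N : Matrix (Fin 4) (Fin 4) R) : R :=
  N 0 1 * N 2 3 - N 0 2 * N 1 3 + N 0 3 * N 1 2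

/-- The five submaximal (`4 × 4`) Pfaffians of a skew-symmetric `5 × 5` matrix. -/
def subPfaffian {R : Type} [CommRing R] (M : Matrix (Fin 5) (Fin 5) R) (i : Fin 5) : R :=
  pfaff4 (M.submatrix i.succAbove i.succAbove)

/-- `X = V_+(I)` is the Pfaffian variety defined by the five `4 × 4` Pfaffians of a
skew-symmetric `5 × 5` matrix of linear forms. -/
def IsPfaffianVariety (I : Ideal (PS K r)) : Prop :=
  ∃ M : Matrix (Fin 5) (Fin 5) (PS K r),
    M.transpose = -M ∧ (∀ i j, (M i j).IsHomogeneous 1) ∧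
    I = Ideal.span (Set.range (subPfaffian M))

/-- The vanishing ideal of the coordinate point `(0 : ⋯ : 0 : 1) ∈ ℙ^{r+1}_K`. -/
def pointIdl : Ideal (PS K (r + 1)) :=
  Ideal.span ((X : Fin (r + 2) → PS K (r + 1)) '' {i : Fin (r + 2) | i ≠ Fin.last (r + 1)})

/-- `X = V_+(I) ⊆ ℙ^r_K` is the image of `Z = V_+(J) ⊆ ℙ^{r+1}_K` under the projection
from a point `P ∈ ℙ^{r+1}_K ∖ Z`: after a linear change of coordinates moving `P` to
`(0 : ⋯ : 0 : 1)`, the ideal `I` is the contraction of `J` to `K[x_0, …, x_r]`. -/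
def IsProjectionOf (I : Ideal (PS K r)) (J : Ideal (PS K (r + 1))) : Prop :=
  ∃ ψ : PS K (r + 1) ≃ₐ[K] PS K (r + 1), IsGrAut K (r + 1) ψ ∧
    ¬ Ideal.map ψ J ≤ pointIdl K r ∧
    I = Ideal.comap (rename (Fin.castSucc : Fin (r + 1) → Fin (r + 2))) (Ideal.map ψ J)

/-- The ideal of the Veronese surface `F ⊆ ℙ^5_K`, generated by the `2 × 2` minors of
the generic symmetric `3 × 3` matrix with rows `(x₀,x₁,x₂), (x₁,x₃,x₄), (x₂,x₄,x₅)`. -/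
def veroneseIdeal : Ideal (PS K 5) :=
  Ideal.span {X 0 * X 3 - X 1 * X 1, X 0 * X 4 - X 1 * X 2, X 1 * X 4 - X 2 * X 3,
    X 0 * X 5 - X 2 * X 2, X 1 * X 5 - X 2 * X 4, X 3 * X 5 - X 4 * X 4}

/-- The determinant of the generic symmetric `3 × 3` matrix defining the Veronese
surface; it cuts out the secant variety of `F ⊆ ℙ^5_K`. -/
def veroneseDet : PS K 5 :=
  X 0 * X 3 * X 5 - X 0 * X 4 * X 4 - X 1 * X 1 * X 5 + 2 * (X 1 * X 2 * X 4) -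
    X 2 * X 2 * X 3

/-- `X = V_+(I) ⊆ ℙ^4_K` is a generic projection of the Veronese surface `F ⊆ ℙ^5_K`,
i.e. the projection of `F` from a point `P ∈ ℙ^5_K ∖ F` at which the generic symmetric
`3 × 3` matrix `M` has rank `3` (equivalently, `P` does not lie on the secant variety
`{det M = 0}` of `F`). -/
def IsGenProjVeronese4 (I : Ideal (PS K 4)) : Prop :=
  ∃ ψ : PS K 5 ≃ₐ[K] PS K 5, IsGrAut K 5 ψ ∧
    ¬ Ideal.map ψ (Ideal.span {veroneseDet K}) ≤ pointIdl K 4 ∧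
    I = Ideal.comap (rename (Fin.castSucc : Fin 5 → Fin 6)) (Ideal.map ψ (veroneseIdeal K))

/-- `X = V_+(I) ⊆ ℙ^r_K` is a generic projection of the Veronese surface (which forces
`r = 4`). -/
def IsGenProjVeronese (I : Ideal (PS K r)) : Prop :=
  ∃ h : r + 1 = 5, IsGenProjVeronese4 K (Ideal.map (rename (Fin.cast h)) I)

/-- `X = V_+(I) ⊆ ℙ^r_K` is a generic projection of (a cone over) the Veronese surface
`F ⊆ ℙ^5_K`:  `X` is the projection of a cone `Z ⊆ ℙ^{r+1}_K` over `F` from a point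
not lying on the (cone over the) secant variety of `F`. -/
def IsGenProjVeroneseCone (I : Ideal (PS K r)) : Prop :=
  ∃ (h : 6 ≤ r + 2) (ψ : PS K (r + 1) ≃ₐ[K] PS K (r + 1)), IsGrAut K (r + 1) ψ ∧
    ¬ Ideal.map ψ (Ideal.map (rename (Fin.castLE h))
        (Ideal.span {veroneseDet K})) ≤ pointIdl K r ∧
    I = Ideal.comap (rename (Fin.castSucc : Fin (r + 1) → Fin (r + 2)))
      (Ideal.map ψ (Ideal.map (rename (Fin.castLE h)) (veroneseIdeal K)))

/-- The ideal of the rational normal scroll `S(a_1, …, a_k)`, generated by the `2 × 2`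
minors of the standard `2 × (Σ a_i)` matrix of indeterminates. -/
def scrollIdeal (k : ℕ) (a : Fin k → ℕ) :
    Ideal (MvPolynomial ((i : Fin k) × Fin (a i + 1)) K) :=
  Ideal.span {p | ∃ (i : Fin k) (j : Fin (a i)) (i' : Fin k) (j' : Fin (a i')),
    p = X ⟨i, j.castSucc⟩ * X ⟨i', j'.succ⟩ - X ⟨i, j.succ⟩ * X ⟨i', j'.castSucc⟩}

/-- The affine cone in `K^{r+2}` of the projective scheme `V_+(J) ⊆ ℙ^{r+1}_K`. -/
def zeroSet (J : Ideal (PS K (r + 1))) : Set (Fin (r + 2) → K) :=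
  {v | ∀ f ∈ J, MvPolynomial.eval v f = 0}

/-- Restriction of polynomials to the plane spanned by the vectors `p` and `q`
(i.e. to the line through the corresponding projective points). -/
def lineRestrict (p q : Fin (r + 2) → K) : PS K (r + 1) →ₐ[K] MvPolynomial (Fin 2) K :=
  aeval fun i => MvPolynomial.C (p i) * X 0 + MvPolynomial.C (q i) * X 1

/-- The line through the (independent) points `p`, `q` is a secant line of
`Z = V_+(J)`: the scheme `Z ∩ L ⊆ L ≅ ℙ^1` has length at least `2`, i.e. the
restriction of `J` to the line is contained in a principal ideal generated by a
form of degree `≥ 2` (or is zero, in which case `L ⊆ Z`). -/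
def IsSecantLine (J : Ideal (PS K (r + 1))) (p q : Fin (r + 2) → K) : Prop :=
  ∃ h : MvPolynomial (Fin 2) K,
    (∀ f ∈ J, lineRestrict K r p q f ∈ Ideal.span {h}) ∧
    (h = 0 ∨ ∃ dd : ℕ, 2 ≤ dd ∧ h.IsHomogeneous dd)

/-- The (affine cone over the) secant cone `Sec_P(Z)` of `Z = V_+(J)` with respect to
the point `P = [p]`: the union of `{P}` and of all secant lines of `Z` through `P`. -/
def secantCone (J : Ideal (PS K (r + 1))) (p : Fin (r + 2) → K) : Set (Fin (r + 2) → K) :=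
  {v | ∃ a : K, v = a • p} ∪
    {v | ∃ q : Fin (r + 2) → K, LinearIndependent K ![p, q] ∧ IsSecantLine K r J p q ∧
      ∃ a b : K, v = a • p + b • q}

/-- The (homogeneous) vanishing ideal of a subset of the affine cone `K^{r+2}`. -/
def vanishingIdl (T : Set (Fin (r + 2) → K)) : Ideal (PS K (r + 1)) where
  carrier := {f | ∀ v ∈ T, MvPolynomial.eval v f = 0}
  add_mem' := by
    intro a b ha hb v hv
    rw [map_add, ha v hv, hb v hv, add_zero]
  zero_mem' := by
    intro v hv
    rw [map_zero]
  smul_mem' := by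
    intro c f hf v hv
    rw [smul_eq_mul, map_mul, hf v hv, mul_zero]

/-- `X = V_+(I) ⊆ ℙ^r_K` is the image of `Z = V_+(J) ⊆ ℙ^{r+1}_K` under the linear
projection `π : ℙ^{r+1}_K ∖ {P} → ℙ^r_K` from the point `P = [p]`:  `I` is the
contraction of `J` along the substitution homomorphism induced by a surjective linear
map `K^{r+2} → K^{r+1}` with kernel `K·p`. -/
def IsProjectionFromPoint (I : Ideal (PS K r)) (J : Ideal (PS K (r + 1)))
    (p : Fin (r + 2) → K) : Prop :=
  ∃ π : (Fin (r + 2) → K) →ₗ[K] (Fin (r + 1) → K),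
    Function.Surjective π ∧ LinearMap.ker π = Submodule.span K {p} ∧
    I = Ideal.comap
      (aeval (fun j : Fin (r + 1) =>
        ∑ i : Fin (r + 2), MvPolynomial.C (π (Pi.single i 1) j) * X i) :
          PS K r →ₐ[K] PS K (r + 1)) J

end AMD

/-!
Let `L` be the function field of `X` and `V ⊆ L` the span of the ratios `xᵢ / x₀`, so that the
homogeneous coordinate ring of `X` is `⨁ₙ Vⁿ`. For a suitable `t ∈ V`, replacing `K` by `K(t)` and
`V` by its `K(t)`-span passes to the generic member of the pencil of hyperplane sections `t = λ`:
it lowers the dimension by one and keeps the codimension and the degree, and by Zariski's argument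
`K(t)` is again algebraically closed in `L`, so Bertini's theorem is not needed.

The saturation `satPow V n` of `Vⁿ` is `H⁰(X, 𝒪_X(n))`, and it equals `Vⁿ` for all `n` if and only
if the depth is at least two. In that case `dim V² = dim V + dim V'²` for the generic section `V'`,
whose depth is one less. Otherwise the depth is one, and `X` is an isomorphic projection from a
point of the variety of minimal degree with linear system `satPow V 1`. Varieties of minimal degree
are arithmetically Cohen-Macaulay, which determines `dim V²`.
-/

namespace AMD

universe u

open scoped Polynomial IntermediateField Pointwise

/-! ### Saturated powers of a linear system -/

section Saturation

variable {K L : Type*} [Field K] [Field L] [Algebra K L] {V : Submodule K L} {t : L}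

/-- A linear system `V` of rational functions with `1 ∈ V` that defines a birational map to
projective space: `K` is algebraically closed in `L`, and `V` is finite dimensional and generates
`L` as a field. The image is the projective variety with homogeneous coordinate ring `⨁ₙ Vⁿ`. -/
structure IsBirationalSystem (V : Submodule K L) : Prop where
  closed : IsIntegrallyClosedIn K L
  one_mem : (1 : L) ∈ V
  fg : V.FG
  adjoin_eq_top : IntermediateField.adjoin K (V : Set L) = ⊤

lemma pow_le_pow_of_one_mem (hone : (1 : L) ∈ V) {m n : ℕ} (h : m ≤ n) : V ^ m ≤ V ^ n :=
  pow_le_pow_right₀ (Submodule.one_le.2 hone) h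

lemma one_mem_pow (hone : (1 : L) ∈ V) (n : ℕ) : (1 : L) ∈ V ^ n := by
  simpa using Submodule.pow_mem_pow V hone n

lemma mul_mem_pow_of_le {n k l : ℕ} {b : L} (hb : ∀ x ∈ V ^ k, x * b ∈ V ^ (n + k)) (h : k ≤ l) :
    ∀ x ∈ V ^ l, x * b ∈ V ^ (n + l) := by
  obtain ⟨j, rfl⟩ := Nat.exists_eq_add_of_le h
  intro x hx
  rw [pow_add] at hx
  induction hx using Submodule.mul_induction_on' with
  | mem_mul_mem y hy z hz =>
    rw [mul_right_comm, ← add_assoc, pow_add]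
    exact Submodule.mul_mem_mul (hb y hy) hz
  | add y _ z _ hy hz => rw [add_mul]; exact add_mem hy hz

/-- The saturation of `Vⁿ`: the elements `b` with `b Vᵏ ⊆ Vⁿ⁺ᵏ` for some (equivalently, every
large) `k`. For the variety `X` defined by `V` this is the space of sections `H⁰(X, 𝒪_X(n))`. -/
def satPow (V : Submodule K L) (n : ℕ) : Submodule K L where
  carrier := {b | ∃ k, ∀ x ∈ V ^ k, x * b ∈ V ^ (n + k)}
  zero_mem' := ⟨0, fun x _ => by simp⟩
  add_mem' := by
    rintro a b ⟨k, ha⟩ ⟨l, hb⟩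
    refine ⟨max k l, fun x hx => ?_⟩
    rw [mul_add]
    exact add_mem (mul_mem_pow_of_le ha (le_max_left k l) x hx)
      (mul_mem_pow_of_le hb (le_max_right k l) x hx)
  smul_mem' := by
    rintro c b ⟨k, hb⟩
    refine ⟨k, fun x hx => ?_⟩
    rw [mul_smul_comm]
    exact Submodule.smul_mem _ _ (hb x hx)

lemma pow_le_satPow (n : ℕ) : V ^ n ≤ satPow V n := by
  refine fun b hb => ⟨0, fun x hx => ?_⟩
  rw [add_comm, pow_add]
  exact Submodule.mul_mem_mul hx hb

lemma le_satPow_one : V ≤ satPow V 1 := by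
  simpa only [pow_one] using pow_le_satPow (V := V) 1

lemma satPow_mono (hone : (1 : L) ∈ V) : Monotone (satPow V) := by
  rintro m n h b ⟨k, hb⟩
  exact ⟨k, fun x hx => pow_le_pow_of_one_mem hone (by omega) (hb x hx)⟩

lemma mul_mem_satPow {m n : ℕ} {a b : L} (ha : a ∈ satPow V m) (hb : b ∈ satPow V n) :
    a * b ∈ satPow V (m + n) := by
  obtain ⟨k, ha⟩ := ha
  obtain ⟨l, hb⟩ := hb
  refine ⟨max k l, fun x hx => ?_⟩
  have hxa := mul_mem_pow_of_le ha (le_max_left k l) x hx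
  have hxab := mul_mem_pow_of_le hb (l := m + max k l) (by omega) _ hxa
  rwa [← mul_assoc, show m + n + max k l = n + (m + max k l) by ring]

lemma IsBirationalSystem.satPow_zero (hV : IsBirationalSystem V) : satPow V 0 = 1 := by
  refine le_antisymm ?_ (by simpa only [pow_zero] using pow_le_satPow (V := V) 0)
  rintro b ⟨k, hb⟩
  have hne : V ^ k ≠ ⊥ := (Submodule.ne_bot_iff _).2 ⟨1, one_mem_pow hV.one_mem k, one_ne_zero⟩
  have hint : IsIntegral K b := by
    refine isIntegral_of_smul_mem_submodule (V ^ k) hne (hV.fg.pow k) b fun x hx => ?_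
    simpa only [zero_add, smul_eq_mul, mul_comm] using hb x hx
  have := hV.closed
  exact Submodule.mem_one.2 (IsIntegrallyClosedIn.algebraMap_eq_of_integral hint)

/-- In large degrees, the element `t` of degree one is a nonzerodivisor on the quotient of
`⨁ₙ Vⁿ` by the degree-one element `1 ∈ V`. -/
def IsFilterRegular (V : Submodule K L) (t : L) : Prop :=
  ∃ n₁, ∀ n, n₁ ≤ n → ∀ b ∈ V ^ (n + 1), t * b ∈ V ^ (n + 1) → b ∈ V ^ n

lemma IsFilterRegular.exists_satPow_eq_pow (hreg : IsFilterRegular V t) (hone : (1 : L) ∈ V)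
    (ht : t ∈ V) : ∃ n₁, ∀ N, n₁ ≤ N → satPow V N = V ^ N := by
  obtain ⟨n₁, hreg⟩ := hreg
  refine ⟨n₁, fun N hN => le_antisymm ?_ (pow_le_satPow N)⟩
  rintro b ⟨k, hb⟩
  -- Since `b, t b, …, tᵏ b` all lie in `Vᴺ⁺ᵏ`, regularity lowers the exponent one step at a time.
  have descend : ∀ i, i ≤ k → ∀ j, j + i ≤ k → t ^ j * b ∈ V ^ (N + (k - i)) := by
    intro i
    induction i with
    | zero =>
      intro _ j hj
      exact hb _ (pow_le_pow_of_one_mem hone (by omega) (Submodule.pow_mem_pow V ht j))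
    | succ i ih =>
      intro hi j hj
      have e : N + (k - i) = N + (k - (i + 1)) + 1 := by omega
      refine hreg _ (by omega) _ ?_ ?_
      · rw [← e]
        exact ih (by omega) j (by omega)
      · rw [← e, ← mul_assoc, ← pow_succ']
        exact ih (by omega) (j + 1) (by omega)
  simpa using descend k le_rfl 0 (by omega)

lemma satPow_fg (hV : IsBirationalSystem V) (ht : t ∈ V) (hreg : IsFilterRegular V t) (n : ℕ) :
    (satPow V n).FG := by
  obtain ⟨n₁, h⟩ := hreg.exists_satPow_eq_pow hV.one_mem ht
  have hfg : (satPow V (max n n₁)).FG := by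
    rw [h _ (le_max_right _ _)]
    exact hV.fg.pow _
  have := isNoetherian_of_fg_of_noetherian _ hfg
  exact hfg.of_le (satPow_mono hV.one_mem (le_max_left n n₁))

lemma IsFilterRegular.mem_satPow (hreg : IsFilterRegular V t) {n : ℕ} {b : L}
    (hb : b ∈ satPow V (n + 1)) (htb : t * b ∈ satPow V (n + 1)) : b ∈ satPow V n := by
  obtain ⟨n₁, hreg⟩ := hreg
  obtain ⟨k, hb⟩ := hb
  obtain ⟨l, htb⟩ := htb
  refine ⟨max n₁ (max k l), fun x hx => hreg _ (by omega) _ ?_ ?_⟩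
  · rw [add_right_comm]
    exact mul_mem_pow_of_le hb (by omega) x hx
  · rw [mul_left_comm, add_right_comm]
    exact mul_mem_pow_of_le htb (by omega) x hx

end Saturation

section Filtration

variable {K L : Type*} [Field K] [Field L] [Algebra K L] {V : Submodule K L} {t : L}

/-- A filtration `F` of `L` by finite-dimensional subspaces, compatible with multiplication by `t`,
such that `t` is a nonzerodivisor on the Rees algebra `⨁ₙ Fₙ` modulo the degree-one element `1`. -/
structure IsRegularFiltration (t : L) (F : ℕ → Submodule K L) : Prop where
  le_succ : ∀ n, F n ≤ F (n + 1)
  mul_mem : ∀ n, ∀ b ∈ F n, t * b ∈ F (n + 1)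
  regular : ∀ n, ∀ b ∈ F (n + 1), t * b ∈ F (n + 1) → b ∈ F n
  fg : ∀ n, (F n).FG

/-- The filtration of `L` by the saturated powers of `V`, shifted so that it starts at `⊥`. -/
def shiftedSatPow (V : Submodule K L) : ℕ → Submodule K L
  | 0 => ⊥
  | n + 1 => satPow V n

lemma isRegularFiltration_shiftedSatPow (hV : IsBirationalSystem V) (ht : t ∈ V)
    (hreg : IsFilterRegular V t) (htK : t ∉ (1 : Submodule K L)) :
    IsRegularFiltration t (shiftedSatPow V) where
  le_succ := by
    rintro (_ | n)
    · exact bot_le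
    · exact satPow_mono hV.one_mem n.le_succ
  mul_mem := by
    rintro (_ | n) b hb
    · rw [(Submodule.mem_bot K).1 hb, mul_zero]
      exact zero_mem _
    · rw [shiftedSatPow, add_comm]
      exact mul_mem_satPow (le_satPow_one ht) hb
  regular := by
    rintro (_ | n) b hb htb
    · rw [shiftedSatPow, hV.satPow_zero, Submodule.mem_one] at hb htb
      obtain ⟨x, rfl⟩ := hb
      obtain ⟨y, hy⟩ := htb
      by_contra hne
      refine htK (Submodule.mem_one.2 ⟨y / x, ?_⟩)
      rw [map_div₀, hy, mul_div_cancel_right₀ _ fun h => hne ((Submodule.mem_bot K).2 h)]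
    · exact hreg.mem_satPow hb htb
  fg := by
    rintro (_ | n)
    · exact Submodule.fg_bot
    · exact satPow_fg hV ht hreg n

end Filtration

/-! ### The generic member of a pencil -/

section PolynomialsOver

variable {K L : Type*} [Field K] [Field L] [Algebra K L] {U : Submodule K L} {t : L}

/-- The polynomials over `L` all of whose coefficients lie in the `K`-subspace `U`. -/
def polynomialsOver (U : Submodule K L) : Submodule K L[X] where
  carrier := {P | ∀ i, P.coeff i ∈ U}
  zero_mem' _ := by simp
  add_mem' hP hQ i := by
    rw [Polynomial.coeff_add]
    exact add_mem (hP i) (hQ i)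
  smul_mem' a P hP i := by
    rw [Polynomial.coeff_smul]
    exact U.smul_mem a (hP i)

lemma C_mem_polynomialsOver {b : L} (hb : b ∈ U) : Polynomial.C b ∈ polynomialsOver U := by
  intro i
  rw [Polynomial.coeff_C]
  split_ifs
  exacts [hb, zero_mem _]

lemma map_mul_mem_polynomialsOver (p : K[X]) {Q : L[X]} (hQ : Q ∈ polynomialsOver U) :
    p.map (algebraMap K L) * Q ∈ polynomialsOver U := by
  intro i
  rw [Polynomial.coeff_mul]
  refine sum_mem fun x _ => ?_
  rw [Polynomial.coeff_map, ← Algebra.smul_def]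
  exact U.smul_mem _ (hQ _)

lemma eval_algebraMap_mem {Q : L[X]} (hQ : Q ∈ polynomialsOver U) (τ : K) :
    Q.eval (algebraMap K L τ) ∈ U := by
  rw [Polynomial.eval_eq_sum, Polynomial.sum]
  refine sum_mem fun i _ => ?_
  rw [← map_pow, mul_comm, ← Algebra.smul_def]
  exact U.smul_mem _ (hQ _)

/-- The `K(t)`-span of `V`. If `V` defines the variety `X`, this is the linear system on the generic
member of the pencil of hyperplane sections `t = λ` of `X`, a variety over `K(t)`. -/
abbrev genericSection (t : L) (V : Submodule K L) : Submodule K⟮t⟯ L :=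
  Submodule.span K⟮t⟯ (V : Set L)

lemma aeval_ne_zero (htr : Transcendental K t) {p : K[X]} (hp : p ≠ 0) :
    Polynomial.aeval t p ≠ 0 := fun h => hp (transcendental_iff.1 htr p h)

lemma exists_aeval_mul_eq_eval (htr : Transcendental K t) {x : L} (hx : x ∈ genericSection t U) :
    ∃ q : K[X], q ≠ 0 ∧ ∃ P ∈ polynomialsOver U, Polynomial.aeval t q * x = P.eval t := by
  induction hx using Submodule.span_induction with
  | mem x hx => exact ⟨1, one_ne_zero, Polynomial.C x, C_mem_polynomialsOver hx, by simp⟩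
  | zero => exact ⟨1, one_ne_zero, 0, zero_mem _, by simp⟩
  | add x y _ _ hx hy =>
    obtain ⟨q, hq, P, hP, e⟩ := hx
    obtain ⟨q', hq', P', hP', e'⟩ := hy
    refine ⟨q * q', mul_ne_zero hq hq', q'.map (algebraMap K L) * P + q.map (algebraMap K L) * P',
      add_mem (map_mul_mem_polynomialsOver _ hP) (map_mul_mem_polynomialsOver _ hP'), ?_⟩
    rw [Polynomial.eval_add, Polynomial.eval_mul, Polynomial.eval_mul, ← e, ← e', map_mul,
      Polynomial.eval_map_algebraMap, Polynomial.eval_map_algebraMap]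
    ring
  | smul a x _ hx =>
    obtain ⟨q, hq, P, hP, e⟩ := hx
    obtain ⟨r, s, hrs⟩ := (IntermediateField.mem_adjoin_simple_iff K _).1 a.2
    rw [IntermediateField.smul_def, hrs, smul_eq_mul]
    rcases eq_or_ne s 0 with rfl | hs
    · exact ⟨1, one_ne_zero, 0, zero_mem _, by simp⟩
    · have hs' := aeval_ne_zero htr hs
      refine ⟨q * s, mul_ne_zero hq hs, r.map (algebraMap K L) * P,
        map_mul_mem_polynomialsOver _ hP, ?_⟩
      rw [Polynomial.eval_mul, ← e, map_mul, Polynomial.eval_map_algebraMap]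
      field_simp

lemma eventually_eval_ne_zero {q : K[X]} (hq : q ≠ 0) :
    ∀ᶠ τ in Filter.cofinite, q.eval τ ≠ 0 := by
  rw [Filter.eventually_cofinite]
  simpa only [not_not, Polynomial.IsRoot.def] using Polynomial.finite_setOfPred_isRoot hq

lemma eventually_le_of_fg {R M α : Type*} [Semiring R] [AddCommMonoid M] [Module R M]
    {l : Filter α} {W : Submodule R M} (hW : W.FG) {G : α → Submodule R M}
    (h : ∀ b ∈ W, ∀ᶠ τ in l, b ∈ G τ) : ∀ᶠ τ in l, W ≤ G τ := by
  obtain ⟨B, rfl⟩ := hW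
  simp only [Submodule.span_le, Set.subset_def, SetLike.mem_coe]
  exact (Filter.eventually_all_finset B).2 fun b hb => h b (Submodule.subset_span hb)

end PolynomialsOver

namespace IsRegularFiltration

variable {K L : Type*} [Field K] [Field L] [Algebra K L] {t : L} {F : ℕ → Submodule K L}

lemma monotone (hF : IsRegularFiltration t F) : Monotone F := monotone_nat_of_le_succ hF.le_succ

lemma mem_of_mul_mem (hF : IsRegularFiltration t F) {n m : ℕ} {b : L}
    (hb : b ∈ F (n + 1 + m)) (htb : t * b ∈ F (n + 1)) : b ∈ F n := by
  induction m with
  | zero => exact hF.regular n b hb htb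
  | succ m ih => exact ih (hF.regular (n + 1 + m) b hb (hF.monotone (by omega) htb))

/-- If `(X - t) Q` has coefficients in `Fₙ₊₁`, then those of `Q` lie in some large `F_N` by
descending induction from the leading one, hence in `Fₙ` by ascending induction and regularity. -/
lemma coeff_mem_of_X_sub_C_mul (hF : IsRegularFiltration t F) {n : ℕ} {Q : L[X]}
    (hQ : (Polynomial.X - Polynomial.C t) * Q ∈ polynomialsOver (F (n + 1))) :
    Q ∈ polynomialsOver (F n) := by
  set P := (Polynomial.X - Polynomial.C t) * Q with hP
  have coeff_zero : P.coeff 0 = -(t * Q.coeff 0) := by simp [hP, sub_mul]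
  have coeff_succ (i : ℕ) : P.coeff (i + 1) = Q.coeff i - t * Q.coeff (i + 1) := by
    simp [hP, sub_mul]
  have mem_large : ∀ j i, Q.natDegree + 1 ≤ i + j → Q.coeff i ∈ F (n + 1 + j) := by
    intro j
    induction j with
    | zero =>
      intro i hi
      rw [Polynomial.coeff_eq_zero_of_natDegree_lt (by omega)]
      exact zero_mem _
    | succ j ih =>
      intro i hi
      rw [← sub_add_cancel (Q.coeff i) (t * Q.coeff (i + 1)), ← coeff_succ]
      exact add_mem (hF.monotone (by omega) (hQ _)) (hF.mul_mem _ _ (ih (i + 1) (by omega)))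
  intro i
  refine hF.mem_of_mul_mem (mem_large (Q.natDegree + 1) i (by omega)) ?_
  induction i with
  | zero => simpa only [coeff_zero, neg_mem_iff] using hQ 0
  | succ i ih =>
    have hi : Q.coeff i ∈ F n := hF.mem_of_mul_mem (mem_large (Q.natDegree + 1) i (by omega)) ih
    rw [← sub_sub_cancel (Q.coeff i) (t * Q.coeff (i + 1)), ← coeff_succ]
    exact sub_mem (hF.le_succ _ hi) (hQ _)

lemma exists_eq_X_sub_C_mul (hF : IsRegularFiltration t F) {n : ℕ} {P : L[X]}
    (hP : P ∈ polynomialsOver (F (n + 1))) (hroot : P.eval t = 0) :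
    ∃ Q ∈ polynomialsOver (F n), P = (Polynomial.X - Polynomial.C t) * Q := by
  obtain ⟨Q, rfl⟩ := Polynomial.dvd_iff_isRoot.2 hroot
  exact ⟨Q, hF.coeff_mem_of_X_sub_C_mul hP, rfl⟩

lemma mem_sup_span_singleton_mul (hF : IsRegularFiltration t F) {n : ℕ} {b : L}
    (hb : b ∈ F (n + 1)) {q : K[X]} {P : L[X]} (hP : P ∈ polynomialsOver (F (n + 1)))
    (hqP : Polynomial.aeval t q * b = P.eval t) {τ : K} (hτ : q.eval τ ≠ 0) {U : Submodule K L}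
    (hU : P.eval (algebraMap K L τ) ∈ U) :
    b ∈ U ⊔ (K ∙ (t - algebraMap K L τ)) * F n := by
  obtain ⟨Q, hQ, hPQ⟩ := hF.exists_eq_X_sub_C_mul (n := n)
    (P := q.map (algebraMap K L) * Polynomial.C b - P)
    (sub_mem (map_mul_mem_polynomialsOver q (C_mem_polynomialsOver hb)) hP)
    (by rw [Polynomial.eval_sub, ← hqP]; simp)
  have eval_τ := congrArg (Polynomial.eval (algebraMap K L τ)) hPQ
  simp only [Polynomial.eval_sub, Polynomial.eval_mul, Polynomial.eval_C, Polynomial.eval_X,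
    Polynomial.eval_map_algebraMap, Polynomial.aeval_algebraMap_apply,
    Polynomial.coe_aeval_eq_eval] at eval_τ
  have hb_eq : q.eval τ • b = P.eval (algebraMap K L τ) +
      (t - algebraMap K L τ) * -Q.eval (algebraMap K L τ) := by
    rw [Algebra.smul_def]
    linear_combination eval_τ
  rw [← Submodule.smul_mem_iff _ hτ, hb_eq]
  exact Submodule.add_mem_sup hU (Submodule.mul_mem_mul (Submodule.mem_span_singleton_self _)
    (neg_mem (eval_algebraMap_mem hQ τ)))

/-- A containment over the generic member of the pencil specializes to all but finitely many
members `t = τ`. -/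
lemma eventually_le_sup_span_singleton_mul (hF : IsRegularFiltration t F)
    (htr : Transcendental K t) {n : ℕ} {U W : Submodule K L} (hU : U ≤ F (n + 1))
    (hW : W ≤ F (n + 1)) (hWU : (W : Set L) ⊆ genericSection t U) :
    ∀ᶠ τ in Filter.cofinite, W ≤ U ⊔ (K ∙ (t - algebraMap K L τ)) * F n := by
  refine eventually_le_of_fg ((hF.fg (n + 1)).of_le hW) fun b hb => ?_
  obtain ⟨q, hq, P, hP, hqP⟩ := exists_aeval_mul_eq_eval htr (hWU hb)
  filter_upwards [eventually_eval_ne_zero hq] with τ hτ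
  exact hF.mem_sup_span_singleton_mul (hW hb) (fun i => hU (hP i)) hqP hτ
    (eval_algebraMap_mem hP τ)

end IsRegularFiltration

section GenericSectionDimension

variable {K L : Type*} [Field K] [Field L] [Algebra K L] {t : L} {F : ℕ → Submodule K L}

lemma IsRegularFiltration.eq_zero_of_eval_eq_zero (hF : IsRegularFiltration t F) (ht : t ≠ 0)
    {n : ℕ} {C : Submodule K L} (hC : C ≤ F (n + 1)) (hdisj : ∀ f ∈ F n, t * f ∈ C → f = 0)
    {P : L[X]} (hP : P ∈ polynomialsOver C) (hroot : P.eval t = 0) : P = 0 := by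
  induction hN : P.natDegree using Nat.strong_induction_on generalizing P with
  | _ N ih =>
    obtain ⟨Q, hQ, hPQ⟩ := hF.exists_eq_X_sub_C_mul (fun i => hC (hP i)) hroot
    have coeff_zero : P.coeff 0 = t * -Q.coeff 0 := by simp [hPQ, sub_mul]
    have const_eq_zero : P.coeff 0 = 0 := by
      rw [coeff_zero, hdisj _ (neg_mem (hQ 0)) (coeff_zero ▸ hP 0), mul_zero]
    have eq_X_mul : Polynomial.X * P.divX = P := by
      simpa only [const_eq_zero, map_zero, add_zero] using P.X_mul_divX_add
    rcases Nat.eq_zero_or_pos P.natDegree with hdeg | hdeg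
    · rw [Polynomial.eq_C_of_natDegree_eq_zero hdeg, const_eq_zero, map_zero]
    · rw [← eq_X_mul, Polynomial.eval_mul, Polynomial.eval_X] at hroot
      have divX_eq_zero : P.divX = 0 := by
        refine ih P.divX.natDegree ?_ (fun i => ?_) ((mul_eq_zero.1 hroot).resolve_left ht) rfl
        · rw [Polynomial.natDegree_divX_eq_natDegree_tsub_one]
          omega
        · rw [Polynomial.coeff_divX]
          exact hP _
      rw [← eq_X_mul, divX_eq_zero, mul_zero]

open scoped IntermediateField.algebraAdjoinAdjoin in
lemma linearIndependent_adjoin_simple {C : Submodule K L}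
    (hinj : ∀ P ∈ polynomialsOver C, P.eval t = 0 → P = 0) {ι : Type*} [Finite ι] {c : ι → L}
    (hc : ∀ i, c i ∈ C) (hli : LinearIndependent K c) : LinearIndependent K⟮t⟯ c := by
  have := Fintype.ofFinite ι
  have : IsScalarTower (Algebra.adjoin K {t}) K⟮t⟯ L := IsScalarTower.of_algebraMap_eq fun _ => rfl
  rw [← LinearIndependent.iff_fractionRing (Algebra.adjoin K {t}), Fintype.linearIndependent_iff]
  intro g hg
  have exists_aeval (i : ι) : ∃ p : K[X], Polynomial.aeval t p = (g i : L) :=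
    (Algebra.adjoin_singleton_eq_range_aeval K t).le (g i).2
  choose p hp using exists_aeval
  have sum_eq_zero : ∑ i, (p i).map (algebraMap K L) * Polynomial.C (c i) = 0 := by
    refine hinj _ (sum_mem fun i _ =>
      map_mul_mem_polynomialsOver _ (C_mem_polynomialsOver (hc i))) ?_
    simp_rw [Polynomial.eval_finsetSum, Polynomial.eval_mul, Polynomial.eval_map_algebraMap, hp,
      Polynomial.eval_C]
    exact hg
  have p_eq_zero (i : ι) : p i = 0 := by
    ext j
    have coeff_eq_zero := congrArg (Polynomial.coeff · j) sum_eq_zero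
    simp only [Polynomial.finsetSum_coeff, Polynomial.coeff_mul_C, Polynomial.coeff_map,
      Polynomial.coeff_zero, ← Algebra.smul_def] at coeff_eq_zero
    simpa using Fintype.linearIndependent_iff.1 hli _ coeff_eq_zero i
  intro i
  rw [← Subtype.coe_inj, ← hp i, p_eq_zero i, map_zero, ZeroMemClass.coe_zero]

lemma genericSection_eq_span_range {ι : Type*} {C : Submodule K L} (b : Module.Basis ι K C) :
    genericSection t C = Submodule.span K⟮t⟯ (Set.range fun i => (b i : L)) := by
  have hspan : Submodule.span K (Set.range fun i => (b i : L)) = C := by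
    have := Submodule.map_span C.subtype (Set.range b)
    rw [b.span_eq, Submodule.map_top, Submodule.range_subtype, ← Set.range_comp] at this
    exact this.symm
  rw [← Submodule.span_span_of_tower K K⟮t⟯, hspan]

lemma finrank_genericSection {C : Submodule K L} [FiniteDimensional K C]
    (hinj : ∀ P ∈ polynomialsOver C, P.eval t = 0 → P = 0) :
    Module.finrank K⟮t⟯ (genericSection t C) = Module.finrank K C := by
  let b := Module.finBasis K C
  have hli : LinearIndependent K fun i => (b i : L) :=
    b.linearIndependent.map' C.subtype C.ker_subtype
  rw [genericSection_eq_span_range b,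
    finrank_span_eq_card (linearIndependent_adjoin_simple hinj (fun i => (b i).2) hli),
    Fintype.card_fin]

/-- A version of Nakayama's lemma: modulo the span of `C`, the finite-dimensional space `A` is
stable under `t⁻¹`, which is transcendental. -/
lemma subset_genericSection_of_le_add_mul (htr : Transcendental K t) {A C : Submodule K L}
    (hA : A.FG) (h : ∀ f ∈ A, ∃ c ∈ C, ∃ f' ∈ A, f = c + t * f') :
    (A : Set L) ⊆ genericSection t C := by
  set W := genericSection t C
  set N : Submodule K (L ⧸ W) := A.map (W.mkQ.restrictScalars K)
  have N_eq_bot : N = ⊥ := by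
    by_contra hN
    have gen_ne_zero : IntermediateField.AdjoinSimple.gen K t ≠ 0 := fun h0 =>
      htr (by rw [← IntermediateField.AdjoinSimple.coe_gen K t, h0]; exact isAlgebraic_zero)
    have inv_integral : IsIntegral K (IntermediateField.AdjoinSimple.gen K t)⁻¹ := by
      refine isIntegral_of_smul_mem_submodule N hN (hA.map _) _ ?_
      rintro _ ⟨f, hf, rfl⟩
      obtain ⟨c, hc, f', hf', hff'⟩ := h f hf
      refine ⟨f', hf', ?_⟩
      have mkQ_c : W.mkQ c = 0 := (Submodule.Quotient.mk_eq_zero W).2 (Submodule.subset_span hc)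
      have mkQ_f : W.mkQ f = IntermediateField.AdjoinSimple.gen K t • W.mkQ f' := by
        rw [hff', map_add, mkQ_c, zero_add, ← map_smul]
        rfl
      change W.mkQ f' = _ • W.mkQ f
      rw [mkQ_f, inv_smul_smul₀ gen_ne_zero]
    have gen_algebraic := IsAlgebraic.inv_iff.1 inv_integral.isAlgebraic
    exact htr ((isAlgebraic_algebraMap_iff (algebraMap K⟮t⟯ L).injective).2 gen_algebraic)
  intro f hf
  refine (Submodule.Quotient.mk_eq_zero W).1 ?_
  have : W.mkQ f ∈ N := ⟨f, hf, rfl⟩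
  rwa [N_eq_bot, Submodule.mem_bot] at this

lemma exists_isCompl_within {K M : Type*} [Field K] [AddCommGroup M] [Module K M]
    {T U : Submodule K M} (hTU : T ≤ U) :
    ∃ C ≤ U, T ⊔ C = U ∧ T ⊓ C = ⊥ := by
  obtain ⟨C, hC⟩ := exists_isCompl (⟨T, hTU⟩ : Set.Iic U)
  refine ⟨C.1, C.2, ?_, ?_⟩
  · simpa using congrArg Subtype.val hC.sup_eq_top
  · simpa using congrArg Subtype.val hC.inf_eq_bot

lemma IsRegularFiltration.finrank_genericSection_add (hF : IsRegularFiltration t F)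
    (htr : Transcendental K t) {n : ℕ} {U : Submodule K L} (hFU : F n ≤ U)
    (htFU : ∀ f ∈ F n, t * f ∈ U) (hUF : U ≤ F (n + 1)) :
    Module.finrank K⟮t⟯ (genericSection t U) + Module.finrank K (F n) = Module.finrank K U := by
  have ht : t ≠ 0 := by
    rintro rfl
    exact htr isAlgebraic_zero
  have hU : U.FG := (hF.fg _).of_le hUF
  set T : Submodule K L := (F n).map (LinearMap.mulLeft K t)
  obtain ⟨C, hCU, hsup, hinf⟩ := exists_isCompl_within (T := T) (U := U) (by
    rintro _ ⟨f, hf, rfl⟩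
    exact htFU f hf)
  have : FiniteDimensional K U := Module.Finite.iff_fg.2 hU
  have : FiniteDimensional K T := Submodule.finiteDimensional_of_le (hsup ▸ le_sup_left)
  have : FiniteDimensional K C := Submodule.finiteDimensional_of_le hCU
  have finrank_T : Module.finrank K T = Module.finrank K (F n) :=
    ((F n).equivMapOfInjective (LinearMap.mulLeft K t) (mul_right_injective₀ ht)).finrank_eq.symm
  have finrank_C : Module.finrank K C + Module.finrank K (F n) = Module.finrank K U := by
    have := Submodule.finrank_sup_add_finrank_inf_eq T C
    rw [hsup, hinf, finrank_bot] at this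
    omega
  have hdisj : ∀ f ∈ F n, t * f ∈ C → f = 0 := by
    intro f hf hfC
    have : t * f ∈ T ⊓ C := ⟨⟨f, hf, rfl⟩, hfC⟩
    rw [hinf, Submodule.mem_bot] at this
    exact (mul_eq_zero.1 this).resolve_left ht
  have span_eq : genericSection t U = genericSection t C := by
    refine le_antisymm (Submodule.span_le.2 ?_) (Submodule.span_mono hCU)
    refine subset_genericSection_of_le_add_mul htr hU fun f hf => ?_
    rw [← hsup] at hf
    obtain ⟨_, ⟨f', hf', rfl⟩, c, hc, rfl⟩ := Submodule.mem_sup.1 hf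
    exact ⟨c, hc, f', hFU hf', add_comm _ _⟩
  rw [span_eq, finrank_genericSection fun P hP =>
    hF.eq_zero_of_eval_eq_zero ht (hCU.trans hUF) hdisj hP, finrank_C]

end GenericSectionDimension

/-! ### The homogeneous coordinate ring -/

section CoordinateRing

variable {K L : Type*} [Field K] [Field L] [Algebra K L] {V : Submodule K L}

/-- The homogeneous coordinate ring `⨁ₙ Vⁿ` of the variety defined by the linear system `V`,
realised as the algebra of polynomials over `L` with `n`-th coefficient in `Vⁿ`. -/
def coordinateRing (V : Submodule K L) : Subalgebra K L[X] where
  carrier := {p | ∀ n, p.coeff n ∈ V ^ n}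
  add_mem' hp hq n := by
    rw [Polynomial.coeff_add]
    exact add_mem (hp n) (hq n)
  mul_mem' hp hq n := by
    rw [Polynomial.coeff_mul]
    refine sum_mem fun x hx => ?_
    rw [← Finset.HasAntidiagonal.mem_antidiagonal.1 hx, pow_add]
    exact Submodule.mul_mem_mul (hp _) (hq _)
  algebraMap_mem' a n := by
    rw [Polynomial.algebraMap_apply, Polynomial.coeff_C]
    split_ifs with h
    · rw [h, pow_zero]
      exact Submodule.algebraMap_mem a
    · exact zero_mem _

lemma monomial_mem_coordinateRing {n : ℕ} {v : L} (hv : v ∈ V ^ n) :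
    Polynomial.monomial n v ∈ coordinateRing V := by
  intro m
  rw [Polynomial.coeff_monomial]
  split_ifs with h
  · rwa [← h]
  · exact zero_mem _

/-- The irrelevant ideal `⨁_{n > 0} Vⁿ` of the homogeneous coordinate ring. -/
def irrelevantIdeal (V : Submodule K L) : Ideal (coordinateRing V) :=
  RingHom.ker ((Polynomial.constantCoeff (R := L)).comp (coordinateRing V).val.toRingHom)

lemma mem_irrelevantIdeal {p : coordinateRing V} :
    p ∈ irrelevantIdeal V ↔ (p : L[X]).coeff 0 = 0 := Iff.rfl

namespace coordinateRing

lemma coeff_mem (p : coordinateRing V) (n : ℕ) : (p : L[X]).coeff n ∈ V ^ n := p.2 n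

/-- The element of the coordinate ring that is homogeneous of degree `n`, given by `v ∈ Vⁿ`. -/
def homog {n : ℕ} {v : L} (hv : v ∈ V ^ n) : coordinateRing V :=
  ⟨Polynomial.monomial n v, monomial_mem_coordinateRing hv⟩

lemma homog_eq_zero {n : ℕ} {v : L} (hv : v ∈ V ^ n) (h : v = 0) : homog hv = 0 :=
  Subtype.ext (by simp [homog, h])

lemma homog_mem_irrelevantIdeal {n : ℕ} (hn : n ≠ 0) {v : L} (hv : v ∈ V ^ n) :
    homog hv ∈ irrelevantIdeal V :=
  mem_irrelevantIdeal.2 (Polynomial.coeff_monomial_of_ne v hn.symm)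

lemma homog_succ_mem {J : Ideal (coordinateRing V)} {n : ℕ}
    (h : ∀ v, ∀ hv : v ∈ V ^ 1, ∀ w, ∀ hw : w ∈ V ^ n, homog hv * homog hw ∈ J)
    {x : L} (hx : x ∈ V ^ (n + 1)) : homog hx ∈ J := by
  suffices exists_eq : ∃ y ∈ J, (y : L[X]) = Polynomial.monomial (n + 1) x by
    obtain ⟨y, hy, hyx⟩ := exists_eq
    rwa [show homog hx = y from Subtype.ext hyx.symm]
  rw [pow_succ'] at hx
  refine Submodule.mul_induction_on hx ?_ ?_
  · intro v hv w hw
    exact ⟨_, h v (by simpa using hv) w hw, by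
      simp [homog, Polynomial.monomial_mul_monomial, add_comm]⟩
  · rintro x y ⟨p, hp, hpx⟩ ⟨q, hq, hqy⟩
    exact ⟨p + q, add_mem hp hq, by simp [hpx, hqy]⟩

lemma homog_mem_irrelevantIdeal_pow {k n : ℕ} (h : k ≤ n) {v : L} (hv : v ∈ V ^ n) :
    homog hv ∈ irrelevantIdeal V ^ k := by
  induction k generalizing n v with
  | zero => simp
  | succ k ih =>
    obtain ⟨n, rfl⟩ := Nat.exists_eq_add_one_of_ne_zero (by omega : n ≠ 0)
    refine homog_succ_mem (fun v hv w hw => ?_) hv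
    rw [pow_succ']
    exact Ideal.mul_mem_mul (homog_mem_irrelevantIdeal one_ne_zero hv) (ih (by omega) hw)

lemma eq_sum_homog (p : coordinateRing V) :
    p = ∑ i ∈ Finset.range ((p : L[X]).natDegree + 1), homog (coeff_mem p i) := by
  apply Subtype.ext
  rw [AddSubmonoidClass.coe_finsetSum]
  exact Polynomial.as_sum_range _

lemma mem_irrelevantIdeal_pow {k : ℕ} {p : coordinateRing V}
    (h : ∀ i < k, (p : L[X]).coeff i = 0) : p ∈ irrelevantIdeal V ^ k := by
  rw [eq_sum_homog p]
  refine sum_mem fun i _ => ?_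
  rcases le_or_gt k i with hi | hi
  · exact homog_mem_irrelevantIdeal_pow hi _
  · rw [homog_eq_zero _ (h i hi)]
    exact zero_mem _

lemma irrelevantIdeal_le {J : Ideal (coordinateRing V)}
    (h : ∀ v (hv : v ∈ V ^ 1), homog hv ∈ J) : irrelevantIdeal V ≤ J := by
  intro p hp
  rw [eq_sum_homog p]
  refine sum_mem fun i _ => ?_
  rcases i with _ | i
  · rw [homog_eq_zero _ (mem_irrelevantIdeal.1 hp)]
    exact zero_mem _
  · exact homog_succ_mem (fun v hv w _ => J.mul_mem_right _ (h v hv)) _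

end coordinateRing

lemma coordinateRing_le {A : Subalgebra K L[X]} (h : ∀ v ∈ V, Polynomial.monomial 1 v ∈ A) :
    coordinateRing V ≤ A := by
  have monomial_mem (n : ℕ) : ∀ v ∈ V ^ n, Polynomial.monomial n v ∈ A := by
    induction n with
    | zero =>
      intro v hv
      obtain ⟨a, rfl⟩ := Submodule.mem_one.1 (by simpa using hv)
      exact A.algebraMap_mem a
    | succ n ih =>
      intro v hv
      rw [pow_succ] at hv
      induction hv using Submodule.mul_induction_on' with
      | mem_mul_mem x hx y hy =>
        rw [← Polynomial.monomial_mul_monomial]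
        exact mul_mem (ih x hx) (h y hy)
      | add x _ y _ hx hy =>
        rw [map_add]
        exact add_mem hx hy
  intro p hp
  rw [Polynomial.as_sum_range p]
  exact sum_mem fun i _ => monomial_mem i _ (hp i)

lemma coordinateRing_fg (hV : V.FG) : (coordinateRing V).FG := by
  classical
  obtain ⟨B, hB⟩ := hV
  refine ⟨B.image (Polynomial.monomial 1), le_antisymm (Algebra.adjoin_le ?_) ?_⟩
  · rw [Finset.coe_image]
    rintro _ ⟨b, hb, rfl⟩
    exact monomial_mem_coordinateRing (by rw [pow_one, ← hB]; exact Submodule.subset_span hb)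
  · refine coordinateRing_le fun v hv => ?_
    rw [← hB] at hv
    rw [Finset.coe_image]
    have := Submodule.mem_map_of_mem (f := (Polynomial.monomial 1).restrictScalars K) hv
    rw [Submodule.map_span] at this
    exact Algebra.span_le_adjoin K _ this

lemma isNoetherianRing_coordinateRing (hV : V.FG) : IsNoetherianRing (coordinateRing V) := by
  have : Algebra.FiniteType K (coordinateRing V) :=
    (coordinateRing V).fg_iff_finiteType.1 (coordinateRing_fg hV)
  exact Algebra.FiniteType.isNoetherianRing K _

end CoordinateRing

section AvoidingPrimes

variable {R : Type*} [CommRing R] [IsNoetherianRing R]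

lemma exists_pow_smul_eq_zero_of_associatedPrimes {M : Type*} [AddCommGroup M] [Module R M]
    [Module.Finite R M] (J : Ideal R) (τ : R) (h : ∀ p ∈ associatedPrimes R M, τ ∈ p → J ≤ p) :
    ∃ k, ∀ a ∈ J ^ k, ∀ x : M, τ • x = 0 → a • x = 0 := by
  set T : Submodule R M := LinearMap.ker (LinearMap.lsmul R M τ)
  have le_radical : J ≤ (Module.annihilator R T).radical := by
    rw [Ideal.radical_eq_sInf]
    refine le_sInf ?_
    rintro p ⟨hp, hp_prime⟩
    obtain ⟨q, hq, hqp⟩ := Ideal.exists_minimalPrimes_le hp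
    refine (h q ?_ (hq.1.2 (Module.mem_annihilator.2 fun x => Subtype.ext x.2))).trans hqp
    exact associatedPrimes.subset_of_injective (f := T.subtype) T.subtype_injective
      (Module.associatedPrimes.minimalPrimes_annihilator_subset_associatedPrimes R T hq)
  obtain ⟨k, hk⟩ :=
    Ideal.exists_pow_le_of_le_radical_of_fg le_radical (IsNoetherian.noetherian J)
  exact ⟨k, fun a ha x hx => congrArg Subtype.val (Module.mem_annihilator.1 (hk ha) ⟨x, hx⟩)⟩

lemma exists_finite_primes_pow_mul_mem (I J : Ideal R) :
    ∃ P : Set (Ideal R), P.Finite ∧ ∀ τ : R, (∀ p ∈ P, τ ∈ p → J ≤ p) →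
      ∃ k, ∀ a ∈ J ^ k, ∀ y, τ * y ∈ I → a * y ∈ I := by
  refine ⟨associatedPrimes R (R ⧸ I), associatedPrimes.finite _ _, fun τ hτ => ?_⟩
  obtain ⟨k, hk⟩ := exists_pow_smul_eq_zero_of_associatedPrimes (M := R ⧸ I) J τ hτ
  exact ⟨k, fun a ha y hy => Ideal.Quotient.eq_zero_iff_mem.1
    (hk a ha (Ideal.Quotient.mk _ y) (Ideal.Quotient.eq_zero_iff_mem.2 hy))⟩

end AvoidingPrimes

section FilterRegular

variable {K L : Type*} [Field K] [Field L] [Algebra K L] {V : Submodule K L}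

namespace coordinateRing

lemma exists_add_mem_irrelevantIdeal_pow (k : ℕ) (a : coordinateRing V) :
    ∃ lo, ∃ hi ∈ irrelevantIdeal V ^ k, a = lo + hi ∧ ∀ i, k ≤ i → (lo : L[X]).coeff i = 0 := by
  set lo : coordinateRing V := ∑ i ∈ Finset.range k, homog (coeff_mem a i) with lo_def
  have coeff_lo (i : ℕ) : (lo : L[X]).coeff i = if i < k then (a : L[X]).coeff i else 0 := by
    simp [lo_def, homog, Polynomial.finsetSum_coeff, Polynomial.coeff_monomial]
  refine ⟨lo, a - lo, mem_irrelevantIdeal_pow fun i hi => ?_, by ring, fun i hi => ?_⟩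
  · rw [AddSubgroupClass.coe_sub, Polynomial.coeff_sub, coeff_lo, if_pos hi, sub_self]
  · rw [coeff_lo, if_neg (by omega)]

lemma exists_coeff_eq_of_pow_mul_mem {I T : Ideal (coordinateRing V)} {k : ℕ} (hT : T.FG)
    (h : ∀ a ∈ irrelevantIdeal V ^ k, ∀ y ∈ T, a * y ∈ I) :
    ∃ N, ∀ y ∈ T, ∀ n, N ≤ n → ∃ w ∈ I, (w : L[X]).coeff n = (y : L[X]).coeff n := by
  obtain ⟨G, hG⟩ := hT
  refine ⟨G.sup (fun g => (g : L[X]).natDegree) + k, fun y hy n hn => ?_⟩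
  have hGT : ∀ g ∈ G, g ∈ T := fun g hg => hG ▸ Submodule.subset_span hg
  rw [← hG, Submodule.mem_span_finset] at hy
  obtain ⟨f, -, rfl⟩ := hy
  choose lo hi hi_mem f_eq coeff_lo using fun a : coordinateRing V =>
    exists_add_mem_irrelevantIdeal_pow k a
  refine ⟨∑ g ∈ G, hi (f g) * g, sum_mem fun g hg => h _ (hi_mem _) g (hGT g hg), ?_⟩
  simp only [AddSubmonoidClass.coe_finsetSum, Polynomial.finsetSum_coeff]
  refine Finset.sum_congr rfl fun g hg => ?_
  have degree_g := Finset.le_sup (f := fun g : coordinateRing V => (g : L[X]).natDegree) hg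
  have split : ((f g • g : coordinateRing V) : L[X]) =
      (lo (f g) : L[X]) * (g : L[X]) + ((hi (f g) * g : coordinateRing V) : L[X]) := by
    conv_lhs => rw [smul_eq_mul, f_eq (f g), add_mul]
    rfl
  rw [split, Polynomial.coeff_add, Polynomial.coeff_mul, Finset.sum_eq_zero, zero_add]
  rintro ⟨i, j⟩ hij
  have hij : i + j = n := Finset.HasAntidiagonal.mem_antidiagonal.1 hij
  rcases le_or_gt k i with hik | hik
  · rw [coeff_lo _ i hik, zero_mul]
  · have : (g : L[X]).natDegree < j := by
      omega
    rw [Polynomial.coeff_eq_zero_of_natDegree_lt this, mul_zero]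

/-- The inclusion of `V` as the degree-one part of the coordinate ring. -/
def degreeOne (V : Submodule K L) : V →ₗ[K] coordinateRing V where
  toFun v := homog (n := 1) (v := v) (by simp)
  map_add' v w := Subtype.ext (map_add (Polynomial.monomial 1) (v : L) w)
  map_smul' a v := Subtype.ext (Polynomial.smul_monomial a 1 (v : L)).symm

/-- The linear forms in an ideal of the coordinate ring. -/
def linearForms (q : Ideal (coordinateRing V)) : Submodule K L :=
  ((q.restrictScalars K).comap (degreeOne V)).map V.subtype

lemma irrelevantIdeal_le_of_le_linearForms {q : Ideal (coordinateRing V)}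
    (h : V ≤ linearForms q) : irrelevantIdeal V ≤ q := by
  refine irrelevantIdeal_le fun v hv => ?_
  obtain ⟨w, hw, rfl⟩ := h (by simpa using hv : v ∈ V)
  exact hw

end coordinateRing

open coordinateRing

lemma isFilterRegular_of_pow_mul_mem (hV : V.FG) (hone : (1 : L) ∈ V) {t : V} {k : ℕ}
    (h : ∀ a ∈ irrelevantIdeal V ^ k, ∀ y, degreeOne V t * y ∈ Ideal.span {degreeOne V ⟨1, hone⟩} →
      a * y ∈ Ideal.span {degreeOne V ⟨1, hone⟩}) :
    IsFilterRegular V (t : L) := by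
  have := isNoetherianRing_coordinateRing hV
  set z := degreeOne V ⟨1, hone⟩
  set T : Ideal (coordinateRing V) := (Ideal.span {z}).colon {degreeOne V t}
  have mem_T (y : coordinateRing V) : y ∈ T ↔ degreeOne V t * y ∈ Ideal.span {z} := by
    simp only [T, Submodule.mem_colon_singleton, smul_eq_mul, mul_comm]
  obtain ⟨N, hN⟩ := exists_coeff_eq_of_pow_mul_mem (IsNoetherian.noetherian T)
    fun a ha y hy => h a ha y ((mem_T y).1 hy)
  refine ⟨N, fun n hn b hb htb => ?_⟩
  have homog_b_mem : homog hb ∈ T := by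
    refine (mem_T _).2 (Ideal.mem_span_singleton.2 ⟨homog htb, Subtype.ext ?_⟩)
    simp [z, degreeOne, homog, Polynomial.monomial_mul_monomial]
  obtain ⟨_, hw, coeff_eq⟩ := hN _ homog_b_mem (n + 1) (by omega)
  obtain ⟨w, rfl⟩ := Ideal.mem_span_singleton.1 hw
  have coeff_w : ((z * w : coordinateRing V) : L[X]).coeff (n + 1) = (w : L[X]).coeff n := by
    change ((Polynomial.monomial 1 1 : L[X]) * (w : L[X])).coeff (n + 1) = _
    rw [Polynomial.monomial_one_one_eq_X, Polynomial.coeff_X_mul]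
  have coeff_b : (homog hb : L[X]).coeff (n + 1) = b := Polynomial.coeff_monomial_same _ _
  rw [← coeff_b, ← coeff_eq, coeff_w]
  exact coeff_mem w n

lemma exists_finite_isFilterRegular (hV : V.FG) (hone : (1 : L) ∈ V) :
    ∃ B : Set (Submodule K L), B.Finite ∧ (∀ W ∈ B, ¬ V ≤ W) ∧
      ∀ t ∈ V, (∀ W ∈ B, t ∉ W) → IsFilterRegular V t := by
  have := isNoetherianRing_coordinateRing hV
  obtain ⟨P, hP, hkill⟩ := exists_finite_primes_pow_mul_mem
    (Ideal.span {degreeOne V ⟨1, hone⟩}) (irrelevantIdeal V)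
  refine ⟨linearForms '' {q ∈ P | ¬ irrelevantIdeal V ≤ q}, (hP.sep _).image _, ?_, ?_⟩
  · rintro _ ⟨q, ⟨_, hq⟩, rfl⟩ hle
    exact hq (irrelevantIdeal_le_of_le_linearForms hle)
  · intro t ht havoid
    obtain ⟨k, hk⟩ := hkill (degreeOne V ⟨t, ht⟩) fun q hq htq =>
      by_contra fun hcon => havoid _ ⟨q, ⟨hq, hcon⟩, rfl⟩ ⟨⟨t, ht⟩, htq, rfl⟩
    exact isFilterRegular_of_pow_mul_mem hV hone (t := ⟨t, ht⟩) hk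

end FilterRegular

/-! ### Zariski's theorem on pencils -/

section PurelyTranscendental

variable {F L ι : Type*} [Field F] [Field L] [Algebra F L] {T : ι → L} {w : L}

open scoped IntermediateField.algebraAdjoinAdjoin in
lemma exists_aeval_eq_of_isIntegral_adjoin (hT : AlgebraicIndependent F T)
    (hw : w ∈ IntermediateField.adjoin F (Set.range T))
    (hint : IsIntegral (Algebra.adjoin F (Set.range T)) w) :
    ∃ p : MvPolynomial ι F, aeval T p = w := by
  have : IsScalarTower (Algebra.adjoin F (Set.range T))
      (IntermediateField.adjoin F (Set.range T)) L := IsScalarTower.of_algebraMap_eq fun _ => rfl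
  have : IsIntegrallyClosed (Algebra.adjoin F (Set.range T)) :=
    IsIntegrallyClosed.of_equiv hT.aevalEquiv.toRingEquiv
  have hint' : IsIntegral (Algebra.adjoin F (Set.range T))
      (⟨w, hw⟩ : IntermediateField.adjoin F (Set.range T)) :=
    (isIntegral_algebraMap_iff (FaithfulSMul.algebraMap_injective _ _)).1 hint
  obtain ⟨x, hx⟩ := IsIntegrallyClosed.isIntegral_iff.1 hint'
  have hxw : (x : L) = w := congrArg Subtype.val hx
  rw [← hxw]
  exact (Algebra.adjoin_range_eq_range_aeval F T).le x.2

lemma exists_algebraMap_eq_of_mem_adjoin (hT : AlgebraicIndependent F T)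
    (hw : w ∈ IntermediateField.adjoin F (Set.range T)) (hint : IsIntegral F w) :
    ∃ a : F, algebraMap F L a = w := by
  obtain ⟨p, rfl⟩ := exists_aeval_eq_of_isIntegral_adjoin hT hw hint.tower_top
  rcases eq_or_ne p 0 with rfl | hp
  · exact ⟨0, by simp⟩
  have p_integral : IsIntegral F p :=
    (isIntegral_algHom_iff (aeval T : MvPolynomial ι F →ₐ[F] L) hT).1 hint
  obtain ⟨a, -, rfl⟩ := MvPolynomial.isUnit_iff_eq_C_of_isReduced.1 (p_integral.isUnit hp)
  exact ⟨a, (aeval_C T a).symm⟩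

variable {k : Type*} [Field k] [Algebra k F] [Algebra k L] [IsScalarTower k F L]

lemma isIntegral_adjoin_of_isIntegral_adjoin {S : Set L}
    (hw : IsIntegral (Algebra.adjoin k S) w) : IsIntegral (Algebra.adjoin F S) w := by
  have hle : Algebra.adjoin k S ≤ (Algebra.adjoin F S).restrictScalars k :=
    Algebra.adjoin_le Algebra.subset_adjoin
  obtain ⟨f, hf, hroot⟩ := hw
  exact ⟨f.map (Subalgebra.inclusion hle).toRingHom, hf.map _,
    (Polynomial.eval₂_map _ _ _).trans hroot⟩

attribute [local instance] MvPolynomial.algebraMvPolynomial in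
lemma isIntegral_mvPolynomial_of_isIntegral_aeval (hT : AlgebraicIndependent F T)
    {p : MvPolynomial ι F} (hp : IsIntegral (Algebra.adjoin k (Set.range T)) (aeval T p)) :
    IsIntegral (MvPolynomial ι k) p := by
  have hTk : AlgebraicIndependent k T := hT.restrictScalars (algebraMap k F).injective
  let e := hTk.aevalEquiv
  obtain ⟨f, hf, hroot⟩ := hp
  refine ⟨f.map (e.symm : _ →+* MvPolynomial ι k), hf.map _, hT ?_⟩
  have aeval_e_symm (x : Algebra.adjoin k (Set.range T)) :
      aeval T (algebraMap (MvPolynomial ι k) (MvPolynomial ι F) (e.symm x)) = (x : L) := by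
    change aeval T (MvPolynomial.map (algebraMap k F) (e.symm x)) = (x : L)
    rw [MvPolynomial.aeval_map_algebraMap, ← hTk.algebraMap_aevalEquiv]
    exact congrArg Subtype.val (e.apply_symm_apply x)
  rw [map_zero, ← hroot, Polynomial.eval₂_map]
  refine (Polynomial.hom_eval₂ f _ (aeval T : MvPolynomial ι F →ₐ[F] L).toRingHom p).trans ?_
  congr 1
  exact RingHom.ext aeval_e_symm

attribute [local instance] MvPolynomial.algebraMvPolynomial in
lemma exists_aeval_eq_of_isIntegral [IsIntegrallyClosedIn k F] (hT : AlgebraicIndependent F T)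
    (hw : w ∈ IntermediateField.adjoin F (Set.range T))
    (hint : IsIntegral (Algebra.adjoin k (Set.range T)) w) :
    ∃ p : MvPolynomial ι k, aeval T p = w := by
  obtain ⟨p, rfl⟩ :=
    exists_aeval_eq_of_isIntegral_adjoin hT hw (isIntegral_adjoin_of_isIntegral_adjoin hint)
  have coeff_integral := (MvPolynomial.isIntegral_iff_isIntegral_coeff).1
    (isIntegral_mvPolynomial_of_isIntegral_aeval hT hint)
  have hlift : p ∈ Set.range (MvPolynomial.map (algebraMap k F) : MvPolynomial ι k →+* _) := by
    rw [MvPolynomial.mem_range_map_iff_coeffs_subset]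
    intro c hc
    obtain ⟨n, -, rfl⟩ := MvPolynomial.mem_coeffs_iff.1 (Finset.mem_coe.1 hc)
    exact IsIntegrallyClosedIn.algebraMap_eq_of_integral (coeff_integral n)
  obtain ⟨p, rfl⟩ := hlift
  exact ⟨p, (MvPolynomial.aeval_map_algebraMap F T p).symm⟩

lemma mem_adjoin_of_isAlgebraic_adjoin [IsIntegrallyClosedIn k F] (hT : AlgebraicIndependent F T)
    (hw : w ∈ IntermediateField.adjoin F (Set.range T))
    (halg : IsAlgebraic (IntermediateField.adjoin k (Set.range T)) w) :
    w ∈ IntermediateField.adjoin k (Set.range T) := by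
  obtain ⟨y, hy, hyw⟩ := (IntermediateField.isAlgebraic_adjoin_iff.1 halg).exists_integral_multiple
  have hle : Algebra.adjoin k (Set.range T) ≤
      ((IntermediateField.adjoin F (Set.range T)).restrictScalars k).toSubalgebra :=
    Algebra.adjoin_le (IntermediateField.subset_adjoin F _)
  have hyF : (y : L) ∈ IntermediateField.adjoin F (Set.range T) := hle y.2
  obtain ⟨p, hp⟩ := exists_aeval_eq_of_isIntegral hT (mul_mem hyF hw) hyw
  have hp : aeval T p = (y : L) * w := hp
  have hy0 : (y : L) ≠ 0 := fun h => hy (Subtype.ext h)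
  rw [← mul_div_cancel_left₀ w hy0, ← hp]
  refine div_mem (IntermediateField.algebra_adjoin_le_adjoin _ _ ?_)
    (IntermediateField.algebra_adjoin_le_adjoin _ _ y.2)
  rw [Algebra.adjoin_range_eq_range_aeval]
  exact ⟨p, rfl⟩

end PurelyTranscendental

section ZariskiPencil

variable {K L : Type*} [Field K] [Field L] [Algebra K L] {w s u : L}

lemma isIntegrallyClosedIn_of_forall_mem {F : IntermediateField K L}
    (h : ∀ w : L, IsAlgebraic F w → w ∈ F) : IsIntegrallyClosedIn F L :=
  isIntegrallyClosedIn_iff.2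
    ⟨(algebraMap F L).injective, fun {w} hw => ⟨⟨w, h w hw.isAlgebraic⟩, rfl⟩⟩

lemma isAlgebraic_of_le {F E : IntermediateField K L} (h : F ≤ E) (hw : IsAlgebraic F w) :
    IsAlgebraic E w := by
  obtain ⟨f, hf, hroot⟩ := hw
  refine ⟨f.map (IntermediateField.inclusion h).toRingHom,
    (Polynomial.map_ne_zero_iff (IntermediateField.inclusion h).injective).2 hf, ?_⟩
  rw [Polynomial.aeval_def, Polynomial.eval₂_map]
  exact hroot

lemma mem_adjoin_simple_of_mem_adjoin_sumElim {F ι : Type*} [Field F] [Algebra K F] [Algebra F L]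
    [IsScalarTower K F L] [IsIntegrallyClosedIn K F] {z : ι → L}
    (hind : AlgebraicIndependent F (Sum.elim z fun _ : Unit => u)) (hw : IsAlgebraic K⟮u⟯ w)
    (hwF : w ∈ IntermediateField.adjoin F (Set.range (Sum.elim z fun _ : Unit => u))) :
    w ∈ K⟮u⟯ := by
  have range_eq : Set.range (Sum.elim z fun _ : Unit => u) = {u} ∪ Set.range z := by
    rw [Set.Sum.elim_range, Set.range_const, Set.union_comm]
  have hwK : w ∈ IntermediateField.adjoin K ({u} ∪ Set.range z) := by
    rw [← range_eq]
    refine mem_adjoin_of_isAlgebraic_adjoin hind hwF (isAlgebraic_of_le ?_ hw)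
    exact IntermediateField.adjoin.mono _ _ _ (range_eq ▸ Set.subset_union_left)
  rw [← IntermediateField.adjoin_adjoin_left, IntermediateField.mem_restrictScalars] at hwK
  have hz := (AlgebraicIndependent.sumElim_iff.1
    (hind.restrictScalars (algebraMap K F).injective)).2
  rw [← IntermediateField.algebraicIndependent_adjoin_iff, Set.range_const] at hz
  obtain ⟨a, rfl⟩ := exists_algebraMap_eq_of_mem_adjoin hz hwK hw.isIntegral
  exact a.2

lemma adjoin_union_le_adjoin (F : IntermediateField K L) {A B S : Set L}
    (h : A ⊆ IntermediateField.adjoin F B) (hS : S ⊆ F) :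
    IntermediateField.adjoin K (A ∪ S) ≤
      (IntermediateField.adjoin F B).restrictScalars K := by
  rw [IntermediateField.adjoin_le_iff]
  exact Set.union_subset h fun x hx =>
    (IntermediateField.adjoin F B).algebraMap_mem (⟨x, hS hx⟩ : F)

lemma mem_adjoin_simple_of_mem_adjoin_algebraicClosure {ι : Type*} {z : ι → L}
    [IsIntegrallyClosedIn K L]
    (hind : AlgebraicIndependent K
      (Sum.elim (Sum.elim z fun _ : Unit => u) fun _ : Unit => s))
    (hw : IsAlgebraic K⟮u⟯ w)
    (hwG : w ∈ IntermediateField.adjoin (IntermediateField.adjoin K (Set.range z ∪ {s, u}))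
      (algebraicClosure K⟮s⟯ L : Set L)) :
    w ∈ K⟮u⟯ := by
  have hind' := (AlgebraicIndependent.sumElim_iff.1 hind).2
  rw [← IntermediateField.algebraicIndependent_adjoin_iff, Set.range_const] at hind'
  set F := (algebraicClosure K⟮s⟯ L).restrictScalars K
  have hs : s ∈ F :=
    (algebraicClosure K⟮s⟯ L).algebraMap_mem (IntermediateField.AdjoinSimple.gen K s)
  have : IsIntegrallyClosedIn K F := by
    refine isIntegrallyClosedIn_iff.2 ⟨(algebraMap K _).injective, fun {b} hb => ?_⟩
    obtain ⟨a, ha⟩ := IsIntegrallyClosedIn.algebraMap_eq_of_integral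
      (hb.map (IsScalarTower.toAlgHom K F L))
    exact ⟨a, Subtype.ext ha⟩
  have hindF : AlgebraicIndependent F (Sum.elim z fun _ : Unit => u) := hind'.algebraicClosure
  refine mem_adjoin_simple_of_mem_adjoin_sumElim hindF hw ?_
  rw [← IntermediateField.mem_restrictScalars K, IntermediateField.adjoin_adjoin_left] at hwG
  refine adjoin_union_le_adjoin F ?_ (fun x hx => hx) hwG
  rintro x (⟨i, rfl⟩ | rfl | rfl)
  · exact IntermediateField.subset_adjoin _ _ ⟨Sum.inl i, rfl⟩
  · exact IntermediateField.algebraMap_mem _ (⟨x, hs⟩ : F)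
  · exact IntermediateField.subset_adjoin _ _ ⟨Sum.inr (), rfl⟩

lemma adjoin_union_pair_eq (S : Set L) (l₁ l₂ : L) {a b : K} (hab : a ≠ b) :
    IntermediateField.adjoin K (S ∪ {l₁ + algebraMap K L a * l₂, l₁ + algebraMap K L b * l₂}) =
      IntermediateField.adjoin K (S ∪ {l₁, l₂}) := by
  apply le_antisymm
  · set E := IntermediateField.adjoin K (S ∪ {l₁, l₂})
    have hE : S ∪ {l₁, l₂} ⊆ E := IntermediateField.subset_adjoin K _
    have combination_mem (c : K) : l₁ + algebraMap K L c * l₂ ∈ E :=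
      add_mem (hE (by simp)) (mul_mem (E.algebraMap_mem c) (hE (by simp)))
    rw [IntermediateField.adjoin_le_iff]
    rintro x (hx | rfl | rfl)
    exacts [hE (Or.inl hx), combination_mem a, combination_mem b]
  · set s := l₁ + algebraMap K L a * l₂ with hs
    set u := l₁ + algebraMap K L b * l₂ with hu
    set E := IntermediateField.adjoin K (S ∪ {s, u})
    have hE : S ∪ {s, u} ⊆ E := IntermediateField.subset_adjoin K _
    have hab' : algebraMap K L a - algebraMap K L b ≠ 0 := by
      rwa [← map_sub, ne_eq, map_eq_zero, sub_eq_zero]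
    have hl₂ : l₂ ∈ E := by
      rw [show l₂ = (s - u) / (algebraMap K L a - algebraMap K L b) by
        rw [hs, hu]
        field_simp
        ring]
      exact div_mem (sub_mem (hE (by simp)) (hE (by simp)))
        (sub_mem (E.algebraMap_mem a) (E.algebraMap_mem b))
    have hl₁ : l₁ ∈ E := by
      rw [show l₁ = s - algebraMap K L a * l₂ by rw [hs]; ring]
      exact sub_mem (hE (by simp)) (mul_mem (E.algebraMap_mem a) hl₂)
    rw [IntermediateField.adjoin_le_iff]
    rintro x (hx | rfl | rfl)
    exacts [hE (Or.inl hx), hl₁, hl₂]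

lemma algebraicIndependent_sumElim_of_isAlgebraic {m : ℕ} {z : Fin m → L}
    [halg : Algebra.IsAlgebraic (IntermediateField.adjoin K (Set.range z ∪ {s, u})) L]
    (htr : ((m + 2 : ℕ) : Cardinal) ≤ Algebra.trdeg K L) :
    AlgebraicIndependent K (Sum.elim (Sum.elim z fun _ : Unit => u) fun _ : Unit => s) := by
  set T := Sum.elim (Sum.elim z fun _ : Unit => u) fun _ : Unit => s
  have range_T : Set.range T = Set.range z ∪ {s, u} := by
    rw [Set.Sum.elim_range, Set.Sum.elim_range, Set.range_const, Set.range_const, Set.union_assoc,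
      Set.singleton_union, Set.pair_comm]
  have : Algebra.IsAlgebraic (Algebra.adjoin K (Set.range T)) L := by
    rwa [← IntermediateField.isAlgebraic_adjoin_iff_top, range_T]
  refine (Algebra.IsAlgebraic.isTranscendenceBasis_of_lift_le_trdeg_of_finite K T ?_).1
  refine le_trans (le_of_eq ?_) (Cardinal.lift_le.2 htr)
  norm_num [add_assoc]

/-- Zariski's argument for Bertini's theorem: `L` has only finitely many subfields containing
`K(z, l₁, l₂)`, while for `s = l₁ + a l₂` and `u = l₁ + b l₂` with `a ≠ b` the algebraic closures of
`K(s)` and `K(u)` cannot generate the same one unless `K(u)` is algebraically closed in `L`. -/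
lemma finite_setOf_not_isIntegrallyClosedIn_adjoin_simple {m : ℕ} {l₁ l₂ : L} {z : Fin m → L}
    [IsIntegrallyClosedIn K L]
    [FiniteDimensional (IntermediateField.adjoin K (Set.range z ∪ {l₁, l₂})) L]
    [Algebra.IsSeparable (IntermediateField.adjoin K (Set.range z ∪ {l₁, l₂})) L]
    (htr : ((m + 2 : ℕ) : Cardinal) ≤ Algebra.trdeg K L) :
    {a : K | ¬ IsIntegrallyClosedIn K⟮l₁ + algebraMap K L a * l₂⟯ L}.Finite := by
  set G := IntermediateField.adjoin K (Set.range z ∪ {l₁, l₂}) with hG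
  have : Finite (IntermediateField G L) :=
    Field.finite_intermediateField_of_exists_primitive_element G L
      (Field.exists_primitive_element G L)
  refine Set.Finite.of_injOn (f := fun a : K => IntermediateField.adjoin G
    (algebraicClosure K⟮l₁ + algebraMap K L a * l₂⟯ L : Set L)) (t := Set.univ)
    (fun _ _ => Set.mem_univ _) ?_ Set.finite_univ
  intro a ha b _ hadjoin
  by_contra hab
  refine ha (isIntegrallyClosedIn_of_forall_mem fun w hw => ?_)
  have hGab := adjoin_union_pair_eq (Set.range z) l₁ l₂ (Ne.symm hab)
  have : Algebra.IsAlgebraic (IntermediateField.adjoin K (Set.range z ∪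
      {l₁ + algebraMap K L b * l₂, l₁ + algebraMap K L a * l₂})) L := by
    rw [hGab]
    infer_instance
  refine mem_adjoin_simple_of_mem_adjoin_algebraicClosure
    (algebraicIndependent_sumElim_of_isAlgebraic (z := z) (s := l₁ + algebraMap K L b * l₂)
      (u := l₁ + algebraMap K L a * l₂) htr) hw ?_
  rw [hGab, ← hG]
  dsimp only at hadjoin
  rw [← hadjoin]
  exact IntermediateField.subset_adjoin _ _ (mem_algebraicClosure_iff.2 hw)

end ZariskiPencil

section Differentials

variable {K L : Type*} [Field K] [Field L] [Algebra K L] {V : Submodule K L}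

lemma exists_mem_forall_notMem [Infinite K] {B : Set (Submodule K L)} (hB : B.Finite)
    (h : ∀ W ∈ B, ¬ V ≤ W) : ∃ v ∈ V, ∀ W ∈ B, v ∉ W := by
  classical
  have hne := Subspace.biUnion_ne_univ_of_top_notMem
    (s := hB.toFinset.image (Submodule.comap V.subtype)) fun htop => by
      obtain ⟨W, hW, hWtop⟩ := Finset.mem_image.1 htop
      exact h W (hB.mem_toFinset.1 hW) (Submodule.comap_subtype_eq_top.1 hWtop)
  obtain ⟨v, hv⟩ := (Set.ne_univ_iff_exists_notMem _).1 hne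
  refine ⟨v, v.2, fun W hW hvW => hv (Set.mem_iUnion₂.2 ⟨W.comap V.subtype, ?_, hvW⟩)⟩
  exact Finset.mem_image_of_mem _ (hB.mem_toFinset.2 hW)

lemma finite_setOf_add_mul_mem {W : Submodule K L} {l₁ l₂ : L} (hl₂ : l₂ ∉ W) :
    {a : K | l₁ + algebraMap K L a * l₂ ∈ W}.Finite := by
  refine Set.Subsingleton.finite fun a (ha : _ ∈ W) b (hb : _ ∈ W) => ?_
  by_contra hab
  have hdiff := W.sub_mem ha hb
  rw [add_sub_add_left_eq_sub, ← Algebra.smul_def, ← Algebra.smul_def, ← sub_smul] at hdiff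
  exact hl₂ ((W.smul_mem_iff (sub_ne_zero.2 hab)).1 hdiff)

lemma IsBirationalSystem.essFiniteType (hV : IsBirationalSystem V) : Algebra.EssFiniteType K L := by
  rw [← IntermediateField.fg_top_iff]
  obtain ⟨s, rfl⟩ := hV.fg
  refine ⟨s, ?_⟩
  rw [eq_top_iff, ← hV.adjoin_eq_top, IntermediateField.adjoin_le_iff]
  exact Submodule.span_le (p := Subalgebra.toSubmodule
    (IntermediateField.adjoin K (s : Set L)).toSubalgebra).2 (IntermediateField.subset_adjoin K _)

lemma D_mem_span_D_image {s : Set L} {x : L} (hx : x ∈ IntermediateField.adjoin K s) :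
    KaehlerDifferential.D K L x ∈ Submodule.span L (KaehlerDifferential.D K L '' s) := by
  induction hx using IntermediateField.adjoin_induction with
  | mem x hx => exact Submodule.subset_span ⟨x, hx, rfl⟩
  | algebraMap x => simp
  | add x y _ _ hx hy => simpa using add_mem hx hy
  | inv x _ hx =>
    rw [Derivation.leibniz_inv]
    exact Submodule.smul_mem _ _ hx
  | mul x y _ _ hx hy =>
    rw [Derivation.leibniz]
    exact add_mem (Submodule.smul_mem _ _ hy) (Submodule.smul_mem _ _ hx)

lemma span_D_image_eq_top {s : Set L} (hs : IntermediateField.adjoin K s = ⊤) :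
    Submodule.span L (KaehlerDifferential.D K L '' s) = ⊤ := by
  rw [eq_top_iff, ← KaehlerDifferential.span_range_derivation, Submodule.span_le]
  rintro _ ⟨x, rfl⟩
  exact D_mem_span_D_image (hs ▸ IntermediateField.mem_top)

lemma subsingleton_kaehlerDifferential_of_span_eq_top {s : Set L}
    (hs : Submodule.span L (KaehlerDifferential.D K L '' s) = ⊤) {G : IntermediateField K L}
    (hG : s ⊆ G) : Subsingleton Ω[L⁄G] := by
  have map_eq_zero : KaehlerDifferential.map K G L L = 0 := by
    rw [← LinearMap.ker_eq_top, eq_top_iff, ← hs, Submodule.span_le]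
    rintro _ ⟨x, hx, rfl⟩
    rw [SetLike.mem_coe, LinearMap.mem_ker, KaehlerDifferential.map_D]
    exact Derivation.map_algebraMap (KaehlerDifferential.D G L) (⟨x, hG hx⟩ : G)
  refine subsingleton_of_forall_eq 0 fun b => ?_
  obtain ⟨a, rfl⟩ := KaehlerDifferential.map_surjective K G L b
  rw [map_eq_zero, LinearMap.zero_apply]

lemma finiteDimensional_isSeparable_of_span_D_eq_top [Algebra.EssFiniteType K L] {s : Set L}
    (hs : Submodule.span L (KaehlerDifferential.D K L '' s) = ⊤) {G : IntermediateField K L}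
    (hG : s ⊆ G) : FiniteDimensional G L ∧ Algebra.IsSeparable G L := by
  have : Algebra.EssFiniteType G L := Algebra.EssFiniteType.of_comp K G L
  have : Algebra.FormallyUnramified G L := ⟨subsingleton_kaehlerDifferential_of_span_eq_top hs hG⟩
  exact ⟨Algebra.FormallyUnramified.finite_of_free G L,
    (Algebra.FormallyUnramified.iff_isSeparable G L).1 this⟩

lemma trdeg_le_mk_of_span_D_eq_top [Algebra.EssFiniteType K L] {s : Set L}
    (hs : Submodule.span L (KaehlerDifferential.D K L '' s) = ⊤) :
    Algebra.trdeg K L ≤ Cardinal.mk s := by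
  have := (finiteDimensional_isSeparable_of_span_D_eq_top hs
    (IntermediateField.subset_adjoin K s)).1
  have : Algebra.IsAlgebraic (Algebra.adjoin K s) L :=
    IntermediateField.isAlgebraic_adjoin_iff_top.1 inferInstance
  exact Algebra.IsAlgebraic.trdeg_le_cardinalMk K s

lemma finrank_kaehlerDifferential_adjoin_simple_add_one_le [Algebra.EssFiniteType K L] {t : L}
    (ht : KaehlerDifferential.D K L t ≠ 0) :
    Module.finrank L Ω[L⁄K⟮t⟯] + 1 ≤ Module.finrank L Ω[L⁄K] := by
  let restriction := KaehlerDifferential.map K K⟮t⟯ L L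
  have hsurj : Function.Surjective restriction := KaehlerDifferential.map_surjective K K⟮t⟯ L
  have hrank := restriction.finrank_range_add_finrank_ker
  rw [LinearMap.range_eq_top.2 hsurj, finrank_top] at hrank
  have hker : 0 < Module.finrank L (LinearMap.ker restriction) := by
    rw [Module.finrank_pos_iff_exists_ne_zero]
    refine ⟨⟨KaehlerDifferential.D K L t, ?_⟩, fun h => ht (congrArg Subtype.val h)⟩
    rw [LinearMap.mem_ker, KaehlerDifferential.map_D]
    exact Derivation.map_algebraMap (KaehlerDifferential.D K⟮t⟯ L)
      (IntermediateField.AdjoinSimple.gen K t)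
  omega

lemma trdeg_adjoin_simple_le_one (t : L) : Algebra.trdeg K K⟮t⟯ ≤ 1 := by
  set t' := IntermediateField.AdjoinSimple.gen K t
  have adjoin_gen : K⟮t'⟯ = ⊤ :=
    IntermediateField.lift_injective K⟮t⟯
      ((IntermediateField.lift_adjoin_simple K _ _).trans (IntermediateField.lift_top K _).symm)
  have : Algebra.IsAlgebraic (Algebra.adjoin K {t'}) K⟮t⟯ := by
    rw [← IntermediateField.isAlgebraic_adjoin_iff_top, adjoin_gen]
    exact ⟨fun x => isAlgebraic_algebraMap (⟨x, trivial⟩ : (⊤ : IntermediateField K K⟮t⟯))⟩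
  simpa using Algebra.IsAlgebraic.trdeg_le_cardinalMk K {t'}

lemma le_trdeg_adjoin_simple (t : L) {d : ℕ} (h : ((d + 1 : ℕ) : Cardinal) ≤ Algebra.trdeg K L) :
    (d : Cardinal) ≤ Algebra.trdeg K⟮t⟯ L := by
  rw [← trdeg_add_eq K K⟮t⟯ (A := L), Nat.cast_add_one] at h
  exact Cardinal.add_one_le_add_one_iff.1
    ((h.trans (add_le_add_left (trdeg_adjoin_simple_le_one t) _)).trans_eq (add_comm _ _))

lemma exists_linearIndepOn_D_pair [Infinite K] [Algebra.EssFiniteType K L]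
    (hV : Submodule.span L (KaehlerDifferential.D K L '' (V : Set L)) = ⊤)
    (htr : 2 ≤ Algebra.trdeg K L) {B : Set (Submodule K L)} (hB : B.Finite)
    (hBV : ∀ W ∈ B, ¬ V ≤ W) :
    ∃ l₁ ∈ V, ∃ l₂ ∈ V, l₁ ≠ l₂ ∧ (∀ W ∈ B, l₂ ∉ W) ∧
      LinearIndepOn L (KaehlerDifferential.D K L) {l₁, l₂} := by
  have not_le_comap {s : Set L} (hs : Cardinal.mk s < 2) :
      ¬ V ≤ ((Submodule.span L (KaehlerDifferential.D K L '' s)).restrictScalars K).comap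
        (KaehlerDifferential.D K L).toLinearMap := fun hle => by
    have hspan : Submodule.span L (KaehlerDifferential.D K L '' s) = ⊤ := by
      rw [eq_top_iff, ← hV, Submodule.span_le]
      rintro _ ⟨x, hx, rfl⟩
      exact hle hx
    exact hs.not_ge (htr.trans (trdeg_le_mk_of_span_D_eq_top hspan))
  obtain ⟨l₁, hl₁V, hl₁⟩ := exists_mem_forall_notMem (Set.finite_singleton _)
    (by rintro W rfl; exact not_le_comap (s := ∅) (by simp))
  obtain ⟨l₂, hl₂V, hl₂⟩ := exists_mem_forall_notMem (hB.insert _) (by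
    rintro W (rfl | hW)
    exacts [not_le_comap (s := {l₁}) (by simp), hBV W hW])
  have hindep : LinearIndepOn L (KaehlerDifferential.D K L) {l₁} :=
    .singleton fun h => hl₁ _ rfl (by simp [h])
  have hDl₂ : KaehlerDifferential.D K L l₂ ∉
      Submodule.span L (KaehlerDifferential.D K L '' {l₁}) := hl₂ _ (Set.mem_insert _ _)
  refine ⟨l₁, hl₁V, l₂, hl₂V, ?_, fun W hW => hl₂ W (Set.mem_insert_of_mem _ hW), ?_⟩
  · rintro rfl
    exact hDl₂ (Submodule.subset_span ⟨l₁, rfl, rfl⟩)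
  · rw [Set.pair_comm]
    exact hindep.insert hDl₂

lemma exists_fin_range_union_pair_span_D_eq_top [Algebra.EssFiniteType K L] {S : Set L}
    (hS : Submodule.span L (KaehlerDifferential.D K L '' S) = ⊤) {l₁ l₂ : L} (hl₁ : l₁ ∈ S)
    (hl₂ : l₂ ∈ S) (hne : l₁ ≠ l₂)
    (hindep : LinearIndepOn L (KaehlerDifferential.D K L) {l₁, l₂}) :
    ∃ (m : ℕ) (z : Fin m → L), m + 2 ≤ Module.finrank L Ω[L⁄K] ∧
      Submodule.span L (KaehlerDifferential.D K L '' (Set.range z ∪ {l₁, l₂})) = ⊤ := by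
  obtain ⟨b, -, hpair, hSb, hb⟩ := exists_linearIndepOn_extension hindep
    (Set.insert_subset hl₁ (Set.singleton_subset_iff.2 hl₂))
  have hbfin : Finite b := LinearIndependent.finite hb
  have hfin : (b \ {l₁, l₂}).Finite := (Set.toFinite b).subset Set.sdiff_subset
  obtain ⟨m, z, hz_inj, hz⟩ := hfin.fin_param
  refine ⟨m, z, ?_, ?_⟩
  · have hm : (b \ {l₁, l₂}).ncard = m := by
      rw [← hz, Set.ncard_range_of_injective hz_inj, Nat.card_fin]
    have hcard := Set.ncard_sdiff_add_ncard_of_subset hpair (Set.toFinite b)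
    rw [hm, Set.ncard_pair hne] at hcard
    have := Fintype.ofFinite b
    rw [hcard, ← Nat.card_coe_set_eq, Nat.card_eq_fintype_card]
    exact LinearIndependent.fintype_card_le_finrank hb
  · rw [hz, Set.sdiff_union_of_subset hpair, eq_top_iff, ← hS, Submodule.span_le]
    exact hSb

lemma IsBirationalSystem.exists_isIntegrallyClosedIn_adjoin_simple [Infinite K]
    (hV : IsBirationalSystem V) {d : ℕ} (hΩ : Module.finrank L Ω[L⁄K] ≤ d + 2)
    (htr : ((d + 2 : ℕ) : Cardinal) ≤ Algebra.trdeg K L) {B : Set (Submodule K L)}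
    (hB : B.Finite) (hBV : ∀ W ∈ B, ¬ V ≤ W) :
    ∃ t ∈ V, (∀ W ∈ B, t ∉ W) ∧ KaehlerDifferential.D K L t ≠ 0 ∧
      IsIntegrallyClosedIn K⟮t⟯ L := by
  have := hV.closed
  have := hV.essFiniteType
  have hspan := span_D_image_eq_top hV.adjoin_eq_top
  have two_le : 2 ≤ Algebra.trdeg K L := le_trans (by exact_mod_cast Nat.le_add_left 2 d) htr
  obtain ⟨l₁, hl₁, l₂, hl₂, hne, hl₂B, hindep⟩ := exists_linearIndepOn_D_pair hspan two_le hB hBV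
  obtain ⟨m, z, hm, hz⟩ := exists_fin_range_union_pair_span_D_eq_top hspan hl₁ hl₂ hne hindep
  obtain ⟨hfinite, hseparable⟩ := finiteDimensional_isSeparable_of_span_D_eq_top hz
    (IntermediateField.subset_adjoin K _)
  have not_closed_finite := finite_setOf_not_isIntegrallyClosedIn_adjoin_simple (K := K)
    (z := z) (l₁ := l₁) (l₂ := l₂) (le_trans (by exact_mod_cast hm.trans hΩ) htr)
  let kerD := LinearMap.ker (KaehlerDifferential.D K L).toLinearMap
  have hl₂_kerD : l₂ ∉ kerD := hindep.ne_zero (i := l₂) (by simp)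
  obtain ⟨a, ha⟩ := ((not_closed_finite.union (hB.biUnion fun W hW =>
    finite_setOf_add_mul_mem (l₁ := l₁) (hl₂B W hW))).union
      (finite_setOf_add_mul_mem (l₁ := l₁) hl₂_kerD)).exists_notMem
  simp only [Set.mem_union, Set.mem_ofPred_eq, Set.mem_iUnion, not_or, not_exists, not_not] at ha
  obtain ⟨⟨hclosed, haB⟩, ha_kerD⟩ := ha
  refine ⟨l₁ + algebraMap K L a * l₂, ?_, haB, ha_kerD, hclosed⟩
  rw [← Algebra.smul_def]
  exact add_mem hl₁ (V.smul_mem _ hl₂)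

end Differentials

/-! ### Projective models and their Hilbert functions -/

section EventualDifference

lemma fwdDiff_iter_eventuallyEq {f g : ℕ → ℤ} (h : f =ᶠ[Filter.atTop] g) (d : ℕ) :
    (fwdDiff 1)^[d] f =ᶠ[Filter.atTop] (fwdDiff 1)^[d] g := by
  induction d generalizing f g with
  | zero => exact h
  | succ d ih =>
    simp only [Function.iterate_succ_apply]
    refine ih ?_
    filter_upwards [h, (Filter.tendsto_add_atTop_nat 1).eventually h] with n hn hn'
    rw [fwdDiff, fwdDiff, hn, hn']

lemma eventually_atTop_of_eventually_succ {p : ℕ → Prop}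
    (h : ∀ᶠ n in Filter.atTop, p (n + 1)) : ∀ᶠ n in Filter.atTop, p n := by
  rw [← Filter.map_add_atTop_eq_nat 1]
  exact h

end EventualDifference

section ProjectiveModel

variable {K L : Type*} [Field K] [Field L] [Algebra K L] {V V₀ : Submodule K L} {t : L}

/-- The Hilbert function of the homogeneous coordinate ring `⨁ₙ Vⁿ`. -/
def hilbertFn (V : Submodule K L) (n : ℕ) : ℕ := Module.finrank K (V ^ n : Submodule K L)

/-- The Hilbert function of the saturation `⨁ₙ H⁰(X, 𝒪_X(n))` of `⨁ₙ Vⁿ`. -/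
def satHilbertFn (V : Submodule K L) (n : ℕ) : ℕ := Module.finrank K (satPow V n)

lemma hilbertFn_zero (V : Submodule K L) : hilbertFn V 0 = 1 := by
  rw [hilbertFn, pow_zero, Submodule.one_eq_span]
  exact finrank_span_singleton one_ne_zero

lemma hilbertFn_one (V : Submodule K L) : hilbertFn V 1 = Module.finrank K V := by
  rw [hilbertFn, pow_one]

/-- The linear system `V` presents `L` as the function field of a non-degenerate variety of
dimension `d`, codimension `c` and degree `e`. The dimension is encoded by `d ≤ trdeg` together
with `dim Ω ≤ d`, which also makes `L` separably generated over `K`; the degree is the eventual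
value of the `d`-th difference of the Hilbert function. -/
structure IsProjectiveModel (V : Submodule K L) (d c e : ℕ) : Prop where
  isBirationalSystem : IsBirationalSystem V
  le_trdeg : (d : Cardinal) ≤ Algebra.trdeg K L
  finrank_kaehler_le : Module.finrank L Ω[L⁄K] ≤ d
  finrank_eq : Module.finrank K V = d + 1 + c
  degree : (fwdDiff 1)^[d] (fun n => (hilbertFn V n : ℤ)) =ᶠ[Filter.atTop] fun _ => (e : ℤ)

lemma genericSection_pow (t : L) (V : Submodule K L) (n : ℕ) :
    genericSection t V ^ n = genericSection t (V ^ n) := by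
  have hpow : V ^ n = Submodule.span K ((V : Set L) ^ n) := by
    rw [← Submodule.span_pow, Submodule.span_eq]
  rw [hpow, Submodule.span_pow, genericSection, Submodule.span_span_of_tower]

lemma genericSection_mul (t : L) (V W : Submodule K L) :
    genericSection t V * genericSection t W = genericSection t (V * W) := by
  have hmul : V * W = Submodule.span K ((V : Set L) * (W : Set L)) := by
    rw [← Submodule.span_mul_span, Submodule.span_eq, Submodule.span_eq]
  rw [hmul, Submodule.span_mul_span, genericSection, Submodule.span_span_of_tower]

lemma genericSection_mono : Monotone (genericSection t : Submodule K L → _) :=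
  fun _ _ h => Submodule.span_mono h

lemma mem_genericSection {x : L} (h : x ∈ V) : x ∈ genericSection t V :=
  Submodule.subset_span h

lemma genericSection_satPow_le (t : L) (V : Submodule K L) (n : ℕ) :
    genericSection t (satPow V n) ≤ satPow (genericSection t V) n := by
  refine Submodule.span_le.2 ?_
  rintro b ⟨k, hk⟩
  refine ⟨k, fun x hx => ?_⟩
  rw [genericSection_pow] at hx ⊢
  induction hx using Submodule.span_induction with
  | mem x hx => exact mem_genericSection (hk x hx)
  | zero => simp only [zero_mul, zero_mem]
  | add x y _ _ hx hy => rw [add_mul]; exact add_mem hx hy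
  | smul a x _ hx => rw [smul_mul_assoc]; exact Submodule.smul_mem _ _ hx

lemma genericSection_fg (t : L) (h : V.FG) : (genericSection t V).FG := by
  obtain ⟨s, rfl⟩ := h
  rw [genericSection, Submodule.span_span_of_tower]
  exact ⟨s, rfl⟩

protected lemma IsBirationalSystem.genericSection (hV : IsBirationalSystem V)
    (hclosed : IsIntegrallyClosedIn K⟮t⟯ L) : IsBirationalSystem (genericSection t V) where
  closed := hclosed
  one_mem := mem_genericSection hV.one_mem
  fg := genericSection_fg t hV.fg
  adjoin_eq_top := by
    have hle : IntermediateField.adjoin K (V : Set L) ≤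
        (IntermediateField.adjoin K⟮t⟯ (genericSection t V : Set L)).restrictScalars K := by
      rw [IntermediateField.adjoin_le_iff]
      intro y hy
      rw [SetLike.mem_coe, IntermediateField.mem_restrictScalars]
      exact IntermediateField.subset_adjoin _ _ (mem_genericSection hy)
    rw [hV.adjoin_eq_top] at hle
    refine eq_top_iff.2 fun x _ => ?_
    exact (IntermediateField.mem_restrictScalars K).1 (hle IntermediateField.mem_top)

lemma IsBirationalSystem.transcendental (hV : IsBirationalSystem V)
    (ht : t ∉ (1 : Submodule K L)) : Transcendental K t := by
  have := hV.closed
  exact fun h => ht <| Submodule.mem_one.2 <|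
    IsIntegrallyClosedIn.algebraMap_eq_of_integral h.isIntegral

/-- The subsystem `V₀` of `V` defines a projection of the variety of `V` that is an isomorphism
onto its image: the homogeneous coordinate rings agree in large degrees. -/
structure IsIsomorphicProjection (V₀ V : Submodule K L) : Prop where
  le : V₀ ≤ V
  one_mem : (1 : L) ∈ V₀
  eventually_pow_eq : ∀ᶠ n in Filter.atTop, V₀ ^ n = V ^ n

namespace IsIsomorphicProjection

lemma refl (hone : (1 : L) ∈ V) : IsIsomorphicProjection V V :=
  ⟨le_rfl, hone, .of_forall fun _ => rfl⟩

lemma isBirationalSystem (h : IsIsomorphicProjection V₀ V) (hV : IsBirationalSystem V) :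
    IsBirationalSystem V₀ where
  closed := hV.closed
  one_mem := h.one_mem
  fg := have := isNoetherian_of_fg_of_noetherian _ hV.fg; hV.fg.of_le h.le
  adjoin_eq_top := by
    obtain ⟨n, hn, hpos⟩ := (h.eventually_pow_eq.and (Filter.eventually_ge_atTop 1)).exists
    let A := (IntermediateField.adjoin K (V₀ : Set L)).toSubalgebra
    have hV₀A : V₀ ≤ Subalgebra.toSubmodule A := IntermediateField.subset_adjoin K _
    have hpow : V₀ ^ n ≤ Subalgebra.toSubmodule A := by
      refine (pow_le_pow_left' hV₀A n).trans_eq ?_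
      exact A.isIdempotentElem_toSubmodule.pow_eq (by omega)
    rw [eq_top_iff, ← hV.adjoin_eq_top, IntermediateField.adjoin_le_iff]
    intro x hx
    rw [← pow_one V] at hx
    exact hpow (hn ▸ pow_le_pow_of_one_mem hV.one_mem hpos hx)

lemma isFilterRegular (h : IsIsomorphicProjection V₀ V) (ht : IsFilterRegular V₀ t) :
    IsFilterRegular V t := by
  obtain ⟨n₀, hn⟩ := Filter.eventually_atTop.1 h.eventually_pow_eq
  obtain ⟨n₁, hreg⟩ := ht
  refine ⟨max n₀ n₁, fun n hn' => ?_⟩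
  rw [← hn n (by omega), ← hn (n + 1) (by omega)]
  exact hreg n (by omega)

protected lemma genericSection (h : IsIsomorphicProjection V₀ V) (t : L) :
    IsIsomorphicProjection (genericSection t V₀) (genericSection t V) where
  le := genericSection_mono h.le
  one_mem := mem_genericSection h.one_mem
  eventually_pow_eq := h.eventually_pow_eq.mono fun n hn => by
    rw [genericSection_pow, genericSection_pow, hn]

end IsIsomorphicProjection

/-- A non-constant `t ∈ V` such that the generic member of the pencil spanned by `1` and `t` cuts
the variety of `V` in a hyperplane section with the expected Hilbert function in large degrees. -/
structure IsPencilParam (V : Submodule K L) (t : L) : Prop where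
  mem : t ∈ V
  isFilterRegular : IsFilterRegular V t
  notMem_one : t ∉ (1 : Submodule K L)

namespace IsPencilParam

lemma isRegularFiltration (ht : IsPencilParam V t) (hV : IsBirationalSystem V) :
    IsRegularFiltration t (shiftedSatPow V) :=
  isRegularFiltration_shiftedSatPow hV ht.mem ht.isFilterRegular ht.notMem_one

lemma finrank_genericSection_satPow_add (ht : IsPencilParam V t) (hV : IsBirationalSystem V)
    (n : ℕ) :
    Module.finrank K⟮t⟯ (genericSection t (satPow V (n + 1))) + satHilbertFn V n =
      satHilbertFn V (n + 1) :=
  have hF := ht.isRegularFiltration hV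
  hF.finrank_genericSection_add (n := n + 1) (hV.transcendental ht.notMem_one)
    (hF.le_succ (n + 1)) (hF.mul_mem (n + 1)) le_rfl

lemma hilbertFn_genericSection_add (ht : IsPencilParam V t) (hV : IsBirationalSystem V) {n : ℕ}
    (hsat : satPow V n = V ^ n) :
    hilbertFn (genericSection t V) (n + 1) + hilbertFn V n = hilbertFn V (n + 1) := by
  have hdim := (ht.isRegularFiltration hV).finrank_genericSection_add (n := n + 1)
    (U := V ^ (n + 1)) (hV.transcendental ht.notMem_one)
    (by rw [shiftedSatPow, hsat]; exact pow_le_pow_of_one_mem hV.one_mem n.le_succ)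
    (fun f hf => by
      rw [shiftedSatPow, hsat] at hf
      rw [pow_succ']
      exact Submodule.mul_mem_mul ht.mem hf)
    (pow_le_satPow (n + 1))
  rw [shiftedSatPow, hsat] at hdim
  rw [hilbertFn, genericSection_pow]
  exact hdim

end IsPencilParam

namespace IsProjectiveModel

variable {d c e : ℕ}

lemma not_le_one (hV : IsProjectiveModel V (d + 1) c e) : ¬ V ≤ 1 := by
  intro hle
  have hbot : IntermediateField.adjoin K (V : Set L) = ⊥ := by
    rw [eq_bot_iff, IntermediateField.adjoin_le_iff]
    intro x hx
    obtain ⟨a, rfl⟩ := Submodule.mem_one.1 (hle hx)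
    exact IntermediateField.algebraMap_mem _ a
  rw [hV.isBirationalSystem.adjoin_eq_top] at hbot
  have : Algebra.IsAlgebraic K L := ⟨fun x => by
    obtain ⟨a, rfl⟩ := IntermediateField.mem_bot.1 (hbot ▸ IntermediateField.mem_top (x := x))
    exact isAlgebraic_algebraMap a⟩
  have htr := hV.le_trdeg
  rw [trdeg_eq_zero] at htr
  norm_cast at htr

lemma exists_isPencilParam [Infinite K] (hV : IsProjectiveModel V (d + 1) c e)
    (h₀ : IsIsomorphicProjection V₀ V) : ∃ t ∈ V₀, IsPencilParam V t := by
  have hV₀ := h₀.isBirationalSystem hV.isBirationalSystem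
  obtain ⟨B, hB, hBV, hreg⟩ := exists_finite_isFilterRegular hV₀.fg hV₀.one_mem
  have hV₀one : ¬ V₀ ≤ 1 := by
    intro hle
    obtain ⟨n, hn, hpos⟩ :=
      (h₀.eventually_pow_eq.and (Filter.eventually_ge_atTop 1)).exists
    refine hV.not_le_one ?_
    calc V = V ^ 1 := (pow_one V).symm
      _ ≤ V ^ n := pow_le_pow_of_one_mem hV.isBirationalSystem.one_mem hpos
      _ = V₀ ^ n := hn.symm
      _ ≤ 1 := (pow_le_pow_left' hle n).trans_eq (one_pow n)
  obtain ⟨t, ht, htB⟩ := exists_mem_forall_notMem (hB.insert 1)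
    (Set.forall_mem_insert.2 ⟨hV₀one, hBV⟩)
  rw [Set.forall_mem_insert] at htB
  exact ⟨t, ht, h₀.le ht, h₀.isFilterRegular (hreg t ht htB.2), htB.1⟩

protected lemma genericSection (hV : IsProjectiveModel V (d + 1) c e) (ht : IsPencilParam V t)
    (hD : KaehlerDifferential.D K L t ≠ 0) (hclosed : IsIntegrallyClosedIn K⟮t⟯ L) :
    IsProjectiveModel (genericSection t V) d c e where
  isBirationalSystem := hV.isBirationalSystem.genericSection hclosed
  le_trdeg := le_trdeg_adjoin_simple t hV.le_trdeg
  finrank_kaehler_le := by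
    have := hV.isBirationalSystem.essFiniteType
    have := finrank_kaehlerDifferential_adjoin_simple_add_one_le hD
    have := hV.finrank_kaehler_le
    omega
  finrank_eq := by
    have := ht.hilbertFn_genericSection_add hV.isBirationalSystem (n := 0)
      (by rw [hV.isBirationalSystem.satPow_zero, pow_zero])
    rw [zero_add, hilbertFn_one, hilbertFn_one, hilbertFn_zero, hV.finrank_eq] at this
    omega
  degree := by
    obtain ⟨n₁, hsat⟩ := ht.isFilterRegular.exists_satPow_eq_pow
      hV.isBirationalSystem.one_mem ht.mem
    refine eventually_atTop_of_eventually_succ ?_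
    have hdiff : (fun n => (hilbertFn (genericSection t V) (n + 1) : ℤ)) =ᶠ[Filter.atTop]
        fwdDiff 1 fun n => (hilbertFn V n : ℤ) := by
      filter_upwards [Filter.eventually_ge_atTop n₁] with n hn
      have := ht.hilbertFn_genericSection_add hV.isBirationalSystem (hsat n hn)
      rw [fwdDiff]
      omega
    filter_upwards [fwdDiff_iter_eventuallyEq hdiff d, hV.degree] with n hn hdeg
    rw [← fwdDiff_iter_comp_add 1 (fun n => (hilbertFn (genericSection t V) n : ℤ)), hn]
    exact hdeg

lemma exists_genericSection [Infinite K] (hV : IsProjectiveModel V (d + 2) c e)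
    (h₀ : IsIsomorphicProjection V₀ V) :
    ∃ t ∈ V₀, IsPencilParam V t ∧ IsProjectiveModel (genericSection t V) (d + 1) c e := by
  have hV₀ := h₀.isBirationalSystem hV.isBirationalSystem
  obtain ⟨B, hB, hBV, hreg⟩ := exists_finite_isFilterRegular hV₀.fg hV₀.one_mem
  obtain ⟨t, ht, htB, htD, hclosed⟩ := hV₀.exists_isIntegrallyClosedIn_adjoin_simple
    hV.finrank_kaehler_le hV.le_trdeg hB hBV
  have htV : IsPencilParam V t := by
    refine ⟨h₀.le ht, h₀.isFilterRegular (hreg t ht htB), fun h => htD ?_⟩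
    obtain ⟨a, rfl⟩ := Submodule.mem_one.1 h
    exact Derivation.map_algebraMap _ a
  exact ⟨t, ht, htV, hV.genericSection htV htD hclosed⟩

end IsProjectiveModel

end ProjectiveModel

/-! ### Varieties of minimal degree -/

section Lifting

variable {K L : Type*} [Field K] [Field L] [Algebra K L] {V V₀ : Submodule K L} {t : L}

instance [Infinite K] : Infinite K⟮t⟯ :=
  Infinite.of_injective (algebraMap K K⟮t⟯) (algebraMap K K⟮t⟯).injective

lemma span_singleton_sub_algebraMap_le (hone : (1 : L) ∈ V) (ht : t ∈ V) (τ : K) :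
    (K ∙ (t - algebraMap K L τ)) ≤ V := by
  rw [Submodule.span_singleton_le_iff_mem, Algebra.algebraMap_eq_smul_one]
  exact sub_mem ht (V.smul_mem τ hone)

lemma IsPencilParam.exists_satPow_le_sup [Infinite K] (ht : IsPencilParam V t)
    (hV : IsBirationalSystem V) {n : ℕ} {U : Submodule K L} (hU : U ≤ satPow V (n + 1))
    (hspan : genericSection t (satPow V (n + 1)) ≤ genericSection t U) :
    ∃ τ : K, satPow V (n + 1) ≤ U ⊔ (K ∙ (t - algebraMap K L τ)) * satPow V n :=
  ((ht.isRegularFiltration hV).eventually_le_sup_span_singleton_mul (n := n + 1)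
    (hV.transcendental ht.notMem_one) hU le_rfl fun _ hx => hspan (mem_genericSection hx)).exists

lemma IsPencilParam.satPow_succ_eq_pow [Infinite K] (ht : IsPencilParam V t)
    (hV : IsBirationalSystem V) {n : ℕ}
    (hspan : genericSection t (satPow V (n + 1)) ≤ genericSection t (V ^ (n + 1)))
    (hn : satPow V n = V ^ n) : satPow V (n + 1) = V ^ (n + 1) := by
  obtain ⟨τ, hτ⟩ := ht.exists_satPow_le_sup hV (pow_le_satPow (n + 1)) hspan
  refine le_antisymm (hτ.trans (sup_le le_rfl ?_)) (pow_le_satPow _)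
  rw [hn, pow_succ']
  exact mul_le_mul_left (span_singleton_sub_algebraMap_le hV.one_mem ht.mem τ) _

/-- The dimension of the `n`-th saturated power of `V` on the generic member of the pencil. -/
def sectionHilbertFn (V : Submodule K L) (t : L) (n : ℕ) : ℕ :=
  Module.finrank K⟮t⟯ (genericSection t (satPow V n))

namespace IsPencilParam

lemma finiteDimensional_genericSection_satPow (ht : IsPencilParam V t)
    (hV : IsBirationalSystem V) (n : ℕ) :
    FiniteDimensional K⟮t⟯ (genericSection t (satPow V n)) :=
  Module.Finite.iff_fg.2 (genericSection_fg t (satPow_fg hV ht.mem ht.isFilterRegular n))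

lemma sectionHilbertFn_succ_add (ht : IsPencilParam V t) (hV : IsBirationalSystem V) (n : ℕ) :
    sectionHilbertFn V t (n + 1) + satHilbertFn V n = satHilbertFn V (n + 1) :=
  ht.finrank_genericSection_satPow_add hV n

lemma monotone_sectionHilbertFn (ht : IsPencilParam V t) (hV : IsBirationalSystem V) :
    Monotone (sectionHilbertFn V t) := fun m n hmn => by
  have := ht.finiteDimensional_genericSection_satPow hV n
  exact Submodule.finrank_mono (genericSection_mono (satPow_mono hV.one_mem hmn))

lemma exists_satPow_succ_le_sup [Infinite K] (ht : IsPencilParam V t)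
    (hV : IsBirationalSystem V) {n : ℕ}
    (hn : sectionHilbertFn V t (n + 1) ≤ sectionHilbertFn V t n) :
    ∃ τ : K, satPow V (n + 1) ≤ satPow V n ⊔ (K ∙ (t - algebraMap K L τ)) * satPow V n := by
  have := ht.finiteDimensional_genericSection_satPow hV (n + 1)
  have hle := satPow_mono hV.one_mem (Nat.le_succ n)
  exact ht.exists_satPow_le_sup hV hle
    (Submodule.eq_of_le_of_finrank_le (genericSection_mono hle) hn).ge

lemma sectionHilbertFn_one_add_one (ht : IsPencilParam V t) (hV : IsBirationalSystem V) :
    sectionHilbertFn V t 1 + 1 = satHilbertFn V 1 := by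
  rw [← ht.sectionHilbertFn_succ_add hV 0, satHilbertFn, hV.satPow_zero, ← pow_zero V]
  exact congrArg _ (hilbertFn_zero V).symm

variable {c e : ℕ}

lemma eventually_sectionHilbertFn_eq (ht : IsPencilParam V t) (hV : IsProjectiveModel V 1 c e) :
    ∀ᶠ n in Filter.atTop, sectionHilbertFn V t n = e := by
  obtain ⟨n₁, hn₁⟩ :=
    ht.isFilterRegular.exists_satPow_eq_pow hV.isBirationalSystem.one_mem ht.mem
  refine eventually_atTop_of_eventually_succ ?_
  filter_upwards [hV.degree, Filter.eventually_ge_atTop n₁] with n hdeg hn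
  have hsucc := ht.sectionHilbertFn_succ_add hV.isBirationalSystem n
  rw [satHilbertFn, satHilbertFn, hn₁ n hn, hn₁ (n + 1) (by omega)] at hsucc
  simp only [Function.iterate_one, fwdDiff, hilbertFn] at hdeg
  omega

lemma sectionHilbertFn_le (ht : IsPencilParam V t) (hV : IsProjectiveModel V 1 c e) (n : ℕ) :
    sectionHilbertFn V t n ≤ e := by
  obtain ⟨m, hm, hnm⟩ :=
    ((ht.eventually_sectionHilbertFn_eq hV).and (Filter.eventually_ge_atTop n)).exists
  exact (ht.monotone_sectionHilbertFn hV.isBirationalSystem hnm).trans_eq hm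

/-- On a curve the section by the pencil is a set of `e` points; once forms of degree `k` separate
them, `t` generates the saturated sections in higher degree. -/
lemma satPow_add_le_pow_mul [Infinite K] (ht : IsPencilParam V t) (hV : IsProjectiveModel V 1 c e)
    {k : ℕ} (hk : sectionHilbertFn V t k = e) (n : ℕ) :
    satPow V (n + k) ≤ V ^ n * satPow V k := by
  have hB := hV.isBirationalSystem
  induction n with
  | zero => rw [zero_add, pow_zero, one_mul]
  | succ n ih =>
    obtain ⟨τ, hτ⟩ := ht.exists_satPow_succ_le_sup hB (n := n + k)
      ((ht.sectionHilbertFn_le hV _).trans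
        (hk.symm.trans_le (ht.monotone_sectionHilbertFn hB (Nat.le_add_left k n))))
    rw [add_right_comm]
    refine hτ.trans (sup_le (ih.trans (mul_le_mul' ?_ le_rfl)) ?_)
    · exact pow_le_pow_of_one_mem hB.one_mem n.le_succ
    · rw [pow_succ' V n, mul_assoc]
      exact mul_le_mul' (span_singleton_sub_algebraMap_le hB.one_mem ht.mem τ) ih

end IsPencilParam

end Lifting

section MinimalDegree

lemma IsBirationalSystem.satPow_eq_pow {K L : Type*} [Field K] [Field L] [Algebra K L]
    {V : Submodule K L} (hV : IsBirationalSystem V) (h₁ : satPow V 1 = V)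
    (hgen : ∀ n, satPow V (n + 1) ≤ V ^ n * satPow V 1) : ∀ n, satPow V n = V ^ n
  | 0 => hV.satPow_zero.trans (pow_zero V).symm
  | n + 1 => by
    refine le_antisymm ((hgen n).trans_eq ?_) (pow_le_satPow _)
    rw [h₁, pow_succ]

section Curve

variable {K L : Type*} [Field K] [Field L] [Algebra K L] {V : Submodule K L} {t : L} {c : ℕ}

lemma IsPencilParam.finrank_le_satHilbertFn_one (ht : IsPencilParam V t)
    (hV : IsBirationalSystem V) : Module.finrank K V ≤ satHilbertFn V 1 := by
  have := Module.Finite.iff_fg.2 (satPow_fg hV ht.mem ht.isFilterRegular 1)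
  exact Submodule.finrank_mono le_satPow_one

lemma IsPencilParam.satPow_one_eq (ht : IsPencilParam V t) (hV : IsBirationalSystem V)
    (h : satHilbertFn V 1 ≤ Module.finrank K V) : satPow V 1 = V := by
  have := Module.Finite.iff_fg.2 (satPow_fg hV ht.mem ht.isFilterRegular 1)
  exact (Submodule.eq_of_le_of_finrank_le le_satPow_one h).symm

lemma IsPencilParam.sectionHilbertFn_succ_eq_of_curve (ht : IsPencilParam V t)
    (hV : IsProjectiveModel V 1 c (c + 1)) (n : ℕ) : sectionHilbertFn V t (n + 1) = c + 1 := by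
  have hB := hV.isBirationalSystem
  refine le_antisymm (ht.sectionHilbertFn_le hV _) ?_
  refine le_trans ?_ (ht.monotone_sectionHilbertFn hB (Nat.le_add_left 1 n))
  have hone := ht.sectionHilbertFn_one_add_one hB
  have hge := ht.finrank_le_satHilbertFn_one hB
  have hrank := hV.finrank_eq
  omega

lemma IsPencilParam.satPow_eq_pow_of_curve [Infinite K] (ht : IsPencilParam V t)
    (hV : IsProjectiveModel V 1 c (c + 1)) : ∀ n, satPow V n = V ^ n := by
  have hB := hV.isBirationalSystem
  have hsec : sectionHilbertFn V t 1 = c + 1 := ht.sectionHilbertFn_succ_eq_of_curve hV 0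
  have hone := ht.sectionHilbertFn_one_add_one hB
  have hrank := hV.finrank_eq
  exact hB.satPow_eq_pow (ht.satPow_one_eq hB (by omega)) (ht.satPow_add_le_pow_mul hV hsec)

end Curve

/-- Varieties of minimal degree are arithmetically Cohen-Macaulay. -/
theorem IsProjectiveModel.satPow_eq_pow {d c : ℕ} {K L : Type u} [Field K] [Field L]
    [Algebra K L] [Infinite K] {V : Submodule K L} (hV : IsProjectiveModel V (d + 1) c (c + 1)) :
    ∀ n, satPow V n = V ^ n := by
  have h₀ := IsIsomorphicProjection.refl hV.isBirationalSystem.one_mem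
  induction d generalizing K with
  | zero =>
    obtain ⟨t, -, ht⟩ := hV.exists_isPencilParam h₀
    exact ht.satPow_eq_pow_of_curve hV
  | succ d ih =>
    obtain ⟨t, -, ht, hVt⟩ := hV.exists_genericSection h₀
    have hsec := ih hVt (IsIsomorphicProjection.refl hVt.isBirationalSystem.one_mem)
    intro n
    induction n with
    | zero => exact hV.isBirationalSystem.satPow_zero.trans (pow_zero V).symm
    | succ n ihn =>
      refine ht.satPow_succ_eq_pow hV.isBirationalSystem ?_ ihn
      rw [← genericSection_pow, ← hsec]
      exact genericSection_satPow_le t V _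

theorem IsProjectiveModel.hilbertFn_succ_eq {d c : ℕ} {K L : Type u} [Field K] [Field L]
    [Algebra K L] [Infinite K] {V : Submodule K L} (hV : IsProjectiveModel V (d + 1) c (c + 1))
    (n : ℕ) :
    hilbertFn V (n + 1) =
      Nat.multichoose (d + 2) (n + 1) + c * Nat.multichoose (d + 2) n := by
  have h₀ := IsIsomorphicProjection.refl hV.isBirationalSystem.one_mem
  induction d generalizing K n with
  | zero =>
    obtain ⟨t, -, ht⟩ := hV.exists_isPencilParam h₀
    induction n with
    | zero => simp [hilbertFn_one, hV.finrank_eq]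
    | succ n ihn =>
      have hsucc := ht.sectionHilbertFn_succ_add hV.isBirationalSystem (n + 1)
      rw [satHilbertFn, satHilbertFn, hV.satPow_eq_pow, hV.satPow_eq_pow,
        ht.sectionHilbertFn_succ_eq_of_curve hV] at hsucc
      rw [hilbertFn] at ihn ⊢
      rw [← hsucc, ihn]
      simp only [zero_add, Nat.multichoose_two]
      ring
  | succ d ih =>
    obtain ⟨t, -, ht, hVt⟩ := hV.exists_genericSection h₀
    induction n with
    | zero => simp [hilbertFn_one, hV.finrank_eq]
    | succ n ihn =>
      rw [← ht.hilbertFn_genericSection_add hV.isBirationalSystem (hV.satPow_eq_pow (n + 1)),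
        ihn, ih hVt _ (IsIsomorphicProjection.refl hVt.isBirationalSystem.one_mem),
        Nat.multichoose_succ_succ (d + 2) (n + 1), Nat.multichoose_succ_succ (d + 2) n]
      ring

end MinimalDegree

section Reduction

variable {K L : Type*} [Field K] [Field L] [Algebra K L] {V V₀ : Submodule K L} {t : L}

lemma exists_common_aeval_mul_eq_eval {U : Submodule K L} (htr : Transcendental K t) {ι : Type*}
    [Finite ι] {x : ι → L} (hx : ∀ i, x i ∈ genericSection t U) :
    ∃ q : K[X], q ≠ 0 ∧ ∃ P : ι → L[X], (∀ i, P i ∈ polynomialsOver U) ∧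
      ∀ i, Polynomial.aeval t q * x i = (P i).eval t := by
  classical
  cases nonempty_fintype ι
  choose q hq P hP hqP using fun i => exists_aeval_mul_eq_eval htr (hx i)
  refine ⟨∏ i, q i, Finset.prod_ne_zero_iff.2 fun i _ => hq i,
    fun i => (∏ j ∈ Finset.univ.erase i, q j).map (algebraMap K L) * P i,
    fun i => map_mul_mem_polynomialsOver _ (hP i), fun i => ?_⟩
  rw [← Finset.mul_prod_erase Finset.univ q (Finset.mem_univ i), Polynomial.eval_mul, ← hqP i,
    map_mul, Polynomial.eval_map_algebraMap]
  ring

lemma exists_polynomialsOver_span_le_span_eval {ι : Type*} [Finite ι] (htr : Transcendental K t)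
    {p : ι → L} (hp : ∀ i, p i ∈ genericSection t V₀) :
    ∃ P : ι → L[X], (∀ i, P i ∈ polynomialsOver V₀) ∧
      Submodule.span K⟮t⟯ (Set.range p) ≤
        Submodule.span K⟮t⟯ (Set.range fun i => (P i).eval t) := by
  obtain ⟨q, hq, P, hP, hqP⟩ := exists_common_aeval_mul_eq_eval htr hp
  refine ⟨P, hP, ?_⟩
  set γ : K⟮t⟯ := Polynomial.aeval (IntermediateField.AdjoinSimple.gen K t) q
  have hγ : (γ : L) = Polynomial.aeval t q :=
    IntermediateField.AdjoinSimple.coe_aeval_gen_apply ..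
  have hγ₀ : γ ≠ 0 := fun h => aeval_ne_zero htr hq (by rw [← hγ, h, ZeroMemClass.coe_zero])
  rw [Submodule.span_le, Set.range_subset_iff]
  intro i
  rw [SetLike.mem_coe, ← Submodule.smul_mem_iff _ hγ₀]
  refine Submodule.subset_span ⟨i, ?_⟩
  simp only [← hqP i, IntermediateField.smul_def, hγ, smul_eq_mul]

lemma exists_sum_mul_of_mem_span_range_mul {R A ι : Type*} [CommSemiring R] [Semiring A]
    [Algebra R A] [Fintype ι] {p : ι → A} {W : Submodule R A} {b : A}
    (hb : b ∈ Submodule.span R (Set.range p) * W) :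
    ∃ x : ι → A, (∀ i, x i ∈ W) ∧ b = ∑ i, p i * x i := by
  classical
  induction hb using Submodule.mul_induction_on' with
  | mem_mul_mem a ha w hw =>
    obtain ⟨f, rfl⟩ := (Submodule.mem_span_range_iff_exists_fun R).1 ha
    exact ⟨fun i => f i • w, fun i => W.smul_mem _ hw, by
      simp only [Finset.sum_mul, smul_mul_assoc, mul_smul_comm]⟩
  | add a _ b _ ha hb =>
    obtain ⟨x, hx, rfl⟩ := ha
    obtain ⟨y, hy, rfl⟩ := hb
    exact ⟨x + y, fun i => add_mem (hx i) (hy i), by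
      simp only [Pi.add_apply, mul_add, Finset.sum_add_distrib]⟩

lemma mul_mem_polynomialsOver {U W : Submodule K L} {P Q : L[X]} (hP : P ∈ polynomialsOver U)
    (hQ : Q ∈ polynomialsOver W) : P * Q ∈ polynomialsOver (U * W) := by
  intro i
  rw [Polynomial.coeff_mul]
  exact sum_mem fun x _ => Submodule.mul_mem_mul (hP _) (hQ _)

lemma eventually_mem_sup_span_singleton_mul {ι : Type*} [Finite ι] (ht : IsPencilParam V t)
    (hV : IsBirationalSystem V) (hle : V₀ ≤ V) (h₁ : satPow V 1 = V) {P : ι → L[X]}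
    (hP : ∀ i, P i ∈ polynomialsOver V₀) {b : L} (hb : b ∈ V ^ 2)
    (hbP : b ∈ Submodule.span K⟮t⟯ (Set.range fun i => (P i).eval t) * genericSection t V) :
    ∀ᶠ τ in Filter.cofinite,
      b ∈ Submodule.span K (Set.range fun i => (P i).eval (algebraMap K L τ)) * V ⊔
        (K ∙ (t - algebraMap K L τ)) * V := by
  cases nonempty_fintype ι
  have htr := hV.transcendental ht.notMem_one
  obtain ⟨x, hx, hbx⟩ := exists_sum_mul_of_mem_span_range_mul hbP
  obtain ⟨q, hq, R, hR, hqR⟩ := exists_common_aeval_mul_eq_eval htr hx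
  have hsum : ∑ i, P i * R i ∈ polynomialsOver (satPow V 2) := by
    refine sum_mem fun i _ j => ?_
    have := mul_mem_polynomialsOver (fun k => hle (hP i k)) (hR i) j
    rw [← pow_two] at this
    exact pow_le_satPow 2 this
  filter_upwards [eventually_eval_ne_zero hq] with τ hτ
  have hmem := (ht.isRegularFiltration hV).mem_sup_span_singleton_mul (n := 2) (b := b) (q := q)
    (P := ∑ i, P i * R i)
    (U := Submodule.span K (Set.range fun i => (P i).eval (algebraMap K L τ)) * V)
    (pow_le_satPow 2 hb) hsum ?_ hτ ?_
  · rwa [show shiftedSatPow V 2 = V from h₁] at hmem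
  · simp only [hbx, Finset.mul_sum, Polynomial.eval_finsetSum, Polynomial.eval_mul, ← hqR]
    exact Finset.sum_congr rfl fun i _ => mul_left_comm _ _ _
  · rw [Polynomial.eval_finsetSum]
    refine sum_mem fun i _ => ?_
    rw [Polynomial.eval_mul]
    exact Submodule.mul_mem_mul (Submodule.subset_span ⟨i, rfl⟩) (eval_algebraMap_mem (hR i) τ)

lemma exists_sq_le_mul_of_genericSection [Infinite K] (ht : IsPencilParam V t)
    (hV : IsBirationalSystem V) (ht₀ : t ∈ V₀) (hone : (1 : L) ∈ V₀) (hle : V₀ ≤ V)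
    (h₁ : satPow V 1 = V) {m : ℕ} {p' : Fin m → L} (hp' : ∀ i, p' i ∈ genericSection t V₀)
    (hsq : genericSection t V ^ 2 ≤
      Submodule.span K⟮t⟯ (Set.range p') * genericSection t V) :
    ∃ p : Fin (m + 1) → L, (∀ i, p i ∈ V₀) ∧ V ^ 2 ≤ Submodule.span K (Set.range p) * V := by
  obtain ⟨P, hP, hspan⟩ := exists_polynomialsOver_span_le_span_eval
    (hV.transcendental ht.notMem_one) hp'
  obtain ⟨τ, hτ⟩ := (eventually_le_of_fg (hV.fg.pow 2) fun b hb =>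
    eventually_mem_sup_span_singleton_mul ht hV hle h₁ hP hb (mul_le_mul_left hspan _ (hsq
      (by rw [genericSection_pow]; exact mem_genericSection hb)))).exists
  refine ⟨Fin.cons (t - algebraMap K L τ) fun i => (P i).eval (algebraMap K L τ),
    Fin.forall_fin_succ.2 ⟨?_, fun i => eval_algebraMap_mem (hP i) τ⟩, ?_⟩
  · exact span_singleton_sub_algebraMap_le hone ht₀ τ (Submodule.mem_span_singleton_self _)
  · rwa [Fin.range_cons, Submodule.span_insert, Submodule.sup_mul, sup_comm]

end Reduction

/-- For a variety of minimal degree, `dim X + 1` generic linear forms generate a reduction of the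
irrelevant ideal with reduction number one. -/
theorem IsProjectiveModel.exists_sq_le_mul {d c : ℕ} {K L : Type u} [Field K] [Field L]
    [Algebra K L] [Infinite K] {V V₀ : Submodule K L}
    (hV : IsProjectiveModel V (d + 1) c (c + 1)) (h₀ : IsIsomorphicProjection V₀ V) :
    ∃ p : Fin (d + 2) → L, (∀ i, p i ∈ V₀) ∧ V ^ 2 ≤ Submodule.span K (Set.range p) * V := by
  have hpow := hV.satPow_eq_pow
  have h₁ : satPow V 1 = V := (hpow 1).trans (pow_one V)
  induction d generalizing K with
  | zero =>
    obtain ⟨t, ht₀, ht⟩ := hV.exists_isPencilParam h₀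
    obtain ⟨τ, hτ⟩ := ht.exists_satPow_succ_le_sup hV.isBirationalSystem (n := 1)
      (by simp only [ht.sectionHilbertFn_succ_eq_of_curve hV, le_refl])
    rw [hpow 2, h₁] at hτ
    refine ⟨![1, t - algebraMap K L τ], ?_, ?_⟩
    · rw [Fin.forall_fin_two]
      exact ⟨h₀.one_mem, span_singleton_sub_algebraMap_le h₀.one_mem ht₀ τ
        (Submodule.mem_span_singleton_self _)⟩
    · rwa [Matrix.range_cons_cons_empty, Submodule.span_insert, ← Submodule.one_eq_span,
        Submodule.sup_mul, one_mul]
  | succ d ih =>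
    obtain ⟨t, ht₀, ht, hVt⟩ := hV.exists_genericSection h₀
    have hpow' := hVt.satPow_eq_pow
    obtain ⟨p', hp', hsq⟩ := ih hVt (h₀.genericSection t) hpow' ((hpow' 1).trans (pow_one _))
    exact exists_sq_le_mul_of_genericSection ht hV.isBirationalSystem ht₀ h₀.one_mem h₀.le h₁ hp'
      hsq

/-! ### Varieties of almost minimal degree -/

section Finrank

variable {K M : Type*} [Field K] [AddCommGroup M] [Module K M]

lemma finrank_le_add_of_le_sup {A B C : Submodule K M} (hA : A.FG) (hB : B.FG) (h : C ≤ A ⊔ B) :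
    Module.finrank K C ≤ Module.finrank K A + Module.finrank K B := by
  have := Module.Finite.iff_fg.2 hA
  have := Module.Finite.iff_fg.2 hB
  exact (Submodule.finrank_mono h).trans (Submodule.finrank_add_le_finrank_add_finrank A B)

lemma finrank_sup_span_singleton_of_notMem {A : Submodule K M} (hA : A.FG) {x : M} (hx : x ∉ A) :
    Module.finrank K (A ⊔ K ∙ x : Submodule K M) = Module.finrank K A + 1 := by
  have := Module.Finite.iff_fg.2 hA
  have hinf : A ⊓ K ∙ x = ⊥ := (Submodule.disjoint_span_singleton_of_notMem hx).eq_bot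
  rw [← finrank_span_singleton (K := K) (v := x) fun h => hx (h ▸ zero_mem A),
    ← Submodule.finrank_sup_add_finrank_inf_eq, hinf, finrank_bot, add_zero]

lemma exists_le_le_finrank_eq {A B : Submodule K M} (hB : B.FG) (hAB : A ≤ B) {m : ℕ}
    (hA : Module.finrank K A ≤ m) (hm : m ≤ Module.finrank K B) :
    ∃ C, A ≤ C ∧ C ≤ B ∧ Module.finrank K C = m := by
  induction m, hA using Nat.le_induction with
  | base => exact ⟨A, le_rfl, hAB, rfl⟩
  | succ m _ ih =>
    obtain ⟨C, hAC, hCB, hC⟩ := ih (by omega)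
    obtain ⟨x, hxB, hxC⟩ : ∃ x ∈ B, x ∉ C := by
      refine SetLike.not_le_iff_exists.1 fun h => ?_
      rw [le_antisymm hCB h] at hC
      omega
    exact ⟨C ⊔ K ∙ x, le_sup_of_le_left hAC,
      sup_le hCB ((Submodule.span_singleton_le_iff_mem _ _).2 hxB),
      by rw [finrank_sup_span_singleton_of_notMem (hB.of_le hCB) hxC, hC]⟩

lemma exists_hyperplane_of_notMem {A B : Submodule K M} (hB : B.FG) (hAB : A ≤ B) {x : M}
    (hxB : x ∈ B) (hxA : x ∉ A) :
    ∃ H, A ≤ H ∧ H ⊔ K ∙ x = B ∧ Module.finrank K H + 1 = Module.finrank K B := by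
  obtain ⟨f, hfx, hAf⟩ := Submodule.exists_le_ker_of_notMem hxA
  have hsup : B ⊓ LinearMap.ker f ⊔ K ∙ x = B := by
    rw [inf_sup_assoc_of_le _ ((Submodule.span_singleton_le_iff_mem _ _).2 hxB), sup_comm,
      f.span_singleton_sup_ker_eq_top hfx, inf_top_eq]
  refine ⟨B ⊓ LinearMap.ker f, le_inf hAB hAf, hsup, ?_⟩
  rw [← finrank_sup_span_singleton_of_notMem (hB.of_le inf_le_left) fun h => hfx h.2, hsup]

lemma exists_sup_eq_finrank_add {P V : Submodule K M} (hV : V.FG) (hPV : P ≤ V) :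
    ∃ Z ≤ V, P ⊔ Z = V ∧ Module.finrank K P + Module.finrank K Z = Module.finrank K V := by
  obtain ⟨Z, hZV, hPZ, hdisj⟩ := exists_isCompl_within hPV
  have := Module.Finite.iff_fg.2 (hV.of_le hPV)
  have := Module.Finite.iff_fg.2 (hV.of_le hZV)
  have hadd := Submodule.finrank_sup_add_finrank_inf_eq P Z
  rw [hPZ, hdisj, finrank_bot, add_zero] at hadd
  exact ⟨Z, hZV, hPZ, hadd.symm⟩

end Finrank

section FinrankMul

variable {K A : Type*} [Field K] [CommRing A] [Algebra K A]

lemma finrank_mul_le {V W : Submodule K A} (hV : V.FG) (hW : W.FG) :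
    Module.finrank K (V * W : Submodule K A) ≤ Module.finrank K V * Module.finrank K W := by
  have := Module.Finite.iff_fg.2 hV
  have := Module.Finite.iff_fg.2 hW
  rw [← Submodule.mulMap_range, ← Module.finrank_tensorProduct]
  exact LinearMap.finrank_range_le _

lemma exists_sym_of_mem_range_pow {ι : Type*} {p : ι → A} {m : ℕ} {a : A}
    (ha : a ∈ Set.range p ^ m) : ∃ s : Sym ι m, ((s : Multiset ι).map p).prod = a := by
  induction m generalizing a with
  | zero => exact ⟨Sym.nil, by simpa using (Set.mem_one.1 (by rwa [pow_zero] at ha)).symm⟩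
  | succ m ih =>
    rw [pow_succ'] at ha
    obtain ⟨_, ⟨i, rfl⟩, b, hb, rfl⟩ := ha
    obtain ⟨s, rfl⟩ := ih hb
    exact ⟨i ::ₛ s, by rw [Sym.coe_cons, Multiset.map_cons, Multiset.prod_cons]⟩

lemma finrank_le_card_of_le_span_range {ι : Type*} [Fintype ι] {p : ι → A} {V : Submodule K A}
    (h : V ≤ Submodule.span K (Set.range p)) : Module.finrank K V ≤ Fintype.card ι := by
  have := FiniteDimensional.span_of_finite K (Set.finite_range p)
  exact (Submodule.finrank_mono h).trans (finrank_range_le_card p)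

lemma exists_span_range_eq {V : Submodule K A} (hV : V.FG) :
    ∃ p : Fin (Module.finrank K V) → A, Submodule.span K (Set.range p) = V := by
  have := Module.Finite.iff_fg.2 hV
  refine ⟨fun i => Module.finBasis K V i, ?_⟩
  have hspan := congrArg (Submodule.map V.subtype) (Module.finBasis K V).span_eq
  rwa [Submodule.map_span, ← Set.range_comp, Submodule.map_subtype_top] at hspan

lemma finrank_pow_le {V : Submodule K A} (hV : V.FG) (m : ℕ) :
    Module.finrank K (V ^ m : Submodule K A) ≤ Nat.multichoose (Module.finrank K V) m := by
  obtain ⟨p, hp⟩ := exists_span_range_eq hV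
  let monomial (s : Sym (Fin (Module.finrank K V)) m) : A := ((s : Multiset _).map p).prod
  have hle : V ^ m ≤ Submodule.span K (Set.range monomial) := calc
    V ^ m = Submodule.span K (Set.range p) ^ m := congrArg (· ^ m) hp.symm
    _ = Submodule.span K (Set.range p ^ m) := Submodule.span_pow _ _
    _ ≤ _ := Submodule.span_mono fun _ ha => exists_sym_of_mem_range_pow ha
  refine (finrank_le_card_of_le_span_range hle).trans_eq ?_
  rw [Sym.card_sym_eq_multichoose, Fintype.card_fin]

/-- The generators of `H * Vᵐ` are the monomials of degree `m + 1` other than `xᵐ⁺¹`. -/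
lemma finrank_hyperplane_mul_pow_add_one_le {H V : Submodule K A} {x : A} (hH : H.FG)
    (hV : H ⊔ K ∙ x = V) (m : ℕ) :
    Module.finrank K (H * V ^ m : Submodule K A) + 1 ≤
      Nat.multichoose (Module.finrank K H + 1) (m + 1) := by
  classical
  obtain ⟨p, hp⟩ := exists_span_range_eq hH
  let q : Option (Fin (Module.finrank K H)) → A := fun o => o.elim x p
  have hq : Submodule.span K (Set.range q) = V := by
    rw [Option.range_eq, Submodule.span_insert, sup_comm, ← hV]
    exact congrArg (· ⊔ K ∙ x) hp
  let pureSym : Sym (Option (Fin (Module.finrank K H))) (m + 1) := Sym.replicate (m + 1) none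
  let monomial (s : {s // s ≠ pureSym}) : A := ((s.1 : Multiset _).map q).prod
  have hle : H * V ^ m ≤ Submodule.span K (Set.range monomial) := by
    have heq : H * V ^ m = Submodule.span K (Set.range p * Set.range q ^ m) := by
      rw [← Submodule.span_mul_span, ← Submodule.span_pow, hq, hp]
    refine heq.trans_le (Submodule.span_mono ?_)
    rintro _ ⟨_, ⟨i, rfl⟩, b, hb, rfl⟩
    obtain ⟨s, rfl⟩ := exists_sym_of_mem_range_pow hb
    refine ⟨⟨some i ::ₛ s, fun h => ?_⟩, ?_⟩
    · exact Option.some_ne_none i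
        (Sym.mem_replicate.1 (h ▸ Sym.mem_cons_self (some i) s)).2
    · exact (congrArg Multiset.prod (Multiset.map_cons q (some i) s)).trans
        (Multiset.prod_cons _ _)
  have hcard := finrank_le_card_of_le_span_range hle
  rw [Fintype.card_subtype_compl, Fintype.card_subtype_eq, Sym.card_sym_eq_multichoose,
    Fintype.card_option, Fintype.card_fin] at hcard
  have hpos : 0 < Nat.multichoose (Module.finrank K H + 1) (m + 1) := by
    rw [Nat.multichoose_eq]
    exact Nat.choose_pos (by omega)
  omega

end FinrankMul

section MultiplicationByW

lemma pow_le_sup_of_sq_le {R A : Type*} [CommSemiring R] [CommSemiring A] [Algebra R A]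
    {V P U W : Submodule R A} (hUP : U ≤ P) (hVV : V ^ 2 ≤ P * V ⊔ U * W)
    (hWV : W * V ≤ P * V ⊔ P * W) (n : ℕ) :
    V ^ (n + 2) ≤ P ^ (n + 1) * V ⊔ U * P ^ n * W := by
  induction n with
  | zero => simpa using hVV
  | succ n ih => calc
      V ^ (n + 1 + 2) = V ^ (n + 2) * V := pow_succ V (n + 2)
      _ ≤ (P ^ (n + 1) * V ⊔ U * P ^ n * W) * V := mul_le_mul' ih le_rfl
      _ = P ^ (n + 1) * V ^ 2 ⊔ U * P ^ n * (W * V) := by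
        rw [Submodule.sup_mul, mul_assoc, mul_assoc, pow_two]
      _ ≤ P ^ (n + 1) * (P * V ⊔ U * W) ⊔ U * P ^ n * (P * V ⊔ P * W) :=
        sup_le_sup (mul_le_mul' le_rfl hVV) (mul_le_mul' le_rfl hWV)
      _ = (P ^ (n + 2) * V ⊔ U * P ^ (n + 1) * W) ⊔
          (U * P ^ (n + 1) * V ⊔ U * P ^ (n + 1) * W) := by
        rw [Submodule.mul_sup, Submodule.mul_sup]
        congr 2 <;> ring
      _ ≤ P ^ (n + 2) * V ⊔ U * P ^ (n + 1) * W := by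
        refine sup_le le_rfl (sup_le (le_sup_of_le_left ?_) le_sup_right)
        rw [pow_succ' P (n + 1)]
        exact mul_le_mul' (mul_le_mul' hUP le_rfl) le_rfl

variable {K A : Type*} [Field K] [CommRing A] [Algebra K A]

/-- If some `x ∈ P` were not in `U`, the summand `U * Pⁿ * w` would miss the monomial `xⁿ⁺¹ w`. -/
lemma le_of_multichoose_le_finrank_pow {V P U : Submodule K A} (hV : V.FG) (hPV : P ≤ V)
    (hUP : U ≤ P) {w : A} {c n : ℕ} (hc : Module.finrank K V = Module.finrank K P + c)
    (hle : V ^ (n + 2) ≤ P ^ (n + 1) * V ⊔ U * P ^ n * (K ∙ w))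
    (hdim : (Module.finrank K P).multichoose (n + 2) +
        (c + 1) * (Module.finrank K P).multichoose (n + 1) ≤
      Module.finrank K (V ^ (n + 2) : Submodule K A)) : P ≤ U := by
  intro x hx
  by_contra hxU
  have hP := hV.of_le hPV
  obtain ⟨H, hUH, hsup, hH⟩ := exists_hyperplane_of_notMem hP hUP hx hxU
  obtain ⟨Z, hZV, hPZ, hZ⟩ := exists_sup_eq_finrank_add hV hPV
  have hHfg : H.FG := hP.of_le (hsup ▸ le_sup_left)
  have hZfg := hV.of_le hZV
  have hle' : V ^ (n + 2) ≤ (P ^ (n + 2) ⊔ P ^ (n + 1) * Z) ⊔ (H * P ^ n) * (K ∙ w) := by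
    refine hle.trans (sup_le_sup (le_of_eq ?_) (mul_le_mul' (mul_le_mul' hUH le_rfl) le_rfl))
    rw [← hPZ, Submodule.mul_sup, ← pow_succ]
  have hw := Submodule.fg_span_singleton (R := K) w
  have hHP := hHfg.mul (hP.pow n)
  have hPZfg := (hP.pow (n + 1)).mul hZfg
  have hV_le := finrank_le_add_of_le_sup ((hP.pow (n + 2)).sup hPZfg) (hHP.mul hw) hle'
  have hsup_le := finrank_le_add_of_le_sup (hP.pow (n + 2)) hPZfg le_rfl
  have hP_le := finrank_pow_le hP (n + 2)
  have hPZ_le : Module.finrank K (P ^ (n + 1) * Z : Submodule K A) ≤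
      c * (Module.finrank K P).multichoose (n + 1) := by
    refine (finrank_mul_le (hP.pow (n + 1)) hZfg).trans ?_
    rw [show Module.finrank K Z = c by omega, mul_comm]
    exact Nat.mul_le_mul_left c (finrank_pow_le hP (n + 1))
  have hHPw_le : Module.finrank K (H * P ^ n * (K ∙ w) : Submodule K A) ≤
      Module.finrank K (H * P ^ n : Submodule K A) := by
    refine (finrank_mul_le hHP hw).trans (mul_le_of_le_one_right' ?_)
    simpa using finrank_span_le_card (R := K) {w}
  have hHP_lt := finrank_hyperplane_mul_pow_add_one_le hHfg hsup n
  rw [hH] at hHP_lt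
  rw [add_one_mul] at hdim
  omega

end MultiplicationByW

section IsomorphicProjection

variable {K L : Type u} [Field K] [Field L] [Algebra K L] {V : Submodule K L} {t : L} {d c : ℕ}

lemma satPow_one_pow (hV : IsBirationalSystem V)
    (hgen : ∀ n, satPow V (n + 1) ≤ V ^ n * satPow V 1) (n : ℕ) :
    satPow V 1 ^ n = satPow V n := by
  refine le_antisymm ?_ ?_
  · induction n with
    | zero => rw [pow_zero, hV.satPow_zero]
    | succ n ih =>
      rw [pow_succ]
      exact (mul_le_mul' ih le_rfl).trans
        (Submodule.mul_le.2 fun _ ha _ hb => mul_mem_satPow ha hb)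
  · cases n with
    | zero => rw [pow_zero, hV.satPow_zero]
    | succ n =>
      rw [pow_succ]
      exact (hgen n).trans (mul_le_mul' (pow_le_pow_left' le_satPow_one n) le_rfl)

lemma IsPencilParam.isIsomorphicProjection_satPow_one (ht : IsPencilParam V t)
    (hV : IsBirationalSystem V) (hgen : ∀ n, satPow V (n + 1) ≤ V ^ n * satPow V 1) :
    IsIsomorphicProjection V (satPow V 1) where
  le := le_satPow_one
  one_mem := hV.one_mem
  eventually_pow_eq := by
    obtain ⟨n₁, hn₁⟩ := ht.isFilterRegular.exists_satPow_eq_pow hV.one_mem ht.mem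
    filter_upwards [Filter.eventually_ge_atTop n₁] with n hn
    rw [satPow_one_pow hV hgen, hn₁ n hn]

lemma IsProjectiveModel.satPow_one (hV : IsProjectiveModel V d c (c + 2)) (hfg : (satPow V 1).FG)
    (hiso : IsIsomorphicProjection V (satPow V 1))
    (h₁ : satHilbertFn V 1 = Module.finrank K V + 1) :
    IsProjectiveModel (satPow V 1) d (c + 1) (c + 2) where
  isBirationalSystem :=
    { closed := hV.isBirationalSystem.closed
      one_mem := hiso.le hiso.one_mem
      fg := hfg
      adjoin_eq_top := by
        rw [eq_top_iff, ← hV.isBirationalSystem.adjoin_eq_top]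
        exact IntermediateField.adjoin.mono K _ _ hiso.le }
  le_trdeg := hV.le_trdeg
  finrank_kaehler_le := hV.finrank_kaehler_le
  finrank_eq := h₁.trans (by rw [hV.finrank_eq, add_assoc])
  degree := by
    refine (fwdDiff_iter_eventuallyEq ?_ d).trans hV.degree
    filter_upwards [hiso.eventually_pow_eq] with n hn
    rw [hilbertFn, hilbertFn, hn]

lemma exists_satPow_one_eq_sup_span_singleton (hfg : (satPow V 1).FG)
    (h₁ : satHilbertFn V 1 = Module.finrank K V + 1) : ∃ w, satPow V 1 = V ⊔ K ∙ w := by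
  have := Module.Finite.iff_fg.2 hfg
  obtain ⟨w, hw, hwV⟩ : ∃ w ∈ satPow V 1, w ∉ V := by
    refine SetLike.not_le_iff_exists.1 fun h => ?_
    rw [satHilbertFn, le_antisymm h le_satPow_one] at h₁
    omega
  refine ⟨w, (Submodule.eq_of_le_of_finrank_le
    (sup_le le_satPow_one ((Submodule.span_singleton_le_iff_mem _ _).2 hw)) ?_).symm⟩
  rw [finrank_sup_span_singleton_of_notMem (hfg.of_le le_satPow_one) hwV]
  exact h₁.le

/-- Comparing the Hilbert functions of `V` and of the minimal-degree model `satPow V 1 = V ⊔ ⟨w⟩`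
forces `P * w ≤ V²`. -/
lemma satPow_two_eq_sq_of_sq_le {P : Submodule K L} {w : L} {n : ℕ} (hfg : V.FG) (hPV : P ≤ V)
    (hP : Module.finrank K P = d + 2) (hfV : Module.finrank K V = d + 2 + c)
    (hw : satPow V 1 = V ⊔ K ∙ w) (hsq : satPow V 1 ^ 2 ≤ P * satPow V 1)
    (hpow : ∀ m, satPow V 1 ^ m = satPow V m) (hn : satPow V (n + 2) = V ^ (n + 2))
    (hhilb : hilbertFn (satPow V 1) (n + 2) =
      (d + 2).multichoose (n + 2) + (c + 1) * (d + 2).multichoose (n + 1)) :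
    satPow V 2 = V ^ 2 := by
  let U : Submodule K L := P ⊓ (V ^ 2).comap (LinearMap.mulRight K w)
  have hsat : satPow V 2 ≤ P * V ⊔ P * (K ∙ w) := by
    rwa [hpow, hw, Submodule.mul_sup] at hsq
  have hPVV : P * V ≤ V ^ 2 := by
    rw [pow_two]
    exact mul_le_mul' hPV le_rfl
  have hVV : V ^ 2 ≤ P * V ⊔ U * (K ∙ w) := by
    intro x hx
    obtain ⟨a, ha, y, hy, rfl⟩ := Submodule.mem_sup.1 (hsat (pow_le_satPow 2 hx))
    obtain ⟨b, hb, rfl⟩ := Submodule.mem_mul_span_singleton.1 hy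
    refine Submodule.add_mem_sup ha (Submodule.mem_mul_span_singleton.2 ⟨b, ⟨hb, ?_⟩, rfl⟩)
    simpa using sub_mem hx (hPVV ha)
  have hwV : (K ∙ w) * V ≤ P * V ⊔ P * (K ∙ w) := by
    refine le_trans ?_ hsat
    rw [← hpow, hw, pow_two]
    exact mul_le_mul' le_sup_right le_sup_left
  have hPU : P ≤ U := by
    refine le_of_multichoose_le_finrank_pow (c := c) hfg hPV inf_le_left (by omega)
      (pow_le_sup_of_sq_le inf_le_left hVV hwV n) ?_
    rw [hP, ← hhilb, hilbertFn, hpow, hn]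
  refine le_antisymm (hsat.trans (sup_le hPVV ?_)) (pow_le_satPow 2)
  intro x hx
  obtain ⟨b, hb, rfl⟩ := Submodule.mem_mul_span_singleton.1 hx
  exact (hPU hb).2

/-- The case in which `X` is an isomorphic projection, from a point, of a variety of minimal
degree. -/
theorem IsProjectiveModel.satPow_eq_pow_of_le_mul_satPow_one [Infinite K]
    (hV : IsProjectiveModel V (d + 1) c (c + 2)) (ht : IsPencilParam V t)
    (h₁ : satHilbertFn V 1 = Module.finrank K V + 1)
    (hgen : ∀ n, satPow V (n + 1) ≤ V ^ n * satPow V 1) :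
    (∀ n, satPow V (n + 2) = V ^ (n + 2)) ∧
      hilbertFn V 2 = (d + 2).multichoose 2 + (c + 1) * (d + 2) := by
  have hB := hV.isBirationalSystem
  have hpow := satPow_one_pow hB hgen
  have hfg := satPow_fg hB ht.mem ht.isFilterRegular 1
  have hiso := ht.isIsomorphicProjection_satPow_one hB hgen
  have hmin := hV.satPow_one hfg hiso h₁
  obtain ⟨w, hw⟩ := exists_satPow_one_eq_sup_span_singleton hfg h₁
  obtain ⟨p, hpV, hsq⟩ := hmin.exists_sq_le_mul hiso
  obtain ⟨P, hpP, hPV, hP⟩ := exists_le_le_finrank_eq hB.fg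
    (Submodule.span_le.2 (Set.range_subset_iff.2 hpV))
    ((finrank_range_le_card p).trans_eq (Fintype.card_fin _))
    (hV.finrank_eq.symm ▸ Nat.le_add_right (d + 2) c)
  obtain ⟨n₁, hn₁⟩ := ht.isFilterRegular.exists_satPow_eq_pow hB.one_mem ht.mem
  have htwo : satPow V 2 = V ^ 2 := satPow_two_eq_sq_of_sq_le hB.fg hPV hP hV.finrank_eq hw
    (hsq.trans (mul_le_mul' hpP le_rfl)) hpow (hn₁ (n₁ + 2) (by omega))
    (hmin.hilbertFn_succ_eq (n₁ + 1))
  refine ⟨fun n => le_antisymm ?_ (pow_le_satPow _), ?_⟩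
  · calc satPow V (n + 2) ≤ V ^ n * V * satPow V 1 := (hgen (n + 1)).trans_eq (by rw [pow_succ])
      _ = V ^ n * (V * satPow V 1) := mul_assoc _ _ _
      _ ≤ V ^ n * satPow V 2 := mul_le_mul' le_rfl
        (Submodule.mul_le.2 fun _ ha _ hb => mul_mem_satPow (le_satPow_one ha) hb)
      _ = V ^ (n + 2) := by rw [htwo, ← pow_add]
  · have hhilb := hmin.hilbertFn_succ_eq 1
    rwa [hilbertFn, hpow, htwo, Nat.multichoose_one_right] at hhilb

end IsomorphicProjection

section AlmostMinimalDegree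

section Curve

variable {K L : Type*} [Field K] [Field L] [Algebra K L] {V : Submodule K L} {t : L} {c e : ℕ}

/-- The powers of the section of a curve by a hyperplane grow strictly until they separate its `e`
points. -/
lemma IsPencilParam.lt_finrank_genericSection_sq (ht : IsPencilParam V t)
    (hV : IsProjectiveModel V 1 c e) (he : Module.finrank K⟮t⟯ (genericSection t V) < e) :
    Module.finrank K⟮t⟯ (genericSection t V) <
      Module.finrank K⟮t⟯ (genericSection t (V ^ 2)) := by
  have hB := hV.isBirationalSystem
  have hfin := Module.Finite.iff_fg.2 (genericSection_fg t hB.fg)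
  have hfin' := Module.Finite.iff_fg.2 (genericSection_fg t (hB.fg.pow 2))
  have hle : V ≤ V ^ 2 := by simpa using pow_le_pow_of_one_mem hB.one_mem one_le_two
  refine Submodule.finrank_lt_finrank_of_lt
    (lt_of_le_not_ge (genericSection_mono hle) fun hsq => ?_)
  have hstable (n : ℕ) : genericSection t (V ^ (n + 1)) ≤ genericSection t V := by
    induction n with
    | zero => rw [zero_add, pow_one]
    | succ n ih =>
      rw [pow_succ, ← genericSection_mul]
      refine (mul_le_mul' ih le_rfl).trans ?_
      rwa [genericSection_mul, ← pow_two]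
  obtain ⟨n₁, hn₁⟩ := ht.isFilterRegular.exists_satPow_eq_pow hB.one_mem ht.mem
  obtain ⟨n, hn, hn₁n⟩ :=
    ((ht.eventually_sectionHilbertFn_eq hV).and (Filter.eventually_ge_atTop (n₁ + 1))).exists
  obtain ⟨m, rfl⟩ := Nat.exists_eq_add_of_lt hn₁n
  have hbound := Submodule.finrank_mono (hstable (n₁ + m))
  rw [sectionHilbertFn, hn₁ _ (by omega)] at hn
  omega

lemma IsPencilParam.curve_sq [Infinite K] (ht : IsPencilParam V t)
    (hV : IsProjectiveModel V 1 c (c + 2)) (h₁ : satPow V 1 = V) :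
    satPow V 2 = V ^ 2 ∧ sectionHilbertFn V t 2 = c + 2 := by
  have hB := hV.isBirationalSystem
  have hsec : Module.finrank K⟮t⟯ (genericSection t V) = c + 1 := by
    have hone := ht.sectionHilbertFn_one_add_one hB
    have hrank := hV.finrank_eq
    rw [satHilbertFn, sectionHilbertFn, h₁] at hone
    omega
  have hlt := ht.lt_finrank_genericSection_sq hV (by omega)
  have hle := ht.sectionHilbertFn_le hV 2
  have hfin := ht.finiteDimensional_genericSection_satPow hB 2
  have heq : genericSection t (V ^ 2) = genericSection t (satPow V 2) :=
    Submodule.eq_of_le_of_finrank_le (genericSection_mono (pow_le_satPow 2))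
      (hle.trans (by omega))
  refine ⟨ht.satPow_succ_eq_pow hB (n := 1) heq.ge (h₁.trans (pow_one V).symm), ?_⟩
  refine le_antisymm hle ?_
  rw [sectionHilbertFn, ← heq]
  omega

lemma IsPencilParam.satPow_eq_pow_of_satPow_one_eq [Infinite K] (ht : IsPencilParam V t)
    (hV : IsProjectiveModel V 1 c (c + 2)) (h₁ : satPow V 1 = V) :
    ∀ n, satPow V n = V ^ n
  | 0 => hV.isBirationalSystem.satPow_zero.trans (pow_zero V).symm
  | 1 => h₁.trans (pow_one V).symm
  | n + 2 => by
    obtain ⟨htwo, hsec⟩ := ht.curve_sq hV h₁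
    refine le_antisymm ((ht.satPow_add_le_pow_mul hV hsec n).trans_eq ?_) (pow_le_satPow _)
    rw [htwo, pow_add]

lemma IsPencilParam.hilbertFn_two_of_satPow_one_eq [Infinite K] (ht : IsPencilParam V t)
    (hV : IsProjectiveModel V 1 c (c + 2)) (h₁ : satPow V 1 = V) :
    hilbertFn V 2 = 2 * c + 4 := by
  obtain ⟨htwo, hsec⟩ := ht.curve_sq hV h₁
  have hadd : sectionHilbertFn V t 2 + satHilbertFn V 1 = satHilbertFn V 2 :=
    ht.sectionHilbertFn_succ_add hV.isBirationalSystem 1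
  have hrank := hV.finrank_eq
  rw [satHilbertFn, satHilbertFn, h₁, htwo] at hadd
  rw [hilbertFn]
  omega

lemma IsPencilParam.curve_dichotomy (ht : IsPencilParam V t)
    (hV : IsProjectiveModel V 1 c (c + 2)) :
    satPow V 1 = V ∨
      satHilbertFn V 1 = Module.finrank K V + 1 ∧ sectionHilbertFn V t 1 = c + 2 := by
  have hB := hV.isBirationalSystem
  have hone := ht.sectionHilbertFn_one_add_one hB
  have hle := ht.sectionHilbertFn_le hV 1
  have hrank := hV.finrank_eq
  rcases Nat.lt_or_ge (Module.finrank K V) (satHilbertFn V 1) with hlt | hge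
  · exact .inr ⟨by omega, by omega⟩
  · exact .inl (ht.satPow_one_eq hB hge)

end Curve

section HyperplaneSection

variable {K L : Type*} [Field K] [Field L] [Algebra K L] {V : Submodule K L} {t : L}

lemma IsPencilParam.satPow_succ_le_pow_mul [Infinite K] (ht : IsPencilParam V t)
    (hV : IsBirationalSystem V)
    (hsec : ∀ n, satPow (genericSection t V) (n + 2) = genericSection t V ^ (n + 2)) (n : ℕ) :
    satPow V (n + 1) ≤ V ^ n * satPow V 1 := by
  induction n with
  | zero => rw [zero_add, pow_zero, one_mul]
  | succ n ih =>
    obtain ⟨τ, hτ⟩ := ht.exists_satPow_le_sup hV (n := n + 1) (pow_le_satPow (n + 2))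
      ((genericSection_satPow_le t V _).trans (by rw [hsec, genericSection_pow]))
    refine hτ.trans (sup_le ?_ ?_)
    · rw [pow_succ]
      exact mul_le_mul' le_rfl le_satPow_one
    · rw [pow_succ' V n, mul_assoc]
      exact mul_le_mul' (span_singleton_sub_algebraMap_le hV.one_mem ht.mem τ) ih

lemma IsPencilParam.satHilbertFn_one_le (ht : IsPencilParam V t) (hV : IsBirationalSystem V)
    (hfg : (satPow (genericSection t V) 1).FG) :
    satHilbertFn V 1 ≤ satHilbertFn (genericSection t V) 1 + 1 := by
  have := Module.Finite.iff_fg.2 hfg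
  rw [← ht.sectionHilbertFn_one_add_one hV]
  exact Nat.add_le_add_right (Submodule.finrank_mono (genericSection_satPow_le t V 1)) 1

end HyperplaneSection

/-- Either the coordinate ring is saturated, or `X` is an isomorphic projection of a variety of
minimal degree. -/
theorem IsProjectiveModel.satPow_eq_pow_or {d c : ℕ} {K L : Type u} [Field K] [Field L]
    [Algebra K L] [Infinite K] {V : Submodule K L} (hV : IsProjectiveModel V (d + 1) c (c + 2)) :
    (∀ n, satPow V n = V ^ n) ∨
      satHilbertFn V 1 = Module.finrank K V + 1 ∧ (∀ n, satPow V (n + 2) = V ^ (n + 2)) ∧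
        hilbertFn V 2 = (d + 2).multichoose 2 + (c + 1) * (d + 2) := by
  have hB := hV.isBirationalSystem
  induction d generalizing K with
  | zero =>
    obtain ⟨t, -, ht⟩ := hV.exists_isPencilParam (.refl hB.one_mem)
    obtain h₁ | ⟨h₁, hsec⟩ := ht.curve_dichotomy hV
    · exact .inl (ht.satPow_eq_pow_of_satPow_one_eq hV h₁)
    · exact .inr ⟨h₁, hV.satPow_eq_pow_of_le_mul_satPow_one ht h₁
        (ht.satPow_add_le_pow_mul hV hsec)⟩
  | succ d ih =>
    obtain ⟨t, -, ht, hVt⟩ := hV.exists_genericSection (.refl hB.one_mem)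
    obtain ⟨hsec, hsec₁⟩ : (∀ n, satPow (genericSection t V) (n + 2) =
        genericSection t V ^ (n + 2)) ∧ satHilbertFn (genericSection t V) 1 ≤
          Module.finrank K⟮t⟯ (genericSection t V) + 1 := by
      obtain hpow | ⟨h₁, hpow, -⟩ := ih hVt hVt.isBirationalSystem
      · refine ⟨fun n => hpow _, ?_⟩
        rw [satHilbertFn, hpow, pow_one]
        exact Nat.le_succ _
      · exact ⟨hpow, h₁.le⟩
    have hgen := ht.satPow_succ_le_pow_mul hB hsec
    obtain ⟨t', -, ht'⟩ := hVt.exists_isPencilParam (.refl hVt.isBirationalSystem.one_mem)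
    have hle := ht.satHilbertFn_one_le hB
      (satPow_fg hVt.isBirationalSystem ht'.mem ht'.isFilterRegular 1)
    have hrank := hV.finrank_eq
    have hrank' := hVt.finrank_eq
    rcases (ht.finrank_le_satHilbertFn_one hB).eq_or_lt with heq | hlt
    · exact .inl (hB.satPow_eq_pow (ht.satPow_one_eq hB heq.ge) hgen)
    · have h₁ : satHilbertFn V 1 = Module.finrank K V + 1 := by omega
      exact .inr ⟨h₁, hV.satPow_eq_pow_of_le_mul_satPow_one ht h₁ hgen⟩

end AlmostMinimalDegree

/-! ### Depth and generic hyperplane sections -/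

section Depth

variable {R : Type*} [CommRing R] {I J : Ideal R} {x y z : R}

lemma isSMulRegular_quotient_iff_mul_mem :
    IsSMulRegular (R ⧸ I) x ↔ ∀ y, x * y ∈ I → y ∈ I :=
  isSMulRegular_quotient_iff_mem_of_smul_mem I x

lemma mem_sup_span_singleton_iff : y ∈ I ⊔ Ideal.span {x} ↔ ∃ b, y - x * b ∈ I := by
  rw [Submodule.mem_sup]
  constructor
  · rintro ⟨i, hi, s, hs, rfl⟩
    obtain ⟨b, rfl⟩ := Ideal.mem_span_singleton'.1 hs
    exact ⟨b, by convert hi using 1; ring⟩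
  · rintro ⟨b, hb⟩
    exact ⟨_, hb, x * b, Ideal.mul_mem_right _ _ (Ideal.mem_span_singleton_self x), by ring⟩

/-- The grade of `J` on `R ⧸ I` (the depth, when `J` is a maximal ideal) is `n`: some
`R ⧸ I`-regular sequence in `J` has length `n` and leaves a quotient with a nonzero element
killed by `J`. By
`HasDepth.sup_span_singleton`, every regular element of `J` can start such a sequence. -/
def HasDepth (J : Ideal R) : ℕ → Ideal R → Prop
  | 0, I => ∃ y ∉ I, ∀ a ∈ J, a * y ∈ I
  | n + 1, I => ∃ x ∈ J, IsSMulRegular (R ⧸ I) x ∧ HasDepth J n (I ⊔ Ideal.span {x})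

lemma subsingleton_quotient_linearMap_quotient (h : ¬ HasDepth J 0 I) :
    Subsingleton ((R ⧸ J) →ₗ[R] R ⧸ I) := by
  refine subsingleton_of_forall_eq 0 fun f => ?_
  by_contra hf
  obtain ⟨y, hy⟩ := Ideal.Quotient.mk_surjective (f 1)
  have hf₁ : f 1 ≠ 0 := fun h₁ => hf (Submodule.linearMap_qext _ (LinearMap.ext_ring h₁))
  refine h ⟨y, fun hyI => hf₁ ?_, fun a ha => ?_⟩
  · rw [← hy, Ideal.Quotient.eq_zero_iff_mem.2 hyI]
  · have ha₁ : a • (1 : R ⧸ J) = 0 := by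
      rw [Algebra.smul_def, mul_one]
      exact Ideal.Quotient.eq_zero_iff_mem.2 ha
    rw [← Ideal.Quotient.eq_zero_iff_mem, map_mul, hy]
    exact (f.map_smul a 1).symm.trans (by rw [ha₁, map_zero])

lemma exists_mem_forall_isSMulRegular [IsNoetherianRing R] {ι : Type*} [Finite ι]
    {I : ι → Ideal R} (h : ∀ i, ¬ HasDepth J 0 (I i)) :
    ∃ z ∈ J, ∀ i, IsSMulRegular (R ⧸ I i) z := by
  classical
  have : Subsingleton ((R ⧸ J) →ₗ[R] ∀ i, R ⧸ I i) := by
    refine subsingleton_of_forall_eq 0 fun f => LinearMap.ext fun a => funext fun i => ?_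
    have := subsingleton_quotient_linearMap_quotient (h i)
    exact LinearMap.congr_fun (Subsingleton.elim ((LinearMap.proj i).comp f) 0) a
  obtain ⟨z, hz, hreg⟩ := IsSMulRegular.subsingleton_linearMap_iff.1 this
  rw [Ideal.annihilator_quotient] at hz
  exact ⟨z, hz, fun i => hreg.of_injective (LinearMap.single R (fun i => R ⧸ I i) i)
    (Pi.single_injective (M := fun i => R ⧸ I i) i)⟩

lemma isSMulRegular_sup_span_singleton_swap (hx : IsSMulRegular (R ⧸ I) x)
    (hz : IsSMulRegular (R ⧸ I ⊔ Ideal.span {x}) z) :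
    IsSMulRegular (R ⧸ I ⊔ Ideal.span {z}) x := by
  rw [isSMulRegular_quotient_iff_mul_mem] at hx hz ⊢
  intro y hy
  obtain ⟨b, hb⟩ := mem_sup_span_singleton_iff.1 hy
  have hzb : z * b ∈ I ⊔ Ideal.span {x} :=
    mem_sup_span_singleton_iff.2 ⟨y, by convert I.neg_mem hb using 1; ring⟩
  obtain ⟨c, hc⟩ := mem_sup_span_singleton_iff.1 (hz b hzb)
  refine mem_sup_span_singleton_iff.2 ⟨c, hx _ ?_⟩
  have : x * (y - z * c) = (x * y - z * b) + z * (b - x * c) := by ring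
  rw [this]
  exact I.add_mem hb (I.mul_mem_left _ hc)

lemma not_hasDepth_zero (hxJ : x ∈ J) (hx : IsSMulRegular (R ⧸ I) x) : ¬ HasDepth J 0 I :=
  fun ⟨y, hy, hJ⟩ => hy (isSMulRegular_quotient_iff_mul_mem.1 hx y (hJ x hxJ))

lemma HasDepth.sup_span_singleton_of_zero (h : HasDepth J 0 (I ⊔ Ideal.span {x})) (hzJ : z ∈ J)
    (hx : IsSMulRegular (R ⧸ I) x) (hz : IsSMulRegular (R ⧸ I) z) :
    HasDepth J 0 (I ⊔ Ideal.span {z}) := by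
  rw [isSMulRegular_quotient_iff_mul_mem] at hx hz
  obtain ⟨y, hy, hJ⟩ := h
  -- If `y` is a socle element modulo `x`, then `y' = z y / x` is one modulo `z`.
  obtain ⟨y', hy'⟩ := mem_sup_span_singleton_iff.1 (hJ z hzJ)
  refine ⟨y', fun hm => hy ?_, fun a ha => ?_⟩
  · obtain ⟨b, hb⟩ := mem_sup_span_singleton_iff.1 hm
    refine mem_sup_span_singleton_iff.2 ⟨b, hz _ ?_⟩
    have : z * (y - x * b) = (z * y - x * y') + x * (y' - z * b) := by ring
    rw [this]
    exact I.add_mem hy' (I.mul_mem_left _ hb)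
  · obtain ⟨b, hb⟩ := mem_sup_span_singleton_iff.1 (hJ a ha)
    refine mem_sup_span_singleton_iff.2 ⟨b, hx _ ?_⟩
    have : x * (a * y' - z * b) = z * (a * y - x * b) - a * (z * y - x * y') := by ring
    rw [this]
    exact I.sub_mem (I.mul_mem_left _ hb) (I.mul_mem_left _ hy')

theorem HasDepth.sup_span_singleton [IsNoetherianRing R] {n : ℕ} (h : HasDepth J (n + 1) I)
    (hzJ : z ∈ J) (hz : IsSMulRegular (R ⧸ I) z) : HasDepth J n (I ⊔ Ideal.span {z}) := by
  induction n generalizing I z with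
  | zero =>
    obtain ⟨x, -, hx, h⟩ := h
    exact h.sup_span_singleton_of_zero hzJ hx hz
  | succ n ih =>
    obtain ⟨x, hxJ, hx, h⟩ := h
    have hdx : ¬ HasDepth J 0 (I ⊔ Ideal.span {x}) := by
      obtain ⟨x', hx'J, hx', -⟩ := h
      exact not_hasDepth_zero hx'J hx'
    have hdz : ¬ HasDepth J 0 (I ⊔ Ideal.span {z}) :=
      fun h₀ => hdx (h₀.sup_span_singleton_of_zero hxJ hz hx)
    -- Exchange `x` for `z` through an element `w` regular modulo both of them.
    obtain ⟨w, hwJ, hw⟩ := exists_mem_forall_isSMulRegular (J := J)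
      (I := ![I ⊔ Ideal.span {x}, I ⊔ Ideal.span {z}, I])
      (by simpa [Fin.forall_fin_succ] using ⟨hdx, hdz, not_hasDepth_zero hxJ hx⟩)
    have hwx : IsSMulRegular (R ⧸ I ⊔ Ideal.span {x}) w := hw 0
    have hwz : IsSMulRegular (R ⧸ I ⊔ Ideal.span {z}) w := hw 1
    have hdw : HasDepth J (n + 1) (I ⊔ Ideal.span {w}) :=
      ⟨x, hxJ, isSMulRegular_sup_span_singleton_swap hx hwx,
        by simpa only [sup_right_comm] using ih h hwJ hwx⟩
    exact ⟨w, hwJ, hwz, by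
      simpa only [sup_right_comm] using
        ih hdw hzJ (isSMulRegular_sup_span_singleton_swap hz hwz)⟩

lemma mem_map_iff_of_surjective_of_ker_le {R' : Type*} [CommRing R'] {f : R →+* R'}
    (hf : Function.Surjective f) (hI : RingHom.ker f ≤ I) : f y ∈ I.map f ↔ y ∈ I := by
  rw [← Ideal.mem_comap, Ideal.comap_map_of_surjective' f hf, sup_eq_left.2 hI]

lemma HasDepth.map {R' : Type*} [CommRing R'] {f : R →+* R'} (hf : Function.Surjective f) {n : ℕ}
    (hI : RingHom.ker f ≤ I) (h : HasDepth J n I) : HasDepth (J.map f) n (I.map f) := by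
  induction n generalizing I with
  | zero =>
    obtain ⟨y, hy, hJ⟩ := h
    refine ⟨f y, by rwa [mem_map_iff_of_surjective_of_ker_le hf hI], fun a ha => ?_⟩
    obtain ⟨a, ha', rfl⟩ := (Ideal.mem_map_iff_of_surjective f hf).1 ha
    rw [← map_mul, mem_map_iff_of_surjective_of_ker_le hf hI]
    exact hJ a ha'
  | succ n ih =>
    obtain ⟨x, hxJ, hx, h⟩ := h
    refine ⟨f x, Ideal.mem_map_of_mem f hxJ, ?_, ?_⟩
    · rw [isSMulRegular_quotient_iff_mul_mem] at hx ⊢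
      intro y hy
      obtain ⟨y, rfl⟩ := hf y
      rw [← map_mul, mem_map_iff_of_surjective_of_ker_le hf hI] at hy
      exact Ideal.mem_map_of_mem f (hx y hy)
    · simpa only [Ideal.map_sup, Ideal.map_span, Set.image_singleton] using
        ih (hI.trans le_sup_left) h

lemma sup_span_setOf_mem_cons (I : Ideal R) (x : R) (rs : List R) :
    I ⊔ Ideal.span {y | y ∈ x :: rs} = (I ⊔ Ideal.span {x}) ⊔ Ideal.span {y | y ∈ rs} := by
  rw [sup_assoc, ← Ideal.span_union]
  congr 2
  ext y
  simp

lemma hasDepth_length {rs : List R}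
    (hreg : ∀ i (hi : i < rs.length), IsSMulRegular (R ⧸ I ⊔ Ideal.span {x | x ∈ rs.take i}) rs[i])
    (hJ : ∀ x ∈ rs, x ∈ J) (h : HasDepth J 0 (I ⊔ Ideal.span {x | x ∈ rs})) :
    HasDepth J rs.length I := by
  induction rs generalizing I with
  | nil => simpa using h
  | cons x rs ih =>
    rw [sup_span_setOf_mem_cons] at h
    refine ⟨x, hJ x (by simp), ?_, ih (fun i hi => ?_) (fun y hy => hJ y (by simp [hy])) h⟩
    · have := hreg 0 (by simp)
      rw [isSMulRegular_quotient_iff_mul_mem] at this ⊢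
      simpa using this
    · rw [← sup_span_setOf_mem_cons]
      exact hreg (i + 1) (by simpa using hi)

lemma isRegSeq_iff {A : Type} [CommRing A] {rs : List A} :
    IsRegSeq rs ↔
      ∀ i (hi : i < rs.length), IsSMulRegular (A ⧸ Ideal.span {x | x ∈ rs.take i}) rs[i] := by
  simp only [isSMulRegular_quotient_iff_mul_mem]
  exact Fin.forall_iff

lemma isRegSeq_concat {A : Type} [CommRing A] {rs : List A} {z : A} (hrs : IsRegSeq rs)
    (hz : IsSMulRegular (A ⧸ Ideal.span {x | x ∈ rs}) z) : IsRegSeq (rs ++ [z]) := by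
  rw [isRegSeq_iff] at hrs ⊢
  intro i hi
  obtain hi | rfl := (Nat.lt_succ_iff_lt_or_eq.1 (by simpa using hi) : i < rs.length ∨ _)
  · rw [List.take_append_of_le_length hi.le, List.getElem_append_left hi]
    exact hrs i hi
  · rw [List.take_left, List.getElem_concat_length rfl]
    exact hz

lemma hasDepth_of_maximal_isRegSeq {A : Type} [CommRing A] [IsNoetherianRing A] {J : Ideal A}
    {rs : List A} (hrs : IsRegSeq rs) (hJ : ∀ x ∈ rs, x ∈ J)
    (hmax : ∀ rs' : List A, (∀ x ∈ rs', x ∈ J) → IsRegSeq rs' → rs'.length ≤ rs.length) :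
    HasDepth J rs.length (⊥ : Ideal A) := by
  refine hasDepth_length (fun i hi => ?_) hJ ?_
  · rw [bot_sup_eq]
    exact isRegSeq_iff.1 hrs i hi
  by_contra hc
  obtain ⟨z, hzJ, hz⟩ := exists_mem_forall_isSMulRegular fun _ : Unit => hc
  rw [bot_sup_eq] at hz
  have hJ' : ∀ x ∈ rs ++ [z], x ∈ J := by
    simpa [or_imp, forall_and] using ⟨hJ, hzJ⟩
  simpa using hmax _ hJ' (isRegSeq_concat hrs (hz ()))

end Depth

section GenericExtension

variable (K R : Type*) [Field K] [CommRing R] [Algebra K R]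

/-- The nonzero polynomials over `K`, as a multiplicative set in `R[X]`. -/
def nonzeroPolynomials : Submonoid R[X] :=
  (nonZeroDivisors K[X]).map (Polynomial.mapRingHom (algebraMap K R))

/-- The base change `K(T) ⊗ R` of a `K`-algebra to the rational function field, encoded as a
localization of `R[X]`. -/
abbrev GenericExtension : Type _ := Localization (nonzeroPolynomials K R)

variable {R} {I J : Ideal R}

lemma coeff_mem_of_coeff_mul_mem {P : R[X]} {m : R[X]} (hm : m ∈ nonzeroPolynomials K R)
    (h : ∀ j, (m * P).coeff j ∈ I) (j : ℕ) : P.coeff j ∈ I := by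
  obtain ⟨p, hp, rfl⟩ := hm
  have hmonic := ((Polynomial.monic_mul_leadingCoeff_inv (nonZeroDivisors.ne_zero hp)).map
    (algebraMap K R)).map (Ideal.Quotient.mk I)
  have hmP : ((p.map (algebraMap K R)) * P).map (Ideal.Quotient.mk I) = 0 := by
    ext i
    rw [Polynomial.coeff_map, Polynomial.coeff_zero]
    exact Ideal.Quotient.eq_zero_iff_mem.2 (h i)
  have hP : P.map (Ideal.Quotient.mk I) = 0 := by
    refine hmonic.mul_right_eq_zero_iff.1 ?_
    rw [Polynomial.map_mul] at hmP
    rw [Polynomial.map_mul, Polynomial.map_mul, mul_right_comm, hmP, zero_mul]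
  rw [← Ideal.Quotient.eq_zero_iff_mem, ← Polynomial.coeff_map, hP, Polynomial.coeff_zero]

lemma algebraMap_mem_map_genericExtension {P : R[X]} :
    algebraMap R[X] (GenericExtension K R) P ∈ I.map (algebraMap R (GenericExtension K R)) ↔
      ∀ j, P.coeff j ∈ I := by
  have hmap : I.map (algebraMap R (GenericExtension K R)) =
      (I.map (Polynomial.C : R →+* R[X])).map (algebraMap R[X] (GenericExtension K R)) := by
    rw [Ideal.map_map, IsScalarTower.algebraMap_eq R R[X]]
    rfl
  rw [hmap, IsLocalization.algebraMap_mem_map_algebraMap_iff (nonzeroPolynomials K R)]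
  simp only [Ideal.mem_map_C_iff]
  exact ⟨fun ⟨m, hm, h⟩ => coeff_mem_of_coeff_mul_mem K hm h,
    fun h => ⟨1, one_mem _, by simpa using h⟩⟩

lemma GenericExtension.algebraMap_injective :
    Function.Injective (algebraMap R[X] (GenericExtension K R)) := by
  refine (injective_iff_map_eq_zero _).2 fun P hP => Polynomial.ext fun j => ?_
  have := (algebraMap_mem_map_genericExtension K (I := (⊥ : Ideal R))).1 (hP ▸ zero_mem _) j
  simpa using this

variable {K} in
lemma GenericExtension.exists_isUnit_mul_eq (b : GenericExtension K R) :
    ∃ (P : R[X]) (v : GenericExtension K R), IsUnit v ∧ b * v = algebraMap R[X] _ P := by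
  obtain ⟨⟨P, m⟩, h⟩ := IsLocalization.surj (nonzeroPolynomials K R) b
  exact ⟨P, _, IsLocalization.map_units _ m, h⟩

lemma isSMulRegular_genericExtension {x : R} (h : IsSMulRegular (R ⧸ I) x) :
    IsSMulRegular (GenericExtension K R ⧸ I.map (algebraMap R (GenericExtension K R)))
      (algebraMap R (GenericExtension K R) x) := by
  rw [isSMulRegular_quotient_iff_mul_mem] at h ⊢
  intro b hb
  obtain ⟨P, v, hv, hbv⟩ := b.exists_isUnit_mul_eq
  have hxP : algebraMap R[X] (GenericExtension K R) (Polynomial.C x * P) ∈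
      I.map (algebraMap R (GenericExtension K R)) := by
    rw [map_mul, ← hbv, ← mul_assoc]
    exact Ideal.mul_mem_right _ _ hb
  rw [algebraMap_mem_map_genericExtension] at hxP
  rw [← Ideal.mul_unit_mem_iff_mem _ hv, hbv, algebraMap_mem_map_genericExtension]
  exact fun j => h _ (by simpa using hxP j)

theorem HasDepth.map_genericExtension {n : ℕ} (h : HasDepth J n I) :
    HasDepth (J.map (algebraMap R (GenericExtension K R))) n
      (I.map (algebraMap R (GenericExtension K R))) := by
  induction n generalizing I with
  | zero =>
    obtain ⟨y, hy, hJ⟩ := h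
    refine ⟨algebraMap R _ y, fun hmem => hy ?_, fun a ha => ?_⟩
    · have := (algebraMap_mem_map_genericExtension K (P := Polynomial.C y)).1 hmem 0
      simpa using this
    · have hmul := Ideal.mul_mem_mul ha
        (Ideal.mem_span_singleton_self (algebraMap R (GenericExtension K R) y))
      rw [← Set.image_singleton, ← Ideal.map_span, ← Ideal.map_mul] at hmul
      refine Ideal.map_mono (Ideal.mul_le.2 fun a ha b hb => ?_) hmul
      obtain ⟨c, rfl⟩ := Ideal.mem_span_singleton'.1 hb
      rw [mul_left_comm]
      exact I.mul_mem_left _ (hJ a ha)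
  | succ n ih =>
    obtain ⟨x, hxJ, hx, h⟩ := h
    refine ⟨algebraMap R _ x, Ideal.mem_map_of_mem _ hxJ, isSMulRegular_genericExtension K hx, ?_⟩
    simpa only [Ideal.map_sup, Ideal.map_span, Set.image_singleton] using ih h

/-- The hyperplane section of `R` by the generic member `l` of a linear system defined over `K(T)`:
the ring `R'` is the localization of `R[X] ⧸ (l)` at the nonzero polynomials of `K[X]`. -/
structure IsGenericSection {R' : Type*} [CommRing R'] (ψ : R[X] →+* R') (l : R[X]) : Prop where
  isUnit : ∀ m ∈ nonzeroPolynomials K R, IsUnit (ψ m)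
  surj : ∀ b, ∃ P, ∃ m ∈ nonzeroPolynomials K R, b * ψ m = ψ P
  eq_zero_iff : ∀ P, ψ P = 0 ↔ l ∣ P

variable {K} {R' : Type*} [CommRing R'] {ψ : R[X] →+* R'} {l : R[X]}

lemma IsGenericSection.exists_lift (h : IsGenericSection K ψ l) :
    ∃ Ψ : GenericExtension K R →+* R', Function.Surjective Ψ ∧
      Ψ.comp (algebraMap R[X] (GenericExtension K R)) = ψ ∧
      RingHom.ker Ψ = Ideal.span {algebraMap R[X] (GenericExtension K R) l} := by
  let Ψ : GenericExtension K R →+* R' :=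
    IsLocalization.lift (M := nonzeroPolynomials K R) (g := ψ) fun m => h.isUnit m m.2
  have hΨ : ∀ P, Ψ (algebraMap R[X] _ P) = ψ P := fun P => IsLocalization.lift_eq _ P
  refine ⟨Ψ, fun b => ?_, RingHom.ext hΨ, le_antisymm (fun b hb => ?_) ?_⟩
  · obtain ⟨P, m, hm, hbm⟩ := h.surj b
    obtain ⟨v, hv⟩ := IsLocalization.map_units (GenericExtension K R) ⟨m, hm⟩
    have hvm : Ψ v = ψ m := by rw [hv, hΨ]
    refine ⟨algebraMap _ _ P * (v⁻¹ : (GenericExtension K R)ˣ), ?_⟩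
    rw [map_mul, hΨ, ← hbm, ← hvm, mul_assoc, ← map_mul, Units.mul_inv, map_one, mul_one]
  · rw [RingHom.mem_ker] at hb
    obtain ⟨P, v, hv, hbv⟩ := b.exists_isUnit_mul_eq
    obtain ⟨Q, rfl⟩ := (h.eq_zero_iff P).1 (by rw [← hΨ, ← hbv, map_mul, hb, zero_mul])
    rw [← Ideal.mul_unit_mem_iff_mem _ hv, hbv, map_mul]
    exact Ideal.mul_mem_right _ _ (Ideal.mem_span_singleton_self _)
  · rw [Ideal.span_singleton_le_iff_mem, RingHom.mem_ker, hΨ, h.eq_zero_iff]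

theorem HasDepth.of_isGenericSection [IsNoetherianRing R] [IsDomain R] {n : ℕ}
    (h : HasDepth J (n + 1) (⊥ : Ideal R)) (hψ : IsGenericSection K ψ l) (hl : l ≠ 0)
    (hlJ : ∀ j, l.coeff j ∈ J) : HasDepth (J.map (ψ.comp Polynomial.C)) n (⊥ : Ideal R') := by
  have : IsNoetherianRing (GenericExtension K R) :=
    IsLocalization.isNoetherianRing (nonzeroPolynomials K R) _ inferInstance
  obtain ⟨Ψ, hsurj, rfl, hker⟩ := hψ.exists_lift
  have hreg : IsSMulRegular (GenericExtension K R ⧸ (⊥ : Ideal (GenericExtension K R)))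
      (algebraMap R[X] (GenericExtension K R) l) := by
    refine isSMulRegular_quotient_iff_mul_mem.2 fun b hb => ?_
    rw [Ideal.mem_bot] at hb ⊢
    obtain ⟨P, v, hv, hbv⟩ := b.exists_isUnit_mul_eq
    have hlP : algebraMap R[X] (GenericExtension K R) (l * P) = algebraMap R[X] _ 0 := by
      rw [map_mul, ← hbv, ← mul_assoc, hb, zero_mul, map_zero]
    have hP := (mul_eq_zero.1 (GenericExtension.algebraMap_injective K hlP)).resolve_left hl
    rw [hP, map_zero] at hbv
    exact hv.mul_left_eq_zero.1 hbv
  have hdepth := h.map_genericExtension K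
  rw [Ideal.map_bot] at hdepth
  have hsection := (hdepth.sup_span_singleton
    ((algebraMap_mem_map_genericExtension K).2 hlJ) hreg).map hsurj (by rw [hker, bot_sup_eq])
  have hbot : (⊥ ⊔ Ideal.span {algebraMap R[X] (GenericExtension K R) l}).map Ψ = ⊥ := by
    rw [bot_sup_eq, ← hker, Ideal.map_eq_bot_iff_le_ker]
  rw [hbot, Ideal.map_map, IsScalarTower.algebraMap_eq R R[X]] at hsection
  exact hsection

end GenericExtension

section BivariateSwap

variable {R : Type*} [CommRing R]

lemma coeff_coeff_swap (P : R[X][X]) (m n : ℕ) :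
    ((Polynomial.Bivariate.swap P).coeff n).coeff m = (P.coeff m).coeff n := by
  induction P using Polynomial.induction_on' with
  | add P Q hP hQ => simp [hP, hQ]
  | monomial i f =>
    induction f using Polynomial.induction_on' with
    | add f g hf hg => rw [map_add, map_add]; simp [hf, hg]
    | monomial j a =>
      simp only [Polynomial.Bivariate.swap_monomial_monomial, Polynomial.coeff_monomial]
      split_ifs <;> simp_all [Polynomial.coeff_monomial]

lemma coeff_eval_C (P : R[X][X]) (t : R) (n : ℕ) :
    (P.eval (Polynomial.C t)).coeff n = ((Polynomial.Bivariate.swap P).coeff n).eval t := by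
  induction P using Polynomial.induction_on' with
  | add P Q hP hQ => simp [hP, hQ]
  | monomial i f =>
    induction f using Polynomial.induction_on' with
    | add f g hf hg => rw [map_add, map_add]; simp_all
    | monomial j a =>
      simp only [Polynomial.Bivariate.swap_monomial_monomial, Polynomial.coeff_monomial,
        Polynomial.eval_monomial, ← Polynomial.C_pow, Polynomial.coeff_mul_C]
      split_ifs <;> simp

end BivariateSwap

section GenericSection

variable {K L : Type*} [Field K] [Field L] [Algebra K L] {t : L} {V : Submodule K L}

lemma IsRegularFiltration.exists_eq_X_sub_C_mul_X_mul {F : ℕ → Submodule K L}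
    (hF : IsRegularFiltration t F) (hF₀ : F 0 = ⊥) {P : L[X][X]}
    (hP : ∀ j n, (P.coeff j).coeff n ∈ F (n + 1)) (hroot : P.eval (Polynomial.C t) = 0) :
    ∃ Q : L[X][X], (∀ j n, (Q.coeff j).coeff n ∈ F (n + 1)) ∧
      P = (Polynomial.X - Polynomial.C (Polynomial.C t)) * (Polynomial.C Polynomial.X * Q) := by
  have hcoeff : ∀ n, (Polynomial.Bivariate.swap P).coeff n ∈ polynomialsOver (F (n + 1)) :=
    fun n i => (coeff_coeff_swap P i n).symm ▸ hP i n
  choose Q hQF hQ using fun n => hF.exists_eq_X_sub_C_mul (hcoeff n)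
    (by rw [← coeff_eval_C, hroot, Polynomial.coeff_zero])
  obtain ⟨G, hG⟩ : Polynomial.C (Polynomial.X - Polynomial.C t) ∣ Polynomial.Bivariate.swap P :=
    (Polynomial.C_dvd_iff_dvd_coeff _ _).2 fun n => ⟨_, hQ n⟩
  have hGQ : ∀ n, G.coeff n = Q n := fun n =>
    mul_left_cancel₀ (Polynomial.X_sub_C_ne_zero t) (by rw [← hQ, hG, Polynomial.coeff_C_mul])
  have hG₀ : G.coeff 0 = 0 := by
    ext i
    have := hQF 0 i
    rwa [hF₀, Submodule.mem_bot, ← hGQ] at this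
  have hGX : Polynomial.X * G.divX = G := by
    simpa [hG₀] using Polynomial.X_mul_divX_add G
  refine ⟨Polynomial.Bivariate.swap G.divX, fun j n => ?_, ?_⟩
  · rw [coeff_coeff_swap, Polynomial.coeff_divX, hGQ]
    exact hQF _ _
  · calc P = Polynomial.Bivariate.swap (Polynomial.C (Polynomial.X - Polynomial.C t) * G) := by
          rw [← hG, Polynomial.Bivariate.swap_swap_apply]
      _ = _ := by
          rw [← hGX, map_mul, map_mul, Polynomial.Bivariate.swap_C, Polynomial.Bivariate.swap_Y,
            hGX, Polynomial.map_sub, Polynomial.map_X, Polynomial.map_C]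

namespace coordinateRing

variable (t V)

/-- The inclusion of the coordinate ring of a variety into that of its generic section. -/
def toGenericSection : coordinateRing V →+* coordinateRing (genericSection t V) where
  toFun p := ⟨p, fun n => by
    rw [genericSection_pow]
    exact mem_genericSection (coeff_mem p n)⟩
  map_one' := rfl
  map_mul' _ _ := rfl
  map_zero' := rfl
  map_add' _ _ := rfl

lemma mem_genericSection_pow_zero : t ∈ genericSection t V ^ 0 := by
  rw [pow_zero, Submodule.mem_one]
  exact ⟨IntermediateField.AdjoinSimple.gen K t, rfl⟩

/-- The specialisation `X ↦ t` of polynomials over the coordinate ring; its kernel is generated by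
the equation `X * x₀ - xₜ` of the generic member of the pencil. -/
def specialize : (coordinateRing V)[X] →+* coordinateRing (genericSection t V) :=
  Polynomial.eval₂RingHom (toGenericSection t V) (homog (mem_genericSection_pow_zero t V))

lemma coe_specialize (P : (coordinateRing V)[X]) :
    (specialize t V P : L[X]) =
      (P.map ((coordinateRing V).val : coordinateRing V →+* L[X])).eval (Polynomial.C t) := by
  rw [Polynomial.eval_map]
  exact Polynomial.hom_eval₂ P (toGenericSection t V)
    ((coordinateRing (genericSection t V)).val : coordinateRing (genericSection t V) →+* L[X])
    (homog (mem_genericSection_pow_zero t V))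

lemma coe_specialize_map (p : K[X]) :
    (specialize t V (p.map (algebraMap K (coordinateRing V))) : L[X]) =
      Polynomial.C (Polynomial.aeval t p) := by
  rw [coe_specialize, Polynomial.map_map, Polynomial.eval_map, Polynomial.aeval_def]
  exact (Polynomial.hom_eval₂ p (algebraMap K L) Polynomial.C t).symm

lemma specialize_comp_C : (specialize t V).comp Polynomial.C = toGenericSection t V :=
  RingHom.ext fun x => by simp [specialize]

lemma map_toGenericSection_irrelevantIdeal :
    (irrelevantIdeal V).map (toGenericSection t V) = irrelevantIdeal (genericSection t V) := by
  refine le_antisymm (Ideal.map_le_iff_le_comap.2 fun p hp => hp) ?_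
  refine irrelevantIdeal_le_of_le_linearForms (Submodule.span_le.2 fun v hv => ?_)
  refine ⟨⟨v, mem_genericSection hv⟩, ?_, rfl⟩
  exact Ideal.mem_map_of_mem (toGenericSection t V)
    (homog_mem_irrelevantIdeal one_ne_zero (by rwa [pow_one] : v ∈ V ^ 1))

end coordinateRing

end GenericSection

section GenericSection

variable {K L : Type*} [Field K] [Field L] [Algebra K L] {t : L} {V : Submodule K L}

namespace coordinateRing

lemma mem_nonzeroPolynomials {R : Type*} [CommRing R] [Algebra K R] {p : K[X]} (hp : p ≠ 0) :
    p.map (algebraMap K R) ∈ nonzeroPolynomials K R :=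
  ⟨p, mem_nonZeroDivisors_of_ne_zero hp, rfl⟩

lemma isUnit_specialize (htr : Transcendental K t) {m : (coordinateRing V)[X]}
    (hm : m ∈ nonzeroPolynomials K (coordinateRing V)) : IsUnit (specialize t V m) := by
  obtain ⟨p, hp, rfl⟩ := hm
  have hne := aeval_ne_zero htr (nonZeroDivisors.ne_zero hp)
  have hinv : (Polynomial.aeval t p)⁻¹ ∈ genericSection t V ^ 0 := by
    rw [pow_zero, Submodule.mem_one]
    exact ⟨(Polynomial.aeval (IntermediateField.AdjoinSimple.gen K t) p)⁻¹, by
      rw [map_inv₀, ← Polynomial.aeval_algebraMap_apply]; rfl⟩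
  refine IsUnit.of_mul_eq_one (homog hinv) (Subtype.ext ?_)
  rw [MulMemClass.coe_mul, Polynomial.coe_mapRingHom, coe_specialize_map]
  change Polynomial.C _ * Polynomial.C _ = 1
  rw [← Polynomial.C_mul, mul_inv_cancel₀ hne, Polynomial.C_1]

lemma exists_homog_mul_specialize_eq (htr : Transcendental K t) {i : ℕ} {w : L}
    (hw : w ∈ genericSection t V ^ i) : ∃ P, ∃ m ∈ nonzeroPolynomials K (coordinateRing V),
      homog hw * specialize t V m = specialize t V P := by
  obtain ⟨q, hq, P, hP, hqP⟩ :=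
    exists_aeval_mul_eq_eval htr (genericSection_pow t V i ▸ hw : w ∈ genericSection t (V ^ i))
  refine ⟨∑ j ∈ P.support, Polynomial.monomial j (homog (hP j)), q.map (algebraMap K _),
    mem_nonzeroPolynomials hq, Subtype.ext ?_⟩
  rw [MulMemClass.coe_mul, coe_specialize_map, coe_specialize, Polynomial.map_sum,
    Polynomial.eval_finsetSum]
  simp only [Polynomial.map_monomial, Polynomial.eval_monomial, ← Polynomial.C_pow]
  change Polynomial.monomial i w * _ = ∑ j ∈ P.support, Polynomial.monomial i (P.coeff j) * _
  simp only [Polynomial.monomial_mul_C, ← map_sum]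
  rw [mul_comm w, hqP, Polynomial.eval_eq_sum, Polynomial.sum]

lemma exists_mul_specialize_eq (htr : Transcendental K t)
    (b : coordinateRing (genericSection t V)) :
    ∃ P, ∃ m ∈ nonzeroPolynomials K (coordinateRing V),
      b * specialize t V m = specialize t V P := by
  let T : AddSubmonoid (coordinateRing (genericSection t V)) :=
    { carrier := {b | ∃ P, ∃ m ∈ nonzeroPolynomials K (coordinateRing V),
        b * specialize t V m = specialize t V P}
      zero_mem' := ⟨0, 1, one_mem _, by simp⟩
      add_mem' := by
        rintro a b ⟨P, m, hm, ha⟩ ⟨Q, n, hn, hb⟩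
        refine ⟨P * n + Q * m, m * n, mul_mem hm hn, ?_⟩
        rw [map_mul, map_add, map_mul, map_mul, ← ha, ← hb]
        ring }
  suffices b ∈ T from this
  rw [eq_sum_homog b]
  exact sum_mem fun i _ => exists_homog_mul_specialize_eq htr _

/-- The equation `X * x₀ - xₜ` of the generic member of the pencil spanned by `1, t ∈ V`. -/
def pencilEquation (hone : (1 : L) ∈ V) (ht : t ∈ V) : (coordinateRing V)[X] :=
  Polynomial.X * Polynomial.C (degreeOne V ⟨1, hone⟩) - Polynomial.C (degreeOne V ⟨t, ht⟩)

lemma map_pencilEquation (hone : (1 : L) ∈ V) (ht : t ∈ V) :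
    (pencilEquation hone ht).map ((coordinateRing V).val : coordinateRing V →+* L[X]) =
      (Polynomial.X - Polynomial.C (Polynomial.C t)) * Polynomial.C Polynomial.X := by
  have h₁ : ((coordinateRing V).val : coordinateRing V →+* L[X]) (degreeOne V ⟨1, hone⟩) =
      Polynomial.X := rfl
  have ht : ((coordinateRing V).val : coordinateRing V →+* L[X]) (degreeOne V ⟨t, ht⟩) =
      Polynomial.C t * Polynomial.X := (Polynomial.C_mul_X_eq_monomial).symm
  rw [pencilEquation, Polynomial.map_sub, Polynomial.map_mul, Polynomial.map_X, Polynomial.map_C,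
    Polynomial.map_C, h₁, ht, Polynomial.C_mul]
  ring

lemma pencilEquation_ne_zero (hone : (1 : L) ∈ V) (ht : t ∈ V) : pencilEquation hone ht ≠ 0 := by
  intro h
  have := map_pencilEquation hone ht
  rw [h, Polynomial.map_zero] at this
  exact mul_ne_zero (Polynomial.X_sub_C_ne_zero _)
    (Polynomial.C_ne_zero.2 Polynomial.X_ne_zero) this.symm

lemma coeff_pencilEquation_mem (hone : (1 : L) ∈ V) (ht : t ∈ V) (j : ℕ) :
    (pencilEquation hone ht).coeff j ∈ irrelevantIdeal V := by
  have hmem (v : V) : degreeOne V v ∈ irrelevantIdeal V :=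
    homog_mem_irrelevantIdeal one_ne_zero (by simp)
  rw [pencilEquation, Polynomial.coeff_sub, Polynomial.coeff_mul_C, Polynomial.coeff_C]
  refine sub_mem (Ideal.mul_mem_left _ _ (hmem _)) ?_
  split_ifs
  exacts [hmem _, zero_mem _]

lemma specialize_eq_zero_iff (hV : IsBirationalSystem V) (ht : IsPencilParam V t)
    (hsat : ∀ n, satPow V n = V ^ n) (P : (coordinateRing V)[X]) :
    specialize t V P = 0 ↔ pencilEquation hV.one_mem ht.mem ∣ P := by
  let val : coordinateRing V →+* L[X] := (coordinateRing V).val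
  have hroot : specialize t V P = 0 ↔ (P.map val).eval (Polynomial.C t) = 0 := by
    rw [← coe_specialize, ZeroMemClass.coe_eq_zero]
  rw [hroot]
  constructor
  · intro h₀
    obtain ⟨Q, hQ, hPQ⟩ := (ht.isRegularFiltration hV).exists_eq_X_sub_C_mul_X_mul rfl
      (fun j n => by
        rw [Polynomial.coeff_map]
        exact (hsat n).ge (coeff_mem (P.coeff j) n)) h₀
    have hlift : Q ∈ Polynomial.lifts val :=
      (Polynomial.lifts_iff_coeff_lifts _).2 fun j =>
        ⟨⟨Q.coeff j, fun n => (hsat n).le (hQ j n)⟩, rfl⟩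
    obtain ⟨Q, rfl⟩ := (Polynomial.mem_lifts _).1 hlift
    refine ⟨Q, Polynomial.map_injective val Subtype.val_injective ?_⟩
    rw [hPQ, Polynomial.map_mul, map_pencilEquation, mul_assoc]
  · rintro ⟨Q, rfl⟩
    rw [Polynomial.map_mul, map_pencilEquation]
    simp

lemma isGenericSection_specialize (hV : IsBirationalSystem V) (ht : IsPencilParam V t)
    (hsat : ∀ n, satPow V n = V ^ n) :
    IsGenericSection K (specialize t V) (pencilEquation hV.one_mem ht.mem) where
  isUnit _ := isUnit_specialize (hV.transcendental ht.notMem_one)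
  surj := exists_mul_specialize_eq (hV.transcendental ht.notMem_one)
  eq_zero_iff := specialize_eq_zero_iff hV ht hsat

end coordinateRing

open coordinateRing

theorem HasDepth.coordinateRing_genericSection (hV : IsBirationalSystem V)
    (ht : IsPencilParam V t) (hsat : ∀ n, satPow V n = V ^ n) {n : ℕ}
    (h : HasDepth (irrelevantIdeal V) (n + 1) ⊥) :
    HasDepth (irrelevantIdeal (genericSection t V)) n ⊥ := by
  have := isNoetherianRing_coordinateRing hV.fg
  rw [← map_toGenericSection_irrelevantIdeal, ← specialize_comp_C]
  exact h.of_isGenericSection (isGenericSection_specialize hV ht hsat)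
    (pencilEquation_ne_zero _ _) (coeff_pencilEquation_mem _ _)

end GenericSection

section Depth

variable {K L : Type*} [Field K] [Field L] [Algebra K L] {V : Submodule K L} {t : L}

namespace coordinateRing

lemma coeff_succ_degreeOne_mul (v : V) (p : coordinateRing V) (n : ℕ) :
    ((degreeOne V v * p : coordinateRing V) : L[X]).coeff (n + 1) = v * (p : L[X]).coeff n := by
  change (Polynomial.monomial 1 (v : L) * (p : L[X])).coeff (n + 1) = _
  rw [← Polynomial.C_mul_X_eq_monomial, mul_assoc, Polynomial.coeff_C_mul,
    Polynomial.coeff_X_mul]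

lemma degreeOne_mem_irrelevantIdeal (v : V) : degreeOne V v ∈ irrelevantIdeal V :=
  homog_mem_irrelevantIdeal one_ne_zero ((pow_one V).symm ▸ v.2)

lemma isSMulRegular_degreeOne_one (hone : (1 : L) ∈ V) :
    IsSMulRegular (coordinateRing V ⧸ (⊥ : Ideal (coordinateRing V))) (degreeOne V ⟨1, hone⟩) := by
  refine isSMulRegular_quotient_iff_mul_mem.2 fun y hy => ?_
  rw [Ideal.mem_bot] at hy ⊢
  refine Subtype.ext (Polynomial.ext fun n => ?_)
  have := coeff_succ_degreeOne_mul ⟨1, hone⟩ y n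
  rw [hy] at this
  simpa using this.symm

lemma mem_bot_sup_span_degreeOne_one (hone : (1 : L) ∈ V) {y : coordinateRing V} :
    y ∈ ⊥ ⊔ Ideal.span {degreeOne V ⟨1, hone⟩} ↔
      (y : L[X]).coeff 0 = 0 ∧ ∀ n, (y : L[X]).coeff (n + 1) ∈ V ^ n := by
  have coe_mul (a : coordinateRing V) :
      ((degreeOne V ⟨1, hone⟩ * a : coordinateRing V) : L[X]) = Polynomial.X * (a : L[X]) := rfl
  rw [bot_sup_eq, Ideal.mem_span_singleton]
  constructor
  · rintro ⟨a, rfl⟩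
    simp only [coe_mul, Polynomial.coeff_X_mul, Polynomial.mul_coeff_zero,
      Polynomial.coeff_X_zero, zero_mul, true_and]
    exact coeff_mem a
  · rintro ⟨h₀, h⟩
    refine ⟨⟨(y : L[X]).divX, fun n => by rw [Polynomial.coeff_divX]; exact h n⟩, Subtype.ext ?_⟩
    rw [coe_mul]
    simpa [h₀] using (Polynomial.X_mul_divX_add (y : L[X])).symm

end coordinateRing

open coordinateRing

lemma not_hasDepth_zero_bot (hone : (1 : L) ∈ V) :
    ¬ HasDepth (irrelevantIdeal V) 0 (⊥ : Ideal (coordinateRing V)) :=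
  not_hasDepth_zero (degreeOne_mem_irrelevantIdeal ⟨1, hone⟩) (isSMulRegular_degreeOne_one hone)

-- An element `y` of the socle modulo the hyperplane at infinity has a coefficient
-- `y_{n+1} ∉ V ^ n` with `V * y_{n+1} ⊆ V ^ (n + 1)`, that is, `y_{n+1} ∈ satPow V n`.
lemma exists_satPow_ne_pow_of_hasDepth_one (hfg : V.FG) (hone : (1 : L) ∈ V) (ht : t ∈ V)
    (hnt : t ∉ (1 : Submodule K L)) (h : HasDepth (irrelevantIdeal V) 1 ⊥) :
    ∃ n, satPow V n ≠ V ^ n := by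
  by_contra! hsat
  have := isNoetherianRing_coordinateRing hfg
  obtain ⟨y, hy, hsocle⟩ := h.sup_span_singleton (degreeOne_mem_irrelevantIdeal ⟨1, hone⟩)
    (isSMulRegular_degreeOne_one hone)
  have mul_coeff_mem (v : L) (hv : v ∈ V) (n : ℕ) : v * (y : L[X]).coeff n ∈ V ^ n := by
    have := ((mem_bot_sup_span_degreeOne_one hone).1
      (hsocle _ (degreeOne_mem_irrelevantIdeal ⟨v, hv⟩))).2 n
    rwa [coeff_succ_degreeOne_mul] at this
  refine hy ((mem_bot_sup_span_degreeOne_one hone).2 ⟨?_, fun n => ?_⟩)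
  · by_contra h₀
    obtain ⟨a, ha⟩ := Submodule.mem_one.1 (by simpa using coeff_mem y 0)
    obtain ⟨b, hb⟩ := Submodule.mem_one.1 (by simpa using mul_coeff_mem t ht 0)
    refine hnt (Submodule.mem_one.2 ⟨b / a, ?_⟩)
    rw [map_div₀, ha, hb, mul_div_cancel_right₀ _ h₀]
  · rw [← hsat]
    exact ⟨1, fun x hx => mul_coeff_mem x (by simpa using hx) (n + 1)⟩

lemma mem_pow_of_forall_mul_mem_of_hasDepth {m n : ℕ} (hfg : V.FG) (hone : (1 : L) ∈ V)
    (h : HasDepth (irrelevantIdeal V) (m + 2) ⊥) {b : L} (hb : ∀ v ∈ V, v * b ∈ V ^ (n + 1)) :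
    b ∈ V ^ n := by
  have := isNoetherianRing_coordinateRing hfg
  obtain ⟨x, hx, hreg, -⟩ := h.sup_span_singleton (degreeOne_mem_irrelevantIdeal ⟨1, hone⟩)
    (isSMulRegular_degreeOne_one hone)
  set I : Ideal (coordinateRing V) := ⊥ ⊔ Ideal.span {degreeOne V ⟨1, hone⟩}
  have hb₁ : b ∈ V ^ (n + 1) := by simpa using hb 1 hone
  have le_colon : irrelevantIdeal V ≤ I.colon {homog hb₁} := by
    refine irrelevantIdeal_le fun v hv => ?_
    rw [Submodule.mem_colon_singleton, smul_eq_mul, mem_bot_sup_span_degreeOne_one hone]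
    have hv' : v ∈ V := by simpa using hv
    refine ⟨mem_irrelevantIdeal.1 (Ideal.mul_mem_right _ _
      (homog_mem_irrelevantIdeal one_ne_zero _)), fun i => ?_⟩
    refine (coeff_succ_degreeOne_mul ⟨v, hv'⟩ (homog hb₁) i).symm ▸ ?_
    simp only [homog, Polynomial.coeff_monomial]
    split_ifs with hi
    · exact hi ▸ hb v hv'
    · simp
  have hbI : homog hb₁ ∈ I := isSMulRegular_quotient_iff_mul_mem.1 hreg _ (by
    simpa only [Submodule.mem_colon_singleton, smul_eq_mul] using le_colon hx)
  simpa [homog] using ((mem_bot_sup_span_degreeOne_one hone).1 hbI).2 n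

lemma satPow_eq_pow_of_hasDepth {m : ℕ} (hfg : V.FG) (hone : (1 : L) ∈ V)
    (h : HasDepth (irrelevantIdeal V) (m + 2) ⊥) (n : ℕ) : satPow V n = V ^ n := by
  refine le_antisymm ?_ (pow_le_satPow n)
  rintro b ⟨k, hk⟩
  suffices ∀ k, (∀ x ∈ V ^ k, x * b ∈ V ^ (n + k)) → b ∈ V ^ n from this k hk
  intro k
  induction k with
  | zero => exact fun hk => by simpa using hk 1 (by simp)
  | succ k ih =>
    refine fun hk => ih fun x hx => mem_pow_of_forall_mul_mem_of_hasDepth hfg hone h fun v hv => ?_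
    rw [← mul_assoc]
    exact hk _ (pow_succ' V k ▸ Submodule.mul_mem_mul hv hx)

end Depth

theorem IsProjectiveModel.hilbertFn_two_of_hasDepth (d : ℕ) {K L : Type u} [Field K] [Field L]
    [Algebra K L] [Infinite K] {V : Submodule K L} {c n q : ℕ}
    (hV : IsProjectiveModel V (d + 1) c (c + 2))
    (hdepth : HasDepth (irrelevantIdeal V) n ⊥) (hnq : n + q = d + 2) :
    hilbertFn V 2 = (d + 3).choose 2 + c * (d + 2) + q + 1 := by
  have hone := hV.isBirationalSystem.one_mem
  have hfg := hV.isBirationalSystem.fg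
  obtain ⟨t, ht, htV⟩ := hV.exists_isPencilParam (.refl hone)
  match n, d with
  | 0, _ => exact absurd hdepth (not_hasDepth_zero_bot hone)
  | 1, d =>
    obtain ⟨m, hm⟩ := exists_satPow_ne_pow_of_hasDepth_one hfg hone ht htV.notMem_one hdepth
    obtain ⟨-, -, h⟩ := hV.satPow_eq_pow_or.resolve_left fun hsat => hm (hsat m)
    obtain rfl : q = d + 1 := by omega
    rw [h, Nat.multichoose_eq]
    simp only [Nat.add_succ_sub_one, Nat.add_assoc, Nat.reduceAdd]
    ring
  | n + 2, 0 =>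
    have hsat := satPow_eq_pow_of_hasDepth hfg hone hdepth 1
    rw [htV.hilbertFn_two_of_satPow_one_eq hV (hsat.trans (pow_one V))]
    obtain rfl : q = 0 := by omega
    simp [Nat.choose]
    ring
  | n + 2, d + 1 =>
    obtain ⟨t, -, htV, hsec⟩ := hV.exists_genericSection (.refl hone)
    have hsat := satPow_eq_pow_of_hasDepth hfg hone hdepth
    have ih := hsec.hilbertFn_two_of_hasDepth d
      (hdepth.coordinateRing_genericSection hV.isBirationalSystem htV hsat) (q := q) (by omega)
    have hadd : hilbertFn (genericSection t V) 2 + hilbertFn V 1 = hilbertFn V 2 :=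
      htV.hilbertFn_genericSection_add hV.isBirationalSystem (hsat 1)
    rw [hilbertFn_one, hV.finrank_eq] at hadd
    rw [← hadd, ih, show d + 1 + 3 = (d + 3) + 1 from rfl, Nat.choose_succ_succ' (d + 3) 1,
      Nat.choose_one_right]
    ring

/-! ### Dimension, differentials and degree -/

section Dimension

lemma ringKrullDim_eq_of_isIntegral {R A : Type*} [CommRing R] [CommRing A] [Algebra R A]
    [Algebra.IsIntegral R A] [FaithfulSMul R A] : ringKrullDim R = ringKrullDim A := by
  refine le_antisymm (iSup_le fun l => ?_) (Order.krullDim_le_of_strictMono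
    (PrimeSpectrum.comap (algebraMap R A)) fun p q => Ideal.IsIntegral.comap_lt_comap)
  obtain ⟨P, _, _⟩ := Ideal.nonempty_primesOver (S := A) (RelSeries.head l).asIdeal
  obtain ⟨l', hl', -⟩ := Ideal.exists_ltSeries_of_hasGoingUp (S := A) l P
  rw [← hl']
  exact le_iSup (fun p : LTSeries (PrimeSpectrum A) => ((p.length : ℕ∞) : WithBot ℕ∞)) l'

variable {K : Type u} [Field K]

lemma trdeg_eq_of_ringKrullDim_eq {A : Type u} [CommRing A] [IsDomain A] [Algebra K A]
    [Algebra.FiniteType K A] {m : ℕ} (h : ringKrullDim A = m) : Algebra.trdeg K A = m := by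
  obtain ⟨s, g, hinj, hint⟩ := exists_integral_inj_algHom_of_fg K A
  algebraize [g.toRingHom]
  have : Algebra.IsIntegral (MvPolynomial (Fin s) K) A := ⟨hint⟩
  have : FaithfulSMul (MvPolynomial (Fin s) K) A :=
    (faithfulSMul_iff_algebraMap_injective _ _).2 hinj
  have : IsScalarTower K (MvPolynomial (Fin s) K) A :=
    .of_algebraMap_eq fun x => (g.commutes x).symm
  have hdim := ringKrullDim_eq_of_isIntegral (R := MvPolynomial (Fin s) K) (A := A)
  rw [h, MvPolynomial.ringKrullDim_of_isNoetherianRing, ringKrullDim_eq_zero_of_field, zero_add]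
    at hdim
  obtain rfl : s = m := by simpa using hdim
  have htr := trdeg_add_eq K (MvPolynomial (Fin s) K) (A := A)
  rw [MvPolynomial.trdeg_of_isDomain, trdeg_eq_zero (R := MvPolynomial (Fin s) K)] at htr
  simpa using htr.symm

end Dimension

section Kaehler

variable {K L : Type*} [Field K] [Field L] [Algebra K L]

lemma span_D_image_eq_top_of_isSeparable {s : Set L}
    [Algebra.IsSeparable (IntermediateField.adjoin K s) L] :
    Submodule.span L (KaehlerDifferential.D K L '' s) = ⊤ := by
  have : Algebra.FormallyUnramified (IntermediateField.adjoin K s) L := .of_isSeparable _ L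
  have hrange := KaehlerDifferential.range_mapBaseChange K (IntermediateField.adjoin K s) L
  rw [Subsingleton.elim (KaehlerDifferential.map K (IntermediateField.adjoin K s) L L) 0,
    LinearMap.ker_zero] at hrange
  rw [eq_top_iff, ← hrange, LinearMap.range_eq_map, ← Submodule.baseChange_top,
    ← KaehlerDifferential.span_range_derivation, Submodule.baseChange_span, Submodule.map_span,
    Submodule.span_le]
  rintro _ ⟨_, ⟨_, ⟨x, rfl⟩, rfl⟩, rfl⟩
  simpa using D_mem_span_D_image x.2

lemma finrank_kaehlerDifferential_le [PerfectField K] [Algebra.EssFiniteType K L] {d : ℕ}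
    (h : Algebra.trdeg K L = d) : Module.finrank L Ω[L⁄K] ≤ d := by
  classical
  obtain ⟨s, hs, hsep⟩ := exists_isTranscendenceBasis_and_isSeparable_of_perfectField K L
  have card_eq : s.card = d := by simpa [h] using hs.cardinalMk_eq_trdeg
  rw [← finrank_top, ← span_D_image_eq_top_of_isSeparable (s := (s : Set L)), ← Finset.coe_image]
  exact (finrank_span_finset_le_card _).trans (Finset.card_image_le.trans card_eq.le)

end Kaehler

namespace coordinateRing

variable {K L : Type u} [Field K] [Field L] [Algebra K L] {V : Submodule K L}

lemma isAlgebraic_C (hV : IsBirationalSystem V) (l : L) :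
    IsAlgebraic (coordinateRing V) (Polynomial.C l : L[X]) := by
  have hl : l ∈ IntermediateField.adjoin K (V : Set L) :=
    hV.adjoin_eq_top ▸ IntermediateField.mem_top
  induction hl using IntermediateField.adjoin_induction with
  | mem v hv =>
    have hX : Polynomial.C (degreeOne V ⟨1, hV.one_mem⟩) * Polynomial.X -
        Polynomial.C (degreeOne V ⟨v, hv⟩) ≠ 0 := fun h => by
      have := congrArg (fun p => ((Polynomial.coeff p 1 : coordinateRing V) : L[X]).coeff 1) h
      simp [degreeOne, homog, Polynomial.coeff_C] at this
    refine ⟨_, hX, ?_⟩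
    rw [map_sub, map_mul, Polynomial.aeval_C, Polynomial.aeval_X, Polynomial.aeval_C]
    change (Polynomial.monomial 1 (1 : L)) * Polynomial.C v - Polynomial.monomial 1 v = 0
    rw [Polynomial.monomial_mul_C, one_mul, sub_self]
  | algebraMap a => exact isAlgebraic_algebraMap (A := L[X]) (algebraMap K (coordinateRing V) a)
  | add x y _ _ hx hy => exact Polynomial.C_add (a := x) (b := y) ▸ hx.add hy
  | inv x _ hx =>
    rcases eq_or_ne x 0 with rfl | h₀
    · simpa using hx
    · let : Invertible (Polynomial.C x : L[X]) :=
        ⟨Polynomial.C x⁻¹, by rw [← Polynomial.C_mul, inv_mul_cancel₀ h₀, Polynomial.C_1],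
          by rw [← Polynomial.C_mul, mul_inv_cancel₀ h₀, Polynomial.C_1]⟩
      exact hx.invOf
  | mul x y _ _ hx hy => exact Polynomial.C_mul (a := x) (b := y) ▸ hx.mul hy

lemma isAlgebraic_polynomial (hV : IsBirationalSystem V) :
    Algebra.IsAlgebraic (coordinateRing V) L[X] := by
  refine ⟨fun p => ?_⟩
  have hX : IsAlgebraic (coordinateRing V) (Polynomial.X : L[X]) :=
    isAlgebraic_algebraMap (degreeOne V ⟨1, hV.one_mem⟩)
  induction p using Polynomial.induction_on' with
  | add p q hp hq => exact hp.add hq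
  | monomial n a =>
    rw [← Polynomial.C_mul_X_pow_eq_monomial]
    exact (isAlgebraic_C hV a).mul (hX.pow n)

lemma trdeg_eq (hV : IsBirationalSystem V) :
    Algebra.trdeg K (coordinateRing V) = Algebra.trdeg K L + 1 := by
  have := isAlgebraic_polynomial hV
  have hL := trdeg_add_eq K L (A := L[X])
  have hV := trdeg_add_eq K (coordinateRing V) (A := L[X])
  rw [Polynomial.trdeg_of_isDomain] at hL
  rw [trdeg_eq_zero (R := coordinateRing V), add_zero] at hV
  rw [hV, hL]

end coordinateRing

lemma IsBirationalSystem.trdeg_eq_of_ringKrullDim_eq {K L A : Type u} [Field K] [Field L]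
    [Algebra K L] {V : Submodule K L} (hV : IsBirationalSystem V) [CommRing A] [IsDomain A]
    [Algebra K A] [Algebra.FiniteType K A] {m : ℕ} (h : ringKrullDim A = (m + 1 : ℕ))
    (e : A ≃ₐ[K] coordinateRing V) : Algebra.trdeg K L = m := by
  have htr := AMD.trdeg_eq_of_ringKrullDim_eq (K := K) h
  rw [e.trdeg_eq, coordinateRing.trdeg_eq hV, Nat.cast_add_one] at htr
  exact Cardinal.eq_of_add_eq_add_right htr Cardinal.one_lt_aleph0

section Degree

lemma coeff_mk_mul_one_sub_X_pow (d : ℕ) (f : ℕ → ℤ) (n : ℕ) :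
    PowerSeries.coeff (n + d) (PowerSeries.mk f * (1 - PowerSeries.X) ^ d) =
      (fwdDiff 1)^[d] f n := by
  induction d generalizing n with
  | zero => simp
  | succ d ih =>
    rw [pow_succ, ← mul_assoc, mul_one_sub, map_sub, Function.iterate_succ_apply', fwdDiff, ← ih,
      ← ih, ← add_assoc, PowerSeries.coeff_succ_mul_X, add_right_comm]

lemma coeff_eq_sum_of_mul_one_sub_X {F : PowerSeries ℤ} {h : ℤ[X]}
    (hF : F * (1 - PowerSeries.X) = PowerSeries.mk fun n => h.coeff n) (n : ℕ) :
    PowerSeries.coeff n F = ∑ i ∈ Finset.range (n + 1), h.coeff i := by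
  have coeff_eq (n : ℕ) := congrArg (PowerSeries.coeff n) hF
  simp only [mul_one_sub, map_sub, PowerSeries.coeff_mk] at coeff_eq
  induction n with
  | zero => simpa using coeff_eq 0
  | succ n ih =>
    have := coeff_eq (n + 1)
    rw [PowerSeries.coeff_succ_mul_X, ih] at this
    rw [Finset.sum_range_succ, ← this]
    ring

lemma fwdDiff_iter_eventuallyEq_of_mul_one_sub_X_pow {f : ℕ → ℤ} {d : ℕ} {h : ℤ[X]}
    (hf : PowerSeries.mk f * (1 - PowerSeries.X) ^ (d + 1) = PowerSeries.mk fun n => h.coeff n) :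
    (fwdDiff 1)^[d] f =ᶠ[Filter.atTop] fun _ => h.eval 1 := by
  filter_upwards [Filter.eventually_ge_atTop h.natDegree] with n hn
  rw [pow_succ, ← mul_assoc] at hf
  rw [← coeff_mk_mul_one_sub_X_pow, coeff_eq_sum_of_mul_one_sub_X hf,
    Polynomial.eval_eq_sum_range' (n := n + d + 1) (by omega)]
  simp

end Degree

section DimensionZero

variable {K L : Type*} [Field K] [Field L] [Algebra K L] {V : Submodule K L}

lemma IsBirationalSystem.hilbertFn_eq_one_of_trdeg_eq_zero (hV : IsBirationalSystem V)
    (h : Algebra.trdeg K L = 0) (n : ℕ) : hilbertFn V n = 1 := by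
  have : Algebra.IsAlgebraic K L := trdeg_eq_zero_iff.1 h
  have one_eq_top : (1 : Submodule K L) = ⊤ := eq_top_iff.2 fun x _ => by
    have := hV.closed
    exact Submodule.mem_one.2
      (IsIntegrallyClosedIn.algebraMap_eq_of_integral (Algebra.IsIntegral.isIntegral x))
  have pow_eq_one : V ^ n = V ^ 0 := by
    rw [pow_zero]
    exact le_antisymm (one_eq_top ▸ le_top) (Submodule.one_le.2 (one_mem_pow hV.one_mem n))
  rw [← hilbertFn_zero V, hilbertFn, hilbertFn, pow_eq_one]

end DimensionZero

/-! ### The linear system of a homogeneous ideal -/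

section HomogeneousPolynomials

lemma finrank_homogeneousSubmodule (σ R : Type*) [Fintype σ] [CommRing R]
    [StrongRankCondition R] (n : ℕ) :
    Module.finrank R (homogeneousSubmodule σ R n) = (Fintype.card σ).multichoose n := by
  classical
  have degree_eq : {m : σ →₀ ℕ | m.degree = n} =
      (Finset.finsuppAntidiag Finset.univ n : Finset (σ →₀ ℕ)) := by
    ext m
    simp [Finset.mem_finsuppAntidiag, Finsupp.degree_eq_sum]
  rw [homogeneousSubmodule_eq_finsupp_supported, degree_eq,
    (AddMonoidAlgebra.supportedEquivFinsupp _).finrank_eq, Module.finrank_finsupp_self]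
  exact (Fintype.card_coe _).trans (Finset.card_finsuppAntidiag_nat_eq_multichoose n)

lemma aeval_const_mul_of_isHomogeneous {σ R A : Type*} [CommSemiring R] [CommSemiring A]
    [Algebra R A] (a : A) (x : σ → A) {n : ℕ} {p : MvPolynomial σ R} (hp : p.IsHomogeneous n) :
    aeval (fun i => a * x i) p = a ^ n * aeval x p := by
  rw [p.as_sum, map_sum, map_sum, Finset.mul_sum]
  refine Finset.sum_congr rfl fun m hm => ?_
  have hdegree : m.degree = n := by
    rw [Finsupp.degree_eq_weight_one]
    exact hp (mem_support_iff.1 hm)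
  simp only [aeval_monomial, mul_pow, Finsupp.prod_mul]
  rw [← hdegree, mul_left_comm]
  congr 2
  exact Finset.prod_pow_eq_pow_sum _ _ _

lemma finrank_map_eq_of_forall_eq_zero_iff {K M N N' : Type*} [DivisionRing K] [AddCommGroup M]
    [Module K M] [AddCommGroup N] [Module K N] [AddCommGroup N'] [Module K N'] {f : M →ₗ[K] N}
    {g : M →ₗ[K] N'} {W : Submodule K M} (h : ∀ w ∈ W, f w = 0 ↔ g w = 0) :
    Module.finrank K (W.map f) = Module.finrank K (W.map g) := by
  have hker : LinearMap.ker (f.domRestrict W) = LinearMap.ker (g.domRestrict W) := by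
    ext w
    exact h w w.2
  rw [← LinearMap.range_domRestrict, ← LinearMap.range_domRestrict]
  exact (((f.domRestrict W).quotKerEquivRange.symm.trans (Submodule.quotEquivOfEq _ _ hker)).trans
    (g.domRestrict W).quotKerEquivRange).finrank_eq

lemma finrank_inf_ker_add_finrank_map {K M N : Type*} [DivisionRing K] [AddCommGroup M]
    [Module K M] [AddCommGroup N] [Module K N] (f : M →ₗ[K] N) (W : Submodule K M)
    [Module.Finite K W] :
    Module.finrank K (W ⊓ LinearMap.ker f : Submodule K M) + Module.finrank K (W.map f) =
      Module.finrank K W := by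
  rw [← (f.domRestrict W).finrank_range_add_finrank_ker, LinearMap.range_domRestrict, add_comm,
    LinearMap.ker_domRestrict, ← Submodule.map_comap_subtype, Submodule.finrank_map_subtype_eq]

end HomogeneousPolynomials

section AffineCoordinates

variable {σ K L : Type*} [Field K] [Field L] [Algebra K L] {I : Ideal (MvPolynomial σ K)}
  {x : σ → L}

/-- The `xᵢ` are affine coordinates for the homogeneous ideal `I`: the homogeneous relations
between them are the forms in `I`. The typical example is `Xᵢ / X₀` in the function field of
`V₊(I)`. -/
def IsAffineCoordinates (I : Ideal (MvPolynomial σ K)) (x : σ → L) : Prop :=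
  ∀ (n : ℕ) (p : MvPolynomial σ K), p.IsHomogeneous n → (aeval x p = 0 ↔ p ∈ I)

/-- The linear system spanned by affine coordinates. -/
def coordinateSpan (K : Type*) {σ L : Type*} [Field K] [Field L] [Algebra K L] (x : σ → L) :
    Submodule K L :=
  Submodule.span K (Set.range x)

lemma coordinateSpan_pow (x : σ → L) (n : ℕ) :
    coordinateSpan K x ^ n = (homogeneousSubmodule σ K n).map (aeval x).toLinearMap := by
  rw [← homogeneousSubmodule_one_pow, Submodule.map_pow, homogeneousSubmodule_one_eq_span_X,
    Submodule.map_span, ← Set.range_comp, coordinateSpan]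
  congr 3
  ext i
  simp

/-- The homomorphism of graded algebras sending `Xᵢ` to `xᵢ` placed in degree one. -/
def gradedAeval (K : Type*) {σ L : Type*} [Field K] [Field L] [Algebra K L] (x : σ → L) :
    MvPolynomial σ K →ₐ[K] L[X] :=
  aeval fun i => Polynomial.X * Polynomial.C (x i)

lemma gradedAeval_of_isHomogeneous (x : σ → L) {n : ℕ} {p : MvPolynomial σ K}
    (hp : p.IsHomogeneous n) : gradedAeval K x p = Polynomial.monomial n (aeval x p) := by
  have hconst : aeval (fun i => Polynomial.C (x i)) p = Polynomial.C (aeval x p) :=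
    aeval_algebraMap_apply L[X] x p
  rw [gradedAeval, aeval_const_mul_of_isHomogeneous _ _ hp, hconst, mul_comm,
    Polynomial.C_mul_X_pow_eq_monomial]

lemma coeff_gradedAeval (x : σ → L) (n : ℕ) (p : MvPolynomial σ K) :
    (gradedAeval K x p).coeff n = aeval x (homogeneousComponent n p) := by
  conv_lhs => rw [← sum_homogeneousComponent p]
  rw [map_sum, Polynomial.finsetSum_coeff]
  simp only [gradedAeval_of_isHomogeneous x (homogeneousComponent_isHomogeneous _ p),
    Polynomial.coeff_monomial]
  rw [Finset.sum_ite_eq']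
  split_ifs with hn
  · rfl
  · rw [homogeneousComponent_eq_zero n p (by simpa using hn), map_zero]

lemma range_gradedAeval (x : σ → L) :
    (gradedAeval K x).range = coordinateRing (coordinateSpan K x) := by
  apply le_antisymm
  · rintro _ ⟨p, rfl⟩ n
    change (gradedAeval K x p).coeff n ∈ _
    rw [coeff_gradedAeval, coordinateSpan_pow]
    exact Submodule.mem_map_of_mem (homogeneousComponent_isHomogeneous n p)
  · refine coordinateRing_le fun v hv => ?_
    rw [← pow_one (coordinateSpan K x), coordinateSpan_pow] at hv
    obtain ⟨p, hp, rfl⟩ := hv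
    exact ⟨p, gradedAeval_of_isHomogeneous x hp⟩

lemma IsAffineCoordinates.ker_gradedAeval (hx : IsAffineCoordinates I x)
    (hI : ∀ p ∈ I, ∀ n, homogeneousComponent n p ∈ I) : RingHom.ker (gradedAeval K x) = I := by
  ext p
  rw [RingHom.mem_ker]
  constructor
  · intro hp
    rw [← sum_homogeneousComponent p]
    refine sum_mem fun n _ => ?_
    rw [← hx n _ (homogeneousComponent_isHomogeneous n p), ← coeff_gradedAeval, hp,
      Polynomial.coeff_zero]
  · intro hp
    ext n
    rw [coeff_gradedAeval, Polynomial.coeff_zero,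
      hx n _ (homogeneousComponent_isHomogeneous n p)]
    exact hI p hp n

/-- The ring `K[X] ⧸ I` is the homogeneous coordinate ring of the linear system spanned by affine
coordinates for `I`. -/
def IsAffineCoordinates.quotientEquiv (hx : IsAffineCoordinates I x)
    (hI : ∀ p ∈ I, ∀ n, homogeneousComponent n p ∈ I) :
    (MvPolynomial σ K ⧸ I) ≃ₐ[K] coordinateRing (coordinateSpan K x) :=
  ((Ideal.quotientEquivAlgOfEq K (hx.ker_gradedAeval hI).symm).trans
    (Ideal.quotientKerEquivRange (gradedAeval K x))).trans
    (Subalgebra.equivOfEq _ _ (range_gradedAeval x))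

lemma IsAffineCoordinates.map_quotientEquiv (hx : IsAffineCoordinates I x)
    (hI : ∀ p ∈ I, ∀ n, homogeneousComponent n p ∈ I) :
    ((Ideal.span (Set.range X)).map (Ideal.Quotient.mk I)).map (hx.quotientEquiv hI) =
      irrelevantIdeal (coordinateSpan K x) := by
  have coe_X (i : σ) : (hx.quotientEquiv hI (Ideal.Quotient.mk I (X i)) : L[X]) =
      Polynomial.monomial 1 (x i) := by
    change gradedAeval K x (X i) = _
    rw [gradedAeval_of_isHomogeneous x (isHomogeneous_X K i), aeval_X]
  apply le_antisymm
  · rw [Ideal.map_le_iff_le_comap, Ideal.map_le_iff_le_comap, Ideal.span_le]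
    rintro _ ⟨i, rfl⟩
    change (hx.quotientEquiv hI (Ideal.Quotient.mk I (X i)) : L[X]).coeff 0 = 0
    rw [coe_X, Polynomial.coeff_monomial_of_ne _ one_ne_zero.symm]
  · refine coordinateRing.irrelevantIdeal_le_of_le_linearForms (Submodule.span_le.2 ?_)
    rintro _ ⟨i, rfl⟩
    let v : coordinateSpan K x := ⟨x i, Submodule.subset_span ⟨i, rfl⟩⟩
    refine ⟨v, ?_, rfl⟩
    have hX : X i ∈ Ideal.span (Set.range (X : σ → MvPolynomial σ K)) :=
      Ideal.subset_span (Set.mem_range_self i)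
    have hv : coordinateRing.degreeOne (coordinateSpan K x) v =
        hx.quotientEquiv hI (Ideal.Quotient.mk I (X i)) := Subtype.ext (coe_X i).symm
    rw [SetLike.mem_coe, Submodule.mem_comap, Submodule.restrictScalars_mem, hv]
    exact Ideal.mem_map_of_mem _ (Ideal.mem_map_of_mem (Ideal.Quotient.mk I) hX)

lemma IsAffineCoordinates.hilbertFn_eq (hx : IsAffineCoordinates I x) (n : ℕ) :
    hilbertFn (coordinateSpan K x) n =
      Module.finrank K ((homogeneousSubmodule σ K n).map (Ideal.Quotient.mkₐ K I).toLinearMap) := by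
  rw [hilbertFn, coordinateSpan_pow]
  exact finrank_map_eq_of_forall_eq_zero_iff fun p hp =>
    (hx n p hp).trans Ideal.Quotient.eq_zero_iff_mem.symm

lemma IsAffineCoordinates.finrank_add_hilbertFn [Fintype σ] (hx : IsAffineCoordinates I x) (n : ℕ) :
    Module.finrank K (homogeneousSubmodule σ K n ⊓ I.restrictScalars K :
      Submodule K (MvPolynomial σ K)) + hilbertFn (coordinateSpan K x) n =
        (Fintype.card σ).multichoose n := by
  have : Module.Finite K (homogeneousSubmodule σ K n) :=
    Module.Finite.iff_fg.2 (homogeneousSubmodule_fg σ K n)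
  have hker : I.restrictScalars K = LinearMap.ker (Ideal.Quotient.mkₐ K I).toLinearMap := by
    ext p
    exact Ideal.Quotient.eq_zero_iff_mem.symm
  rw [hx.hilbertFn_eq, hker, finrank_inf_ker_add_finrank_map, finrank_homogeneousSubmodule]

end AffineCoordinates

lemma IsAffineCoordinates.hasDepth {K L : Type} [Field K] [Field L] [Algebra K L] {r t : ℕ}
    {I : Ideal (PS K r)} {x : Fin (r + 1) → L} (hx : IsAffineCoordinates I x)
    (hI : IsHomIdeal K r I) (ht : DepthEq K r I t) :
    HasDepth (irrelevantIdeal (coordinateSpan K x)) t ⊥ := by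
  obtain ⟨⟨rs, rfl, hmem, hreg⟩, hmax⟩ := ht
  let f : (PS K r ⧸ I) →+* coordinateRing (coordinateSpan K x) := hx.quotientEquiv hI
  have hdepth : HasDepth ((maxIdl K r I).map f) rs.length ((⊥ : Ideal (PS K r ⧸ I)).map f) :=
    (hasDepth_of_maximal_isRegSeq hreg hmem hmax).map (hx.quotientEquiv hI).surjective
      ((RingHom.injective_iff_ker_eq_bot f).1 (hx.quotientEquiv hI).injective).le
  have hmap : (maxIdl K r I).map f = irrelevantIdeal (coordinateSpan K x) :=
    hx.map_quotientEquiv hI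
  rwa [Ideal.map_bot, hmap] at hdepth

section RatioField

variable (K : Type*) {σ F : Type*} [Field K] [Field F] [Algebra K F] (y : σ → F) (o : σ)

/-- The field generated by the ratios `yᵢ / yₒ`: the function field of the projective variety with
homogeneous generic point `y`. -/
def ratioField : IntermediateField K F :=
  IntermediateField.adjoin K (Set.range fun i => y i / y o)

/-- The ratio `yᵢ / yₒ` as an element of the field generated by all these ratios. -/
def ratio (i : σ) : ratioField K y o :=
  ⟨y i / y o, IntermediateField.subset_adjoin K _ (Set.mem_range_self i)⟩

variable {K y o}

lemma coe_aeval_ratio (p : MvPolynomial σ K) :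
    ((aeval (ratio K y o) p : ratioField K y o) : F) = aeval (fun i => y i / y o) p :=
  (aeval_algebraMap_apply F (ratio K y o) p).symm

lemma isAffineCoordinates_ratio (ho : y o ≠ 0) :
    IsAffineCoordinates (RingHom.ker (aeval y : MvPolynomial σ K →ₐ[K] F)) (ratio K y o) := by
  intro n p hp
  have hscale : aeval y p = y o ^ n * aeval (fun i => y i / y o) p := by
    rw [← aeval_const_mul_of_isHomogeneous _ _ hp]
    simp only [mul_div_cancel₀ _ ho]
  rw [RingHom.mem_ker, hscale, mul_eq_zero, or_iff_right (pow_ne_zero n ho), ← coe_aeval_ratio,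
    ZeroMemClass.coe_eq_zero]

lemma isBirationalSystem_coordinateSpan_ratio [Finite σ] [IsIntegrallyClosedIn K F]
    (ho : y o ≠ 0) : IsBirationalSystem (coordinateSpan K (ratio K y o)) where
  closed := AlgHom.isIntegrallyClosedIn (ratioField K y o).val (ratioField K y o).val.injective
    inferInstance
  one_mem := Submodule.subset_span ⟨o, Subtype.ext (div_self ho)⟩
  fg := Submodule.fg_span (Set.finite_range _)
  adjoin_eq_top := by
    refine IntermediateField.lift_injective _ ?_
    rw [IntermediateField.lift_top, IntermediateField.lift_adjoin]
    refine le_antisymm (IntermediateField.adjoin_le_iff.2 ?_)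
      (IntermediateField.adjoin.mono _ _ _ ?_)
    · rintro _ ⟨v, -, rfl⟩
      exact v.2
    · rintro _ ⟨i, rfl⟩
      exact ⟨ratio K y o i, Submodule.subset_span (Set.mem_range_self i), rfl⟩

end RatioField

lemma IsAffineCoordinates.finrank_coordinateSpan {σ K L : Type*} [Fintype σ] [Field K] [Field L]
    [Algebra K L] {I : Ideal (MvPolynomial σ K)} {x : σ → L} (hx : IsAffineCoordinates I x)
    (hnd : ∀ p ∈ I, p.IsHomogeneous 1 → p = 0) :
    Module.finrank K (coordinateSpan K x) = Fintype.card σ := by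
  have hbot : homogeneousSubmodule σ K 1 ⊓ I.restrictScalars K = ⊥ :=
    (Submodule.eq_bot_iff _).2 fun p hp => hnd p hp.2 hp.1
  have hsum := hx.finrank_add_hilbertFn 1
  rwa [hbot, finrank_bot, zero_add, hilbertFn_one, Nat.multichoose_one_right] at hsum

lemma IsProjectiveModel.degree_eq_one {K L : Type*} [Field K] [Field L] [Algebra K L]
    {V : Submodule K L} {c e : ℕ} (hV : IsProjectiveModel V 0 c e)
    (h : Algebra.trdeg K L = 0) : e = 1 := by
  obtain ⟨n, hn⟩ := hV.degree.exists
  simp only [Function.iterate_zero, id_eq,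
    hV.isBirationalSystem.hilbertFn_eq_one_of_trdeg_eq_zero h] at hn
  exact_mod_cast hn.symm

lemma choose_add_add_two_two (d c : ℕ) :
    (d + c + 2).choose 2 = (d + 2).choose 2 + c * (d + 1) + (c + 1).choose 2 := by
  induction c with
  | zero => simp
  | succ c ih =>
    rw [← add_assoc, add_right_comm, Nat.choose_succ_left _ 2 two_pos, Nat.choose_one_right, ih,
      Nat.choose_succ_left (c + 1) 2 two_pos, Nat.choose_one_right]
    ring

section GenericPoint

variable {σ K : Type*} [Field K] (I : Ideal (MvPolynomial σ K))

/-- The homogeneous coordinates of the generic point of the projective variety with homogeneous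
prime ideal `I`. -/
def genericPoint (i : σ) : FractionRing (MvPolynomial σ K ⧸ I) :=
  algebraMap _ _ (Ideal.Quotient.mk I (X i))

lemma ker_aeval_genericPoint :
    RingHom.ker (aeval (genericPoint I) : MvPolynomial σ K →ₐ[K] _) = I := by
  have haeval : aeval (genericPoint I) =
      (IsScalarTower.toAlgHom K (MvPolynomial σ K ⧸ I)
        (FractionRing (MvPolynomial σ K ⧸ I))).comp (Ideal.Quotient.mkₐ K I) :=
    algHom_ext fun i => aeval_X _ i
  ext p
  rw [RingHom.mem_ker, haeval, ← Ideal.Quotient.eq_zero_iff_mem]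
  exact map_eq_zero_iff _ (IsFractionRing.injective (MvPolynomial σ K ⧸ I) _)

lemma genericPoint_ne_zero {i : σ} (h : X i ∉ I) : genericPoint I i ≠ 0 := fun h0 =>
  h (Ideal.Quotient.eq_zero_iff_mem.1
    ((map_eq_zero_iff _ (IsFractionRing.injective (MvPolynomial σ K ⧸ I) _)).1 h0))

lemma isAffineCoordinates_ratio_genericPoint [I.IsPrime] {o : σ} (ho : X o ∉ I) :
    IsAffineCoordinates I (ratio K (genericPoint I) o) := by
  have := isAffineCoordinates_ratio (K := K) (genericPoint_ne_zero I ho)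
  rwa [ker_aeval_genericPoint] at this

end GenericPoint

section ProjectiveVariety

variable {K : Type} [Field K] {r d c e : ℕ} {I : Ideal (PS K r)}

lemma IsAffineCoordinates.isProjectiveModel [PerfectField K] {L : Type} [Field L] [Algebra K L]
    {x : Fin (r + 1) → L} (hx : IsAffineCoordinates I x)
    (hbir : IsBirationalSystem (coordinateSpan K x)) (htr : Algebra.trdeg K L = d)
    (hnd : Nondeg K r I) (hcodim : d + c = r) (hdeg : DegreeEq K r I d e) :
    IsProjectiveModel (coordinateSpan K x) d c e where
  isBirationalSystem := hbir
  le_trdeg := htr.ge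
  finrank_kaehler_le :=
    have := hbir.essFiniteType
    finrank_kaehlerDifferential_le htr
  finrank_eq := by
    rw [hx.finrank_coordinateSpan hnd, Fintype.card_fin]
    omega
  degree := by
    obtain ⟨h, hseries, heval⟩ := hdeg
    simp only [hx.hilbertFn_eq, ← heval]
    exact fwdDiff_iter_eventuallyEq_of_mul_one_sub_X_pow hseries

lemma IsAffineCoordinates.finrank_quadrics [I.IsPrime] [PerfectField K] [Infinite K] {L : Type}
    [Field L] [Algebra K L] {x : Fin (r + 1) → L} (hx : IsAffineCoordinates I x)
    (hbir : IsBirationalSystem (coordinateSpan K x)) (hhom : IsHomIdeal K r I)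
    (hnd : Nondeg K r I) (hdim : DimEq K r I d) (hcodim : d + c = r)
    (hdeg : DegreeEq K r I d (c + 2)) {t q : ℕ} (hdepth : DepthEq K r I t) (hq : t + q = d + 1) :
    Module.finrank K (homogeneousSubmodule (Fin (r + 1)) K 2 ⊓ I.restrictScalars K :
      Submodule K (PS K r)) + q + 1 = (c + 1).choose 2 := by
  have htr : Algebra.trdeg K L = d :=
    hbir.trdeg_eq_of_ringKrullDim_eq (A := PS K r ⧸ I) hdim (hx.quotientEquiv hhom)
  have hV := hx.isProjectiveModel hbir htr hnd hcodim hdeg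
  obtain ⟨d, rfl⟩ : ∃ d', d = d' + 1 := Nat.exists_eq_add_one_of_ne_zero fun hd => by
    subst hd
    have := hV.degree_eq_one htr
    omega
  have hquadrics := hx.finrank_add_hilbertFn 2
  rw [hV.hilbertFn_two_of_hasDepth d (hx.hasDepth hhom hdepth) (by omega), Nat.multichoose_eq,
    Fintype.card_fin] at hquadrics
  have hcount : (r + 1 + 2 - 1).choose 2 = (d + 3).choose 2 + c * (d + 2) + (c + 1).choose 2 :=
    hcodim ▸ choose_add_add_two_two (d + 1) c
  linarith

end ProjectiveVariety

lemma isIntegrallyClosedIn_of_isAlgClosed (K A : Type*) [Field K] [IsAlgClosed K] [CommRing A]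
    [IsDomain A] [Algebra K A] : IsIntegrallyClosedIn K A :=
  isIntegrallyClosedIn_iff.2 ⟨(algebraMap K A).injective, fun h =>
    minpoly.mem_range_of_degree_eq_one K _
      (IsAlgClosed.degree_eq_one_of_irreducible K (minpoly.irreducible h))⟩

end AMD

theorem quadrics_in_ideal_of_almost_minimal_degree_general
    (K : Type) [Field K] [PerfectField K] [Infinite K] (r : ℕ)
    (I : Ideal (PS K r)) [I.IsPrime]
    [IsIntegrallyClosedIn K (FractionRing (PS K r ⧸ I))]
    (hhom : AMD.IsHomIdeal K r I) (hnd : AMD.Nondeg K r I)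
    (d c q t : ℕ) (hdim : AMD.DimEq K r I d) (hcodim : d + c = r)
    (hdeg : AMD.DegreeEq K r I d (c + 2))
    (hdepth : AMD.DepthEq K r I t) (hq : t + q = d + 1) :
    Module.finrank K
        ↥((homogeneousSubmodule (Fin (r + 1)) K 2) ⊓ Submodule.restrictScalars K I)
      + q + 1 = Nat.choose (c + 1) 2 :=
  have hX : X 0 ∉ I := fun h => X_ne_zero 0 (hnd _ h (isHomogeneous_X K 0))
  (AMD.isAffineCoordinates_ratio_genericPoint I hX).finrank_quadrics
    (AMD.isBirationalSystem_coordinateSpan_ratio (AMD.genericPoint_ne_zero I hX))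
    hhom hnd hdim hcodim hdeg hdepth hq

/-- **Lemma 3.4 (second part).**  For a variety `X ⊆ ℙ^r_K` of almost minimal degree
with `c = codim X` and `q = codepth A_X`, the space of quadrics in the defining ideal
has dimension `dim_K (I_X)₂ = C(c+1, 2) - q - 1`. -/
theorem quadrics_in_ideal_of_almost_minimal_degree
    (K : Type) [Field K] [IsAlgClosed K] (r : ℕ)
    (I : Ideal (PS K r)) (hprime : I.IsPrime)
    (hhom : AMD.IsHomIdeal K r I) (hnd : AMD.Nondeg K r I)
    (d c q t : ℕ) (hdim : AMD.DimEq K r I d) (hcodim : d + c = r)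
    (hdeg : AMD.DegreeEq K r I d (c + 2))
    (hdepth : AMD.DepthEq K r I t) (hq : t + q = d + 1) :
    Module.finrank K
        ↥((homogeneousSubmodule (Fin (r + 1)) K 2) ⊓ Submodule.restrictScalars K I)
      + q + 1 = Nat.choose (c + 1) 2 :=
  have := AMD.isIntegrallyClosedIn_of_isAlgClosed K (FractionRing (PS K r ⧸ I))
  quadrics_in_ideal_of_almost_minimal_degree_general K r I hhom hnd d c q t hdim hcodim hdeg
    hdepth hq
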